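/- arXiv:math/0610942 — 2 statements merged into one kernel-verified Lean document; each statement's English description precedes it below -/
import Mathlib

section
/- Let d ≥ 4 be an integer, let ε > 0, and let C > 0. Then there exist exponents 1 ≤ p ≤ q ≤ r < ∞ with r/p > 1 + √2 − ε and q/p > 1 + (√2)/2 − ε, and a constant A > 0, such that for every nonnegative measurable function f on ℝ^d one has ‖T[f]‖_{L^q(L^r),K} ≤ A ‖f‖_{L^p(ℝ^d)}. -/
open MeasureTheory ENNReal

noncomputable section

/-- `ℝ^n` with the Euclidean structure. We model `ℝ^d` as `Euc (d-1) × ℝ`. -/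
abbrev Euc (n : ℕ) := EuclideanSpace ℝ (Fin n)

/-- The local x-ray transform: `T[f](ξ,x) = ∫_0^1 f (x + t(ξ + e_d)) dt`. -/
def xrayT {n : ℕ} (f : Euc n × ℝ → ℝ≥0∞) (ξ x : Euc n) : ℝ≥0∞ :=
  ∫⁻ t in Set.Ioc (0:ℝ) 1, f (x + t • ξ, t)

/-- The Kakeya-order mixed norm `‖T[f]‖_{L^q(L^r),K}`. -/
def kakeyaMixedNorm {n : ℕ} (q r C : ℝ) (f : Euc n × ℝ → ℝ≥0∞) : ℝ≥0∞ :=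
  (∫⁻ ξ in Metric.ball (0 : Euc n) C, (∫⁻ x, xrayT f ξ x ^ r) ^ (q / r)) ^ (1 / q)

/-- `‖f‖_{L^p}` for a nonnegative (extended-real-valued) function. -/
def lpNorm {α : Type*} [MeasureSpace α] (p : ℝ) (f : α → ℝ≥0∞) : ℝ≥0∞ :=
  (∫⁻ z, f z ^ p) ^ (1 / p)

lemma lint_aff {n : ℕ} (a : ℝ) (ha : a ≠ 0) (b : Euc n) (g : Euc n → ℝ≥0∞) (hg : Measurable g) :
    ∫⁻ x, g (b + a • x) = ENNReal.ofReal (|a|⁻¹ ^ n) * ∫⁻ x, g x := by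
  have h1 : ∫⁻ x, g (b + a • x) = ∫⁻ y, g (b + y) ∂(Measure.map (fun x : Euc n => a • x) volume) := by
    rw [lintegral_map (by fun_prop) (by fun_prop)]
  have h2 := Measure.map_addHaar_smul (volume : Measure (Euc n)) ha
  have h3 : Measure.map (fun x : Euc n => a • x) volume = Measure.map (a • ·) (volume : Measure (Euc n)) := rfl
  rw [h1, h3, h2, lintegral_smul_measure, lintegral_add_left_eq_self, smul_eq_mul]
  simp [abs_inv, abs_pow]

/-- one-dimensional image lemma -/
lemma vol_image_ge (A : Set ℝ) (ψ : ℝ → ℝ) (k : ℝ) (hk : 0 < k)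
    (h : ∀ u ∈ A, ∀ v ∈ A, k * |u - v| ≤ |ψ u - ψ v|) :
    ENNReal.ofReal k * volume A ≤ volume (ψ '' A) := by
  have hinj : Set.InjOn ψ A := by
    intro u hu v hv huv
    have := h u hu v hv
    rw [huv, sub_self, abs_zero] at this
    have h0 : |u - v| ≤ 0 := by
      by_contra hc; push Not at hc; nlinarith
    have := abs_nonpos_iff.mp h0
    linarith
  have hL : LipschitzOnWith (Real.toNNReal k⁻¹) (Function.invFunOn ψ A) (ψ '' A) := by
    apply LipschitzOnWith.of_dist_le_mul
    rintro _ ⟨u, hu, rfl⟩ _ ⟨v, hv, rfl⟩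
    rw [hinj.leftInvOn_invFunOn hu, hinj.leftInvOn_invFunOn hv, Real.dist_eq, Real.dist_eq,
      Real.coe_toNNReal _ (by positivity)]
    have := h u hu v hv
    rw [inv_mul_eq_div, le_div_iff₀ hk]; linarith
  have h2 := hL.hausdorffMeasure_image_le (d := 1) (by norm_num)
  rw [hausdorffMeasure_real, hinj.invFunOn_image (le_refl A)] at h2
  simp only [ENNReal.rpow_one] at h2
  calc ENNReal.ofReal k * volume A ≤ ENNReal.ofReal k * ((Real.toNNReal k⁻¹ : ℝ≥0∞) * volume (ψ '' A)) := by gcongr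
    _ = volume (ψ '' A) := by
      rw [← mul_assoc]
      change ENNReal.ofReal k * ENNReal.ofReal k⁻¹ * _ = _
      rw [← ENNReal.ofReal_mul hk.le, mul_inv_cancel₀ hk.ne']; simp


lemma vol_rem (T : Set ℝ) (a c s : ℝ) (hc : 0 < c) (h : ENNReal.ofReal a ≤ volume T) :
    ENNReal.ofReal (a - 2 * c) ≤ volume {q | q ∈ T ∧ c ≤ |q - s|} := by
  have h1 : T ⊆ {q | q ∈ T ∧ c ≤ |q - s|} ∪ Set.Ioo (s - c) (s + c) := by
    intro q hq
    by_cases h : c ≤ |q - s|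
    · exact Or.inl ⟨hq, h⟩
    · right
      push Not at h
      rw [abs_lt] at h
      constructor <;> linarith [h.1, h.2]
  have h2 := (measure_mono (μ := volume) h1).trans (measure_union_le _ _)
  rw [Real.volume_Ioo] at h2
  rw [ENNReal.ofReal_sub _ (by positivity)]
  rw [tsub_le_iff_right]
  refine h.trans (h2.trans ?_)
  gcongr
  linarith

def uu (s y σ q : ℝ) : ℝ := s + (y - s) / (1 - σ / (q - s))

def ov (c s y σ : ℝ) (T1 T2 : Set ℝ) : ℝ≥0∞ :=
  volume {q | q ∈ T1 ∧ c ≤ |q - s| ∧ uu s y σ q ∈ T2 ∧ c ≤ |uu s y σ q - s|}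

lemma measurable_uu : Measurable (fun p : (ℝ × ℝ × ℝ) × ℝ => uu p.1.1 p.1.2.1 p.1.2.2 p.2) := by
  unfold uu; fun_prop

lemma ov_inner (L c s y q : ℝ) (hL : 1 ≤ L) (hc : c = 1 / (8 * L)) (T2 : Set ℝ)
    (h2s : T2 ⊆ Set.Ioc 0 1) (h2 : ENNReal.ofReal (1 / L) ≤ volume T2)
    (hs : s ∈ Set.Ioc (0:ℝ) 1) (hy : y ∈ Set.Ioc (0:ℝ) 1) (hq : q ∈ Set.Ioc (0:ℝ) 1)
    (hys : c ≤ |y - s|) (hqs : c ≤ |q - s|) :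
    ENNReal.ofReal (c ^ 2 * (1 / (2 * L))) ≤
      volume {σ | c ^ 2 ≤ |σ| ∧ |σ| ≤ 1 / c ∧ uu s y σ q ∈ T2 ∧ c ≤ |uu s y σ q - s|} := by
  have hL0 : 0 < L := by linarith
  have hc0 : 0 < c := by rw [hc]; positivity
  have habs : ∀ a b : ℝ, a ∈ Set.Ioc (0:ℝ) 1 → b ∈ Set.Ioc (0:ℝ) 1 → |a - b| ≤ 1 := by
    intro a b ha hb
    rw [abs_le]; constructor <;> linarith [ha.1, ha.2, hb.1, hb.2]
  set A : Set ℝ := {u | u ∈ {u | u ∈ T2 ∧ c ≤ |u - s|} ∧ c ≤ |u - y|} with hA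
  have hvA : ENNReal.ofReal (1 / L - 2 * c - 2 * c) ≤ volume A :=
    vol_rem _ _ c y hc0 (vol_rem T2 _ c s hc0 h2)
  have e1 : 1 / L - 2 * c - 2 * c = 1 / (2 * L) := by rw [hc]; field_simp; norm_num
  rw [e1] at hvA
  set ψ : ℝ → ℝ := fun u => (q - s) * ((u - y) / (u - s)) with hψ
  have hqs0 : q - s ≠ 0 := by intro h; rw [h, abs_zero] at hqs; linarith
  have hys0 : y - s ≠ 0 := by intro h; rw [h, abs_zero] at hys; linarith
  have key := vol_image_ge A ψ (c ^ 2) (by positivity) (by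
    rintro u ⟨⟨hu, hus⟩, huy⟩ v ⟨⟨hv, hvs⟩, hvy⟩
    have hus0 : u - s ≠ 0 := by intro h; rw [h, abs_zero] at hus; linarith
    have hvs0 : v - s ≠ 0 := by intro h; rw [h, abs_zero] at hvs; linarith
    have e : ψ u - ψ v = (q - s) * (y - s) * (u - v) / ((u - s) * (v - s)) := by
      simp only [hψ]; field_simp; ring
    rw [e, abs_div, abs_mul, abs_mul, abs_mul]
    have h1 := habs u s (h2s hu) hs
    have h2 := habs v s (h2s hv) hs
    rw [le_div_iff₀ (by positivity)]
    have h3 : c * c ≤ |q - s| * |y - s| := by gcongr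
    have h4 : |u - s| * |v - s| ≤ 1 := by
      calc _ ≤ (1:ℝ) * 1 := by gcongr
        _ = 1 := by norm_num
    calc c ^ 2 * |u - v| * (|u - s| * |v - s|) ≤ c ^ 2 * |u - v| * 1 := by gcongr
      _ = c * c * |u - v| := by ring
      _ ≤ _ := by gcongr)
  calc ENNReal.ofReal (c ^ 2 * (1 / (2 * L))) = ENNReal.ofReal (c^2) * ENNReal.ofReal (1 / (2 * L)) :=
        ENNReal.ofReal_mul (by positivity)
    _ ≤ ENNReal.ofReal (c^2) * volume A := by gcongr
    _ ≤ _ := key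
    _ ≤ _ := by
      apply measure_mono
      rintro _ ⟨u, ⟨⟨hu, hus⟩, huy⟩, rfl⟩
      have hus0 : u - s ≠ 0 := by intro h; rw [h, abs_zero] at hus; linarith
      have h1 := habs u s (h2s hu) hs
      have h2 := habs u y (h2s hu) hy
      have h3 := habs q s hq hs
      have eu : uu s y (ψ u) q = u := by
        simp only [uu, hψ]
        rw [mul_div_cancel_left₀ _ hqs0]
        have : 1 - (u - y) / (u - s) = (y - s) / (u - s) := by field_simp; ring
        rw [this, div_div_eq_mul_div, mul_div_cancel_left₀ _ hys0]; ring
      have hpos : 0 < |u - s| := by positivity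
      refine ⟨?_, ?_, ?_, ?_⟩
      · simp only [hψ]; rw [abs_mul, abs_div]
        have : |u - y| ≤ |u - y| / |u - s| := by
          rw [le_div_iff₀ hpos]; nlinarith [abs_nonneg (u - y)]
        calc c ^ 2 = c * c := by ring
          _ ≤ |q - s| * (|u - y| / |u - s|) := by gcongr; linarith
      · simp only [hψ]; rw [abs_mul, abs_div]
        calc |q - s| * (|u - y| / |u - s|) ≤ 1 * (1 / c) := by gcongr
          _ = 1 / c := by ring
      · rw [eu]; exact hu
      · rw [eu]; exact hus

lemma measurable_ov (c s : ℝ) (T1 T2 : Set ℝ) (h1 : MeasurableSet T1) (h2 : MeasurableSet T2) :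
    MeasurableSet {p : (ℝ × ℝ) × ℝ | p.2 ∈ T1 ∧ c ≤ |p.2 - s| ∧ uu s p.1.1 p.1.2 p.2 ∈ T2 ∧
      c ≤ |uu s p.1.1 p.1.2 p.2 - s|} := by
  have hu : Measurable (fun p : (ℝ × ℝ) × ℝ => uu s p.1.1 p.1.2 p.2) := by unfold uu; fun_prop
  refine (measurable_snd h1).inter (MeasurableSet.inter ?_ ((hu h2).inter ?_))
  · exact measurableSet_le (f := fun _ => c) (g := fun p : (ℝ × ℝ) × ℝ => |p.2 - s|)
      measurable_const (by fun_prop)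
  · exact measurableSet_le (f := fun _ => c) (g := fun p : (ℝ × ℝ) × ℝ => |uu s p.1.1 p.1.2 p.2 - s|)
      measurable_const (by fun_prop)

lemma lemB (L c s : ℝ) (hL : 1 ≤ L) (hc : c = 1 / (8 * L)) (T1 T2 : Set ℝ)
    (m1 : MeasurableSet T1) (m2 : MeasurableSet T2)
    (h1s : T1 ⊆ Set.Ioc 0 1) (h1 : ENNReal.ofReal (1 / L) ≤ volume T1)
    (h2s : T2 ⊆ Set.Ioc 0 1) (h2 : ENNReal.ofReal (1 / L) ≤ volume T2)
    (hs : s ∈ Set.Ioc (0:ℝ) 1) :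
    ENNReal.ofReal (1 / (1024 * L ^ 5)) ≤ volume {p : ℝ × ℝ | (p.1 ∈ T2 ∧ c ≤ |p.1 - s|) ∧
      (c ^ 2 ≤ |p.2| ∧ |p.2| ≤ 1 / c) ∧ ENNReal.ofReal (1 / (16384 * L ^ 6)) ≤ ov c s p.1 p.2 T1 T2} := by
  have hL0 : 0 < L := by linarith
  have hc0 : 0 < c := by rw [hc]; positivity
  set Y : Set ℝ := {y | y ∈ T2 ∧ c ≤ |y - s|} with hY
  set Sg : Set ℝ := {σ | c ^ 2 ≤ |σ| ∧ |σ| ≤ 1 / c} with hSg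
  have mY : MeasurableSet Y := m2.inter (measurableSet_le (f := fun _ => c) (g := fun q : ℝ => |q - s|)
      measurable_const (by fun_prop))
  have mSg : MeasurableSet Sg := (measurableSet_le (f := fun _ => c ^ 2) (g := fun q : ℝ => |q|)
      measurable_const (by fun_prop)).inter
    (measurableSet_le (g := fun _ => 1 / c) (f := fun q : ℝ => |q|) (by fun_prop) measurable_const)
  set Q : Set ((ℝ × ℝ) × ℝ) := {p : (ℝ × ℝ) × ℝ | p.2 ∈ T1 ∧ c ≤ |p.2 - s| ∧ uu s p.1.1 p.1.2 p.2 ∈ T2 ∧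
      c ≤ |uu s p.1.1 p.1.2 p.2 - s|} with hQ
  have mQ : MeasurableSet Q := measurable_ov c s T1 T2 m1 m2
  have mov : Measurable (fun p : ℝ × ℝ => ov c s p.1 p.2 T1 T2) :=
    measurable_measure_prodMk_left mQ
  have hYv : ENNReal.ofReal (1 / (2 * L)) ≤ volume Y := by
    refine le_trans (ENNReal.ofReal_le_ofReal ?_) (vol_rem T2 _ c s hc0 h2)
    rw [hc]; field_simp; norm_num
  have hXv : ENNReal.ofReal (1 / (2 * L)) ≤ volume {q | q ∈ T1 ∧ c ≤ |q - s|} := by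
    refine le_trans (ENNReal.ofReal_le_ofReal ?_) (vol_rem T1 _ c s hc0 h1)
    rw [hc]; field_simp; norm_num
  have mX : MeasurableSet {q | q ∈ T1 ∧ c ≤ |q - s|} :=
    m1.inter (measurableSet_le (f := fun _ => c) (g := fun q : ℝ => |q - s|)
      measurable_const (by fun_prop))
  -- lower bound
  have hlow : ENNReal.ofReal (1 / (512 * L ^ 5)) ≤ ∫⁻ p in Y ×ˢ Sg, ov c s p.1 p.2 T1 T2 := by
    have e0 : ∫⁻ p in Y ×ˢ Sg, ov c s p.1 p.2 T1 T2 = ∫⁻ y in Y, ∫⁻ σ in Sg, ov c s y σ T1 T2 := by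
      rw [Measure.volume_eq_prod, ← Measure.prod_restrict, lintegral_prod _ mov.aemeasurable]
    rw [e0]
    calc ENNReal.ofReal (1 / (512 * L ^ 5))
        = ENNReal.ofReal (c ^ 2 * (1 / (2 * L))) * ENNReal.ofReal (1 / (2 * L)) * ENNReal.ofReal (1 / (2 * L)) := by
          rw [← ENNReal.ofReal_mul (by positivity), ← ENNReal.ofReal_mul (by positivity)]
          congr 1; rw [hc]; field_simp; norm_num
      _ ≤ ∫⁻ y in Y, ENNReal.ofReal (c ^ 2 * (1 / (2 * L))) * ENNReal.ofReal (1 / (2 * L)) := by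
          rw [setLIntegral_const]; gcongr
      _ ≤ _ := by
          apply setLIntegral_mono' mY
          intro y hy
          have e1 : ∫⁻ σ in Sg, ov c s y σ T1 T2 =
              ∫⁻ q, volume {σ | σ ∈ Sg ∧ ((y, σ), q) ∈ Q} := by
            have mR : MeasurableSet {p : ℝ × ℝ | p.1 ∈ Sg ∧ ((y, p.1), p.2) ∈ Q} :=
              (measurable_fst mSg).inter
                ((by fun_prop : Measurable (fun p : ℝ × ℝ => ((y, p.1), p.2))) mQ)
            have := Measure.prod_apply (μ := (volume : Measure ℝ)) (ν := (volume : Measure ℝ)) mR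
            rw [Measure.prod_apply_symm mR] at this
            rw [← lintegral_indicator mSg]
            refine Eq.trans ?_ this.symm
            apply lintegral_congr
            intro σ
            by_cases hσ : σ ∈ Sg
            · rw [Set.indicator_of_mem hσ]
              simp only [ov, Set.preimage, Set.mem_ofPred_eq, hσ, true_and, hQ]
            · rw [Set.indicator_of_notMem hσ]
              simp [hσ]
          rw [e1]
          calc _ ≤ ENNReal.ofReal (c ^ 2 * (1 / (2 * L))) * volume {q | q ∈ T1 ∧ c ≤ |q - s|} := by gcongr
            _ = ∫⁻ q in {q | q ∈ T1 ∧ c ≤ |q - s|}, ENNReal.ofReal (c ^ 2 * (1 / (2 * L))) := by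
              rw [setLIntegral_const]
            _ ≤ ∫⁻ q in {q | q ∈ T1 ∧ c ≤ |q - s|}, volume {σ | σ ∈ Sg ∧ ((y, σ), q) ∈ Q} := by
              apply setLIntegral_mono' mX
              rintro q ⟨hq1, hq2⟩
              refine (ov_inner L c s y q hL hc T2 h2s h2 hs (h2s hy.1) (h1s hq1) hy.2 hq2).trans ?_
              apply measure_mono
              rintro σ ⟨a, b, d, e⟩
              exact ⟨⟨a, b⟩, hq1, hq2, d, e⟩
            _ ≤ _ := setLIntegral_le_lintegral _ _
  have hDv : volume (Y ×ˢ Sg) ≤ ENNReal.ofReal (16 * L) := by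
    rw [Measure.volume_eq_prod, Measure.prod_prod]
    have a1 : volume Y ≤ 1 := by
      calc volume Y ≤ volume (Set.Ioc (0:ℝ) 1) := measure_mono (fun y hy => h2s hy.1)
        _ = 1 := by simp
    have a2 : volume Sg ≤ ENNReal.ofReal (16 * L) := by
      calc volume Sg ≤ volume (Set.Icc (-(1/c)) (1/c)) := measure_mono (fun y hy => abs_le.mp hy.2)
        _ = ENNReal.ofReal (16 * L) := by
          rw [Real.volume_Icc]; congr 1; rw [hc]; field_simp; norm_num
    calc _ ≤ 1 * ENNReal.ofReal (16 * L) := by gcongr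
      _ = _ := one_mul _
  set l' := ENNReal.ofReal (1 / (16384 * L ^ 6)) with hl'
  set G : Set (ℝ × ℝ) := {p : ℝ × ℝ | (p.1 ∈ T2 ∧ c ≤ |p.1 - s|) ∧
      (c ^ 2 ≤ |p.2| ∧ |p.2| ≤ 1 / c) ∧ l' ≤ ov c s p.1 p.2 T1 T2} with hG
  have mG : MeasurableSet G := by
    have : G = (Y ×ˢ Sg) ∩ {p | l' ≤ ov c s p.1 p.2 T1 T2} := by
      ext p; simp only [hG, hY, hSg, Set.mem_inter_iff, Set.mem_prod, Set.mem_ofPred_eq]; tauto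
    rw [this]
    exact (mY.prod mSg).inter (measurableSet_le measurable_const mov)
  have hup : ∫⁻ p in Y ×ˢ Sg, ov c s p.1 p.2 T1 T2 ≤ volume G + l' * volume (Y ×ˢ Sg) := by
    calc _ ≤ ∫⁻ p in Y ×ˢ Sg, (G.indicator 1 p + l') := by
          apply setLIntegral_mono' (mY.prod mSg)
          intro p hp
          by_cases hpG : p ∈ G
          · rw [Set.indicator_of_mem hpG]
            calc ov c s p.1 p.2 T1 T2 ≤ volume (Set.Ioc (0:ℝ) 1) := measure_mono (fun q hq => h1s hq.1)
              _ = 1 := by simp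
              _ ≤ _ := le_self_add
          · rw [Set.indicator_of_notMem hpG, zero_add]
            by_contra hcon
            push Not at hcon
            exact hpG ⟨hp.1, hp.2, hcon.le⟩
      _ = (∫⁻ p in Y ×ˢ Sg, G.indicator 1 p) + l' * volume (Y ×ˢ Sg) := by
          rw [lintegral_add_right _ measurable_const, setLIntegral_const]
      _ ≤ _ := by
          gcongr
          calc _ ≤ ∫⁻ p, G.indicator 1 p := setLIntegral_le_lintegral _ _
            _ = volume G := lintegral_indicator_one mG
  have hfin : ENNReal.ofReal (1 / (1024 * L ^ 5)) + ENNReal.ofReal (1 / (1024 * L ^ 5)) ≤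
      volume G + ENNReal.ofReal (1 / (1024 * L ^ 5)) := by
    calc _ = ENNReal.ofReal (1 / (512 * L ^ 5)) := by
          rw [← ENNReal.ofReal_add (by positivity) (by positivity)]; congr 1; field_simp; norm_num
      _ ≤ _ := hlow
      _ ≤ _ := hup
      _ ≤ volume G + l' * ENNReal.ofReal (16 * L) := by gcongr
      _ = _ := by
          rw [hl', ← ENNReal.ofReal_mul (by positivity)]; congr 2; field_simp; norm_num
  exact (ENNReal.add_le_add_iff_right ENNReal.ofReal_ne_top).mp hfin


lemma vol_aff {n : ℕ} (a : ℝ) (ha : a ≠ 0) (b : Euc n) (A : Set (Euc n)) (hA : MeasurableSet A) :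
    volume {x | b + a • x ∈ A} = ENNReal.ofReal (|a|⁻¹ ^ n) * volume A := by
  have h := lint_aff a ha b (A.indicator 1) (measurable_one.indicator hA)
  rw [lintegral_indicator_one hA] at h
  rw [← h, ← lintegral_indicator_one]
  · rfl
  · exact (by fun_prop : Measurable (fun x : Euc n => b + a • x)) hA

lemma vol_shear {n : ℕ} (s : ℝ) (A : Set (Euc n × Euc n)) (hA : MeasurableSet A) :
    volume {g : Euc n × Euc n | (g.1 + s • g.2, g.2) ∈ A} = volume A := by
  have hm : MeasurableSet {g : Euc n × Euc n | (g.1 + s • g.2, g.2) ∈ A} :=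
    (by fun_prop : Measurable (fun g : Euc n × Euc n => (g.1 + s • g.2, g.2))) hA
  rw [Measure.volume_eq_prod, Measure.prod_apply_symm hm, Measure.prod_apply_symm hA]
  apply lintegral_congr
  intro ξ
  exact measure_preimage_add_right volume (s • ξ) {P | (P, ξ) ∈ A}

lemma vol_C1 {n : ℕ} (s σ a : ℝ) (ha : a ≠ 0) (Γ : Set (Euc n × Euc n × Euc n))
    (hΓ : MeasurableSet Γ) :
    volume Γ = ENNReal.ofReal (|a|⁻¹ ^ n) * ∫⁻ S : Euc n, volume {g : Euc n × Euc n |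
      (g.1 + s • g.2, g.2, a⁻¹ • (S - (g.1 + s • g.2) - σ • g.2)) ∈ Γ} := by
  have hG' : MeasurableSet {p : (Euc n × Euc n) × Euc n |
      (p.1.1, p.1.2, a⁻¹ • (p.2 - p.1.1 - σ • p.1.2)) ∈ Γ} :=
    (by fun_prop : Measurable (fun p : (Euc n × Euc n) × Euc n =>
      (p.1.1, p.1.2, a⁻¹ • (p.2 - p.1.1 - σ • p.1.2)))) hΓ
  have e1 : ∀ S : Euc n, volume {g : Euc n × Euc n |
      (g.1 + s • g.2, g.2, a⁻¹ • (S - (g.1 + s • g.2) - σ • g.2)) ∈ Γ} =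
      volume {g : Euc n × Euc n | (g.1, g.2, a⁻¹ • (S - g.1 - σ • g.2)) ∈ Γ} := by
    intro S
    have := vol_shear s {g : Euc n × Euc n | (g.1, g.2, a⁻¹ • (S - g.1 - σ • g.2)) ∈ Γ}
      ((by fun_prop : Measurable (fun g : Euc n × Euc n =>
        (g.1, g.2, a⁻¹ • (S - g.1 - σ • g.2)))) hΓ)
    exact this
  simp only [e1]
  have e2 := Measure.prod_apply_symm (μ := (volume : Measure (Euc n × Euc n)))
    (ν := (volume : Measure (Euc n))) hG'
  have e3 := Measure.prod_apply (μ := (volume : Measure (Euc n × Euc n)))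
    (ν := (volume : Measure (Euc n))) hG'
  have e4 : ∫⁻ S : Euc n, volume {g : Euc n × Euc n | (g.1, g.2, a⁻¹ • (S - g.1 - σ • g.2)) ∈ Γ}
      = ∫⁻ g : Euc n × Euc n, volume {S | (g.1, g.2, a⁻¹ • (S - g.1 - σ • g.2)) ∈ Γ} := by
    exact e2.symm.trans e3
  rw [e4]
  have hG2 : MeasurableSet {p : (Euc n × Euc n) × Euc n | (p.1.1, p.1.2, p.2) ∈ Γ} :=
    (by fun_prop : Measurable (fun p : (Euc n × Euc n) × Euc n => (p.1.1, p.1.2, p.2))) hΓ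
  have e5 : volume Γ = volume {p : (Euc n × Euc n) × Euc n | (p.1.1, p.1.2, p.2) ∈ Γ} := by
    have := (volume_preserving_prodAssoc (α₁ := Euc n) (β₁ := Euc n) (γ₁ := Euc n)).measure_preimage
      hΓ.nullMeasurableSet
    exact this.symm
  have hmeas : Measurable (fun g : Euc n × Euc n =>
      volume {S | (g.1, g.2, a⁻¹ • (S - g.1 - σ • g.2)) ∈ Γ}) :=
    measurable_measure_prodMk_left hG'
  rw [e5, Measure.volume_eq_prod (Euc n × Euc n) (Euc n), Measure.prod_apply hG2,
    ← lintegral_const_mul _ hmeas]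
  apply lintegral_congr
  intro g
  have := vol_aff a ha (g.1 + σ • g.2) {S | (g.1, g.2, a⁻¹ • (S - g.1 - σ • g.2)) ∈ Γ}
    ((by fun_prop : Measurable (fun S : Euc n => (g.1, g.2, a⁻¹ • (S - g.1 - σ • g.2)))) hΓ)
  rw [← this]
  congr 1
  ext x
  have e6 : a⁻¹ • (g.1 + σ • g.2 + a • x - g.1 - σ • g.2) = x := by
    rw [show g.1 + σ • g.2 + a • x - g.1 - σ • g.2 = a • x by abel, smul_smul, inv_mul_cancel₀ ha,
      one_smul]
  simp only [Set.mem_preimage, Set.mem_ofPred_eq, e6]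

def tset {n : ℕ} (E : Set (Euc n × ℝ)) (x ξ : Euc n) : Set ℝ :=
  {t | t ∈ Set.Ioc (0:ℝ) 1 ∧ (x + t • ξ, t) ∈ E}

lemma measurableSet_tset {n : ℕ} (E : Set (Euc n × ℝ)) (hE : MeasurableSet E) (x ξ : Euc n) :
    MeasurableSet (tset E x ξ) :=
  measurableSet_Ioc.inter ((by fun_prop : Measurable (fun t : ℝ => (x + t • ξ, t))) hE)

def KK (n : ℕ) (θ : ℝ) : Prop :=
  ∃ A : ℝ, 1 ≤ A ∧ ∃ N : ℕ, ∀ (L : ℝ) (_ : 1 ≤ L) (e m : ℝ≥0∞) (_ : e ≠ ⊤) (_ : m ≠ ⊤)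
    (E : Set (Euc n × ℝ)) (Ω : Set (Euc n × Euc n)), MeasurableSet E → MeasurableSet Ω →
    volume E ≤ e → (∀ ξ, volume {x | (x, ξ) ∈ Ω} ≤ m) →
    (∀ g ∈ Ω, ENNReal.ofReal (1 / L) ≤ volume (tset E g.1 g.2)) →
    volume Ω ^ (1 - θ) ≤ ENNReal.ofReal (A * L ^ N) * e * m ^ (1 - 2 * θ)

/-- the auxiliary set -/
def ES {n : ℕ} (E : Set (Euc n × ℝ)) (c s y σ : ℝ) (S : Euc n) : Set (Euc n × ℝ) :=
  {z | z.2 ∈ Set.Ioc (0:ℝ) 1 ∧ z ∈ E ∧ c ≤ |z.2 - s| ∧ uu s y σ z.2 ∈ Set.Ioc (0:ℝ) 1 ∧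
    c ≤ |uu s y σ z.2 - s| ∧
    ((1 - σ / (z.2 - s))⁻¹ • (S - (σ / (z.2 - s)) • z.1), uu s y σ z.2) ∈ E}

lemma measurable_ES {n : ℕ} (E : Set (Euc n × ℝ)) (hE : MeasurableSet E) (c s y σ : ℝ) :
    MeasurableSet {p : Euc n × (Euc n × ℝ) | p.2 ∈ ES E c s y σ p.1} := by
  have hu : Measurable (fun p : Euc n × (Euc n × ℝ) => uu s y σ p.2.2) := by unfold uu; fun_prop
  have h1 : Measurable (fun p : Euc n × (Euc n × ℝ) => p.2.2) := by fun_prop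
  refine (h1 measurableSet_Ioc).inter ((measurable_snd hE).inter (MeasurableSet.inter ?_
    ((hu measurableSet_Ioc).inter (MeasurableSet.inter ?_ ?_))))
  · exact measurableSet_le (f := fun _ => c) (g := fun p : Euc n × (Euc n × ℝ) => |p.2.2 - s|)
      measurable_const (by fun_prop)
  · exact measurableSet_le (f := fun _ => c) (g := fun p : Euc n × (Euc n × ℝ) => |uu s y σ p.2.2 - s|)
      measurable_const (by fun_prop)
  · have : Measurable (fun p : Euc n × (Euc n × ℝ) =>
      ((1 - σ / (p.2.2 - s))⁻¹ • (p.1 - (σ / (p.2.2 - s)) • p.2.1), uu s y σ p.2.2)) := by fun_prop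
    exact this hE

lemma lint_ES {n : ℕ} (E : Set (Euc n × ℝ)) (hE : MeasurableSet E) (L c s y σ : ℝ) (hL : 1 ≤ L)
    (hc : c = 1 / (8 * L))
    (hs : s ∈ Set.Ioc (0:ℝ) 1) (hy : y ∈ Set.Ioc (0:ℝ) 1) (ε1 : ℝ≥0∞)
    (hsl : ∀ t, volume {X | (X, t) ∈ E} ≤ ε1) :
    ∫⁻ S, volume (ES E c s y σ S) ≤ ENNReal.ofReal ((8 * L) ^ n) * ε1 ^ 2 := by
  have hL0 : 0 < L := by linarith
  have hc0 : 0 < c := by rw [hc]; positivity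
  have mES := measurable_ES E hE c s y σ
  have e1 : ∫⁻ S, volume (ES E c s y σ S) = ∫⁻ z : Euc n × ℝ, volume {S | z ∈ ES E c s y σ S} := by
    have e2 := Measure.prod_apply_symm (μ := (volume : Measure (Euc n)))
      (ν := (volume : Measure (Euc n × ℝ))) mES
    have e3 := Measure.prod_apply (μ := (volume : Measure (Euc n)))
      (ν := (volume : Measure (Euc n × ℝ))) mES
    exact e3.symm.trans e2
  rw [e1]
  set E0 : Set (Euc n × ℝ) := E ∩ {z | z.2 ∈ Set.Ioc (0:ℝ) 1} with hE0
  have mE0 : MeasurableSet E0 := hE.inter (measurable_snd measurableSet_Ioc)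
  have hb : ∀ z : Euc n × ℝ, volume {S | z ∈ ES E c s y σ S} ≤
      E0.indicator (fun _ => ENNReal.ofReal ((8 * L) ^ n) * ε1) z := by
    intro z
    by_cases hz : z ∈ E0 ∧ uu s y σ z.2 ∈ Set.Ioc (0:ℝ) 1 ∧ c ≤ |uu s y σ z.2 - s|
    · obtain ⟨hz0, hu, hus⟩ := hz
      rw [Set.indicator_of_mem hz0]
      set k := 1 - σ / (z.2 - s) with hk
      have hk0 : k ≠ 0 := by
        intro h
        have : uu s y σ z.2 = s := by simp only [uu, ← hk, h]; simp
        rw [this, sub_self, abs_zero] at hus; linarith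
      have huk : uu s y σ z.2 - s = (y - s) / k := by simp only [uu, ← hk]; ring
      have hkb : |k⁻¹|⁻¹ ≤ 8 * L := by
        rw [huk, abs_div, le_div_iff₀ (by positivity)] at hus
        have : |y - s| ≤ 1 := by
          rw [abs_le]; constructor <;> linarith [hy.1, hy.2, hs.1, hs.2]
        rw [abs_inv, inv_inv]
        rw [hc, div_mul_eq_mul_div, one_mul, div_le_iff₀ (by positivity)] at hus
        nlinarith
      calc volume {S | z ∈ ES E c s y σ S}
          ≤ volume {S | (k⁻¹ • (-((σ / (z.2 - s)) • z.1))) + k⁻¹ • S ∈ {X | (X, uu s y σ z.2) ∈ E}} := by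
            apply measure_mono
            intro S hS
            have := hS.2.2.2.2.2
            rw [← hk, sub_eq_neg_add, smul_add] at this
            exact this
        _ = ENNReal.ofReal (|k⁻¹|⁻¹ ^ n) * volume {X | (X, uu s y σ z.2) ∈ E} :=
            vol_aff _ (inv_ne_zero hk0) _ _ ((by fun_prop : Measurable (fun X : Euc n => (X, uu s y σ z.2))) hE)
        _ ≤ _ := by
            gcongr
            exact hsl _
    · have : {S | z ∈ ES E c s y σ S} = ∅ := by
        ext S
        simp only [Set.mem_ofPred_eq, Set.mem_empty_iff_false, iff_false]
        intro h
        exact hz ⟨⟨h.2.1, h.1⟩, h.2.2.2.1, h.2.2.2.2.1⟩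
      rw [this]; simp
  calc _ ≤ ∫⁻ z, E0.indicator (fun _ => ENNReal.ofReal ((8 * L) ^ n) * ε1) z := lintegral_mono hb
    _ = ENNReal.ofReal ((8 * L) ^ n) * ε1 * volume E0 := by
      rw [lintegral_indicator mE0, setLIntegral_const]
    _ ≤ ENNReal.ofReal ((8 * L) ^ n) * ε1 * ε1 := by
      gcongr
      rw [Measure.volume_eq_prod, Measure.prod_apply_symm mE0]
      calc _ ≤ ∫⁻ t : ℝ, (Set.Ioc (0:ℝ) 1).indicator (fun _ => ε1) t := by
            apply lintegral_mono
            intro t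
            by_cases ht : t ∈ Set.Ioc (0:ℝ) 1
            · rw [Set.indicator_of_mem ht]
              exact (measure_mono (fun X hX => hX.1)).trans (hsl t)
            · rw [Set.indicator_of_notMem ht]
              have : (fun x : Euc n => (x, t)) ⁻¹' E0 = ∅ := by
                ext X
                simp only [Set.mem_preimage, Set.mem_empty_iff_false, iff_false]
                intro h; exact ht h.2
              beta_reduce; rw [this]; simp
        _ = ε1 := by rw [lintegral_indicator measurableSet_Ioc, setLIntegral_const]; simp
    _ = _ := by ring


/-- the configuration set for fixed parameters -/
def Gam {n : ℕ} (E : Set (Euc n × ℝ)) (Ω : Set (Euc n × Euc n)) (l' : ℝ≥0∞) (c s y σ : ℝ) :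
    Set (Euc n × Euc n × Euc n) :=
  {z | (z.1 - s • z.2.1, z.2.1) ∈ Ω ∧ (z.1 - s • z.2.2, z.2.2) ∈ Ω ∧
    (z.1 - s • z.2.2 + y • z.2.2, y) ∈ E ∧
    l' ≤ ov c s y σ (tset E (z.1 - s • z.2.1) z.2.1) (tset E (z.1 - s • z.2.2) z.2.2)}

lemma measurable_Gam {n : ℕ} (E : Set (Euc n × ℝ)) (hE : MeasurableSet E) (Ω : Set (Euc n × Euc n))
    (hΩ : MeasurableSet Ω) (l' : ℝ≥0∞) (c s : ℝ) :
    MeasurableSet {p : (Euc n × Euc n × Euc n) × (ℝ × ℝ) | p.1 ∈ Gam E Ω l' c s p.2.1 p.2.2} := by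
  have h1 : Measurable (fun p : (Euc n × Euc n × Euc n) × (ℝ × ℝ) =>
    (p.1.1 - s • p.1.2.1, p.1.2.1)) := by fun_prop
  have h2 : Measurable (fun p : (Euc n × Euc n × Euc n) × (ℝ × ℝ) =>
    (p.1.1 - s • p.1.2.2, p.1.2.2)) := by fun_prop
  have h3 : Measurable (fun p : (Euc n × Euc n × Euc n) × (ℝ × ℝ) =>
    (p.1.1 - s • p.1.2.2 + p.2.1 • p.1.2.2, p.2.1)) := by fun_prop
  refine (h1 hΩ).inter ((h2 hΩ).inter ((h3 hE).inter ?_))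
  have hu : Measurable (fun p : ((Euc n × Euc n × Euc n) × (ℝ × ℝ)) × ℝ =>
    uu s p.1.2.1 p.1.2.2 p.2) := by unfold uu; fun_prop
  have hQ : MeasurableSet {p : ((Euc n × Euc n × Euc n) × (ℝ × ℝ)) × ℝ |
      p.2 ∈ tset E (p.1.1.1 - s • p.1.1.2.1) p.1.1.2.1 ∧ c ≤ |p.2 - s| ∧
      uu s p.1.2.1 p.1.2.2 p.2 ∈ tset E (p.1.1.1 - s • p.1.1.2.2) p.1.1.2.2 ∧
      c ≤ |uu s p.1.2.1 p.1.2.2 p.2 - s|} := by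
    have k1 : Measurable (fun p : ((Euc n × Euc n × Euc n) × (ℝ × ℝ)) × ℝ =>
      (p.1.1.1 - s • p.1.1.2.1 + p.2 • p.1.1.2.1, p.2)) := by fun_prop
    have k2 : Measurable (fun p : ((Euc n × Euc n × Euc n) × (ℝ × ℝ)) × ℝ =>
      (p.1.1.1 - s • p.1.1.2.2 + (uu s p.1.2.1 p.1.2.2 p.2) • p.1.1.2.2, uu s p.1.2.1 p.1.2.2 p.2)) := by
      fun_prop
    refine MeasurableSet.inter ((measurable_snd measurableSet_Ioc).inter (k1 hE))
      (MeasurableSet.inter ?_ (MeasurableSet.inter ((hu measurableSet_Ioc).inter (k2 hE)) ?_))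
    · exact measurableSet_le (f := fun _ => c)
        (g := fun p : ((Euc n × Euc n × Euc n) × (ℝ × ℝ)) × ℝ => |p.2 - s|)
        measurable_const (by fun_prop)
    · exact measurableSet_le (f := fun _ => c)
        (g := fun p : ((Euc n × Euc n × Euc n) × (ℝ × ℝ)) × ℝ => |uu s p.1.2.1 p.1.2.2 p.2 - s|)
        measurable_const (by fun_prop)
  exact measurableSet_le (f := fun _ => l') measurable_const (measurable_measure_prodMk_left hQ)

lemma lemC {n : ℕ} (θ : ℝ) (h0 : 0 < θ) (h1 : θ ≤ 1 / 2) (A : ℝ) (N : ℕ)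
    (hK : ∀ (L : ℝ) (_ : 1 ≤ L) (e m : ℝ≥0∞) (_ : e ≠ ⊤) (_ : m ≠ ⊤)
      (E : Set (Euc n × ℝ)) (Ω : Set (Euc n × Euc n)), MeasurableSet E → MeasurableSet Ω →
      volume E ≤ e → (∀ ξ, volume {x | (x, ξ) ∈ Ω} ≤ m) →
      (∀ g ∈ Ω, ENNReal.ofReal (1 / L) ≤ volume (tset E g.1 g.2)) →
      volume Ω ^ (1 - θ) ≤ ENNReal.ofReal (A * L ^ N) * e * m ^ (1 - 2 * θ))
    (E : Set (Euc n × ℝ)) (hE : MeasurableSet E) (Ω : Set (Euc n × Euc n)) (hΩ : MeasurableSet Ω)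
    (L c s y σ : ℝ) (hL : 1 ≤ L) (hc : c = 1 / (8 * L))
    (hs : s ∈ Set.Ioc (0:ℝ) 1) (hy : y ∈ Set.Ioc (0:ℝ) 1) (hys : c ≤ |y - s|) (hσ : c ^ 2 ≤ |σ|)
    (ε1 m : ℝ≥0∞) (hε1 : ε1 ≠ ⊤) (hm : m ≠ ⊤) (hEf : volume E ≠ ⊤)
    (hsl : ∀ t, volume {X | (X, t) ∈ E} ≤ ε1)
    (hΩm : ∀ ξ, volume {x | (x, ξ) ∈ Ω} ≤ m) :
    volume (Gam E Ω (ENNReal.ofReal (1 / (16384 * L ^ 6))) c s y σ) ≤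
      ENNReal.ofReal ((8 * L) ^ n) * ((m * (ENNReal.ofReal ((64 * L ^ 2) ^ n) * ε1)) ^ θ *
        (ENNReal.ofReal (A * (16384 * L ^ 6) ^ N) * m ^ (1 - 2 * θ)) *
        (ENNReal.ofReal ((8 * L) ^ n) * ε1 ^ 2)) := by
  have hL0 : 0 < L := by linarith
  have hc0 : 0 < c := by rw [hc]; positivity
  have hys0 : y - s ≠ 0 := by intro h; rw [h, abs_zero] at hys; linarith
  have hσ0 : σ ≠ 0 := by intro h; rw [h, abs_zero] at hσ; have : 0 < c ^ 2 := by positivity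
                         linarith
  set l' := ENNReal.ofReal (1 / (16384 * L ^ 6)) with hl'
  have mG : MeasurableSet (Gam E Ω l' c s y σ) :=
    (by fun_prop : Measurable (fun z : Euc n × Euc n × Euc n => (z, (y, σ))))
      (measurable_Gam E hE Ω hΩ l' c s)
  rw [vol_C1 s σ (y - s) hys0 _ mG]
  set OS : Euc n → Set (Euc n × Euc n) := fun S => {g : Euc n × Euc n |
      (g.1 + s • g.2, g.2, (y - s)⁻¹ • (S - (g.1 + s • g.2) - σ • g.2)) ∈ Gam E Ω l' c s y σ} with hOS
  have mOS : ∀ S, MeasurableSet (OS S) := fun S =>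
    (by fun_prop : Measurable (fun g : Euc n × Euc n =>
      (g.1 + s • g.2, g.2, (y - s)⁻¹ • (S - (g.1 + s • g.2) - σ • g.2)))) mG
  have sub1 : ∀ S, ∀ g ∈ OS S, g ∈ Ω := by
    intro S g hg
    have := hg.1
    simpa using this
  have hY : ∀ S, ∀ g ∈ OS S, (S + (-σ) • g.2, y) ∈ E := by
    intro S g hg
    have := hg.2.2.1
    simp only at this
    convert this using 2
    rw [sub_add, ← sub_smul, smul_smul, show (s - y) * (y - s)⁻¹ = -1 by
      rw [← neg_sub y s, neg_mul, mul_inv_cancel₀ hys0]]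
    rw [neg_smul, neg_smul, one_smul]; abel
  have fib : ∀ S ξ, volume {x | (x, ξ) ∈ OS S} ≤ m := fun S ξ =>
    (measure_mono (μ := volume) (fun x hx => sub1 S (x, ξ) hx :
      {x | (x, ξ) ∈ OS S} ⊆ {x | (x, ξ) ∈ Ω})).trans (hΩm ξ)
  -- density
  have dn : ∀ S, ∀ g ∈ OS S, ENNReal.ofReal (1 / (16384 * L ^ 6)) ≤
      volume (tset (ES E c s y σ S) g.1 g.2) := by
    intro S g hg
    refine hg.2.2.2.trans (measure_mono ?_)
    rintro q ⟨hq1, hqs, hu, hus⟩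
    simp only at hq1 hu
    have hP : g.1 + s • g.2 - s • g.2 = g.1 := by abel
    rw [hP] at hq1
    have hqs0 : q - s ≠ 0 := by intro h; rw [h, abs_zero] at hqs; linarith
    refine ⟨hq1.1, hq1.1, hq1.2, hqs, hu.1, hus, ?_⟩
    have h2 := hu.2
    simp only
    set k := 1 - σ / (q - s) with hk
    have hk0 : k ≠ 0 := by
      intro h
      have : uu s y σ q = s := by simp only [uu, ← hk, h]; simp
      rw [this, sub_self, abs_zero] at hus; linarith
    have huk : uu s y σ q = s + (y - s) / k := by simp only [uu, ← hk]
    convert h2 using 2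
    rw [huk]
    have hw : σ = (1 - k) * (q - s) := by rw [hk]; field_simp; ring
    have hw2 : σ / (q - s) = 1 - k := by rw [hk]; ring
    rw [hw2]
    apply smul_right_injective _ hk0
    simp only [smul_add, smul_sub, smul_smul]
    rw [mul_inv_cancel₀ hk0, one_smul]
    rw [show k * ((s + (y - s) / k) * (y - s)⁻¹) = k * s * (y - s)⁻¹ + 1 by field_simp]
    have e1 : k * (1 - k) = k * (1 - k) := rfl
    rw [hw]
    rw [← sub_eq_zero]
    match_scalars <;> field_simp <;> ring
  have hES : ∀ S, volume (OS S) ^ (1 - θ) ≤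
      ENNReal.ofReal (A * (16384 * L ^ 6) ^ N) * volume (ES E c s y σ S) * m ^ (1 - 2 * θ) := by
    intro S
    have hsubE : ES E c s y σ S ⊆ E := fun z hz => hz.2.1
    refine hK (16384 * L ^ 6) ?_ _ m ?_ hm _ _ ?_ (mOS S) le_rfl (fib S) (dn S)
    · nlinarith [one_le_pow₀ hL (n := 6)]
    · exact ((measure_mono hsubE).trans_lt hEf.lt_top).ne
    · exact (by fun_prop : Measurable (fun z : Euc n × ℝ => (S, z))) (measurable_ES E hE c s y σ)
  have hOm : ∀ S, volume (OS S) ≤ m * (ENNReal.ofReal ((64 * L ^ 2) ^ n) * ε1) := by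
    intro S
    have mEy : MeasurableSet {X | (X, y) ∈ E} := (by fun_prop : Measurable (fun X : Euc n => (X, y))) hE
    have mB : MeasurableSet {ξ : Euc n | S + (-σ) • ξ ∈ {X | (X, y) ∈ E}} :=
      (by fun_prop : Measurable (fun ξ : Euc n => S + (-σ) • ξ)) mEy
    rw [Measure.volume_eq_prod, Measure.prod_apply_symm (mOS S)]
    calc _ ≤ ∫⁻ ξ, {ξ : Euc n | S + (-σ) • ξ ∈ {X | (X, y) ∈ E}}.indicator (fun _ => m) ξ := by
          apply lintegral_mono
          intro ξ
          by_cases hξ : ξ ∈ {ξ : Euc n | S + (-σ) • ξ ∈ {X | (X, y) ∈ E}}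
          · rw [Set.indicator_of_mem hξ]; exact fib S ξ
          · rw [Set.indicator_of_notMem hξ]
            have : (fun x : Euc n => (x, ξ)) ⁻¹' OS S = ∅ := by
              ext X
              simp only [Set.mem_preimage, Set.mem_empty_iff_false, iff_false]
              intro h; exact hξ (hY S _ h)
            beta_reduce; rw [this]; simp
      _ = m * volume {ξ : Euc n | S + (-σ) • ξ ∈ {X | (X, y) ∈ E}} := by
          rw [lintegral_indicator mB, setLIntegral_const]
      _ = m * (ENNReal.ofReal (|-σ|⁻¹ ^ n) * volume {X | (X, y) ∈ E}) := by
          rw [vol_aff (-σ) (neg_ne_zero.mpr hσ0) S _ mEy]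
      _ ≤ _ := by
          gcongr
          · rw [abs_neg]
            rw [inv_le_comm₀ (by positivity) (by positivity)]
            refine le_trans (le_of_eq ?_) hσ
            rw [hc]; field_simp; norm_num
          · exact hsl y
  have hcombo : ∀ S, volume (OS S) ≤ (m * (ENNReal.ofReal ((64 * L ^ 2) ^ n) * ε1)) ^ θ *
        (ENNReal.ofReal (A * (16384 * L ^ 6) ^ N) * m ^ (1 - 2 * θ)) * volume (ES E c s y σ S) := by
    intro S
    calc volume (OS S) = volume (OS S) ^ θ * volume (OS S) ^ (1 - θ) := by
          rw [← ENNReal.rpow_add_of_nonneg _ _ h0.le (by linarith)]; simp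
      _ ≤ (m * (ENNReal.ofReal ((64 * L ^ 2) ^ n) * ε1)) ^ θ *
          (ENNReal.ofReal (A * (16384 * L ^ 6) ^ N) * volume (ES E c s y σ S) * m ^ (1 - 2 * θ)) := by
          gcongr
          · exact hOm S
          · exact hES S
      _ = _ := by ring
  have hcf : (m * (ENNReal.ofReal ((64 * L ^ 2) ^ n) * ε1)) ^ θ *
        (ENNReal.ofReal (A * (16384 * L ^ 6) ^ N) * m ^ (1 - 2 * θ)) ≠ ⊤ := by
    refine ENNReal.mul_ne_top (ENNReal.rpow_ne_top_of_nonneg h0.le ?_)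
      (ENNReal.mul_ne_top ENNReal.ofReal_ne_top (ENNReal.rpow_ne_top_of_nonneg (by linarith) hm))
    exact ENNReal.mul_ne_top hm (ENNReal.mul_ne_top ENNReal.ofReal_ne_top hε1)
  have hfirst : |y - s|⁻¹ ≤ 8 * L := by
    rw [inv_le_comm₀ (by positivity) (by positivity)]
    refine le_trans (le_of_eq ?_) hys
    rw [hc]; field_simp
  gcongr
  calc ∫⁻ S, volume (OS S) ≤ ∫⁻ S, (m * (ENNReal.ofReal ((64 * L ^ 2) ^ n) * ε1)) ^ θ *
        (ENNReal.ofReal (A * (16384 * L ^ 6) ^ N) * m ^ (1 - 2 * θ)) * volume (ES E c s y σ S) :=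
        lintegral_mono hcombo
    _ = (m * (ENNReal.ofReal ((64 * L ^ 2) ^ n) * ε1)) ^ θ *
        (ENNReal.ofReal (A * (16384 * L ^ 6) ^ N) * m ^ (1 - 2 * θ)) * ∫⁻ S, volume (ES E c s y σ S) :=
        lintegral_const_mul' _ _ hcf
    _ ≤ _ := by
        gcongr
        exact lint_ES E hE L c s y σ hL hc hs hy ε1 hsl


def ZZ {n : ℕ} (Ω : Set (Euc n × Euc n)) (s : ℝ) : Set (Euc n × Euc n × Euc n) :=
  {z | (z.1 - s • z.2.1, z.2.1) ∈ Ω ∧ (z.1 - s • z.2.2, z.2.2) ∈ Ω}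

lemma measurable_ZZ {n : ℕ} (Ω : Set (Euc n × Euc n)) (hΩ : MeasurableSet Ω) (s : ℝ) :
    MeasurableSet (ZZ Ω s) :=
  ((by fun_prop : Measurable (fun z : Euc n × Euc n × Euc n => (z.1 - s • z.2.1, z.2.1))) hΩ).inter
    ((by fun_prop : Measurable (fun z : Euc n × Euc n × Euc n => (z.1 - s • z.2.2, z.2.2))) hΩ)

lemma lemD {n : ℕ} (E : Set (Euc n × ℝ)) (hE : MeasurableSet E) (Ω : Set (Euc n × Euc n))
    (hΩ : MeasurableSet Ω) (L c s : ℝ) (hL : 1 ≤ L) (hc : c = 1 / (8 * L))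
    (hs : s ∈ Set.Ioc (0:ℝ) 1)
    (hd : ∀ g ∈ Ω, ENNReal.ofReal (1 / L) ≤ volume (tset E g.1 g.2)) (B : ℝ≥0∞)
    (hB : ∀ y σ : ℝ, y ∈ Set.Ioc (0:ℝ) 1 → c ≤ |y - s| → c ^ 2 ≤ |σ| →
      volume (Gam E Ω (ENNReal.ofReal (1 / (16384 * L ^ 6))) c s y σ) ≤ B) :
    ENNReal.ofReal (1 / (1024 * L ^ 5)) * volume (ZZ Ω s) ≤ ENNReal.ofReal (16 * L) * B := by
  have hL0 : 0 < L := by linarith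
  have hc0 : 0 < c := by rw [hc]; positivity
  set l' := ENNReal.ofReal (1 / (16384 * L ^ 6)) with hl'
  set R : Set (ℝ × ℝ) := {p | (p.1 ∈ Set.Ioc (0:ℝ) 1 ∧ c ≤ |p.1 - s|) ∧ (c ^ 2 ≤ |p.2| ∧ |p.2| ≤ 1 / c)}
    with hR
  have mR : MeasurableSet R := by
    refine ((measurable_fst measurableSet_Ioc).inter ?_).inter (MeasurableSet.inter ?_ ?_)
    · exact measurableSet_le (f := fun _ => c) (g := fun p : ℝ × ℝ => |p.1 - s|)
        measurable_const (by fun_prop)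
    · exact measurableSet_le (f := fun _ => c ^ 2) (g := fun p : ℝ × ℝ => |p.2|)
        measurable_const (by fun_prop)
    · exact measurableSet_le (f := fun p : ℝ × ℝ => |p.2|) (g := fun _ => 1 / c)
        (by fun_prop) measurable_const
  have vR : volume R ≤ ENNReal.ofReal (16 * L) := by
    have : R ⊆ Set.Ioc (0:ℝ) 1 ×ˢ Set.Icc (-(1 / c)) (1 / c) := by
      intro p hp
      exact ⟨hp.1.1, abs_le.mp hp.2.2⟩
    refine (measure_mono this).trans ?_
    rw [Measure.volume_eq_prod, Measure.prod_prod, Real.volume_Ioc, Real.volume_Icc]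
    rw [sub_zero, ENNReal.ofReal_one, one_mul]
    apply ENNReal.ofReal_le_ofReal
    rw [hc]; field_simp; norm_num
  set Q : Set ((Euc n × Euc n × Euc n) × (ℝ × ℝ)) :=
    {p | p.2 ∈ R ∧ p.1 ∈ Gam E Ω l' c s p.2.1 p.2.2} with hQ
  have mQ : MeasurableSet Q := (measurable_snd mR).inter (measurable_Gam E hE Ω hΩ l' c s)
  have e1 := Measure.prod_apply (μ := (volume : Measure (Euc n × Euc n × Euc n)))
      (ν := (volume : Measure (ℝ × ℝ))) mQ
  have e2 := Measure.prod_apply_symm (μ := (volume : Measure (Euc n × Euc n × Euc n)))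
      (ν := (volume : Measure (ℝ × ℝ))) mQ
  have mZ := measurable_ZZ Ω hΩ s
  calc _ = ∫⁻ z, (ZZ Ω s).indicator (fun _ => ENNReal.ofReal (1 / (1024 * L ^ 5))) z := by
        rw [lintegral_indicator mZ, setLIntegral_const]
    _ ≤ ∫⁻ z, volume (Prod.mk z ⁻¹' Q) := by
        apply lintegral_mono
        intro z
        by_cases hz : z ∈ ZZ Ω s
        · rw [Set.indicator_of_mem hz]
          refine (lemB L c s hL hc (tset E (z.1 - s • z.2.1) z.2.1) (tset E (z.1 - s • z.2.2) z.2.2)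
            (measurableSet_tset E hE _ _) (measurableSet_tset E hE _ _) (fun t ht => ht.1)
            (hd _ hz.1) (fun t ht => ht.1) (hd _ hz.2) hs).trans (measure_mono ?_)
          rintro p ⟨hp1, hp2, hp3⟩
          exact ⟨⟨⟨hp1.1.1, hp1.2⟩, hp2⟩, hz.1, hz.2, hp1.1.2, hp3⟩
        · rw [Set.indicator_of_notMem hz]; exact zero_le
    _ = ∫⁻ p : ℝ × ℝ, volume ((fun z => (z, p)) ⁻¹' Q) := e1.symm.trans e2
    _ ≤ ∫⁻ p : ℝ × ℝ, R.indicator (fun _ => B) p := by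
        apply lintegral_mono
        intro p
        by_cases hp : p ∈ R
        · rw [Set.indicator_of_mem hp]
          exact (measure_mono (fun z hz => hz.2)).trans (hB p.1 p.2 hp.1.1 hp.1.2 hp.2.1)
        · rw [Set.indicator_of_notMem hp]
          have : (fun z : Euc n × Euc n × Euc n => (z, p)) ⁻¹' Q = ∅ := by
            ext z
            simp only [Set.mem_preimage, Set.mem_empty_iff_false, iff_false]
            intro h; exact hp h.1
          beta_reduce; rw [this]; simp
    _ = B * volume R := by rw [lintegral_indicator mR, setLIntegral_const]
    _ ≤ _ := by rw [mul_comm]; gcongr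

lemma lemA {n : ℕ} (E : Set (Euc n × ℝ)) (hE : MeasurableSet E) (Ω : Set (Euc n × Euc n))
    (hΩ : MeasurableSet Ω) (l : ℝ≥0∞)
    (hd : ∀ g ∈ Ω, l ≤ volume (tset E g.1 g.2)) :
    (l * volume Ω) ^ (2:ℝ) ≤ volume E * ∫⁻ s in Set.Ioc (0:ℝ) 1, volume (ZZ Ω s) := by
  set I : Set (Euc n × ℝ) := {z | z.2 ∈ Set.Ioc (0:ℝ) 1} with hI
  have mI : MeasurableSet I := measurable_snd measurableSet_Ioc
  set E0 : Set (Euc n × ℝ) := E ∩ I with hE0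
  have mE0 : MeasurableSet E0 := hE.inter mI
  have mN0 : MeasurableSet {p : (Euc n × ℝ) × Euc n | (p.1.1 - p.1.2 • p.2, p.2) ∈ Ω} :=
    (by fun_prop : Measurable (fun p : (Euc n × ℝ) × Euc n => (p.1.1 - p.1.2 • p.2, p.2))) hΩ
  set N : Euc n × ℝ → ℝ≥0∞ := fun z => volume {ξ | (z.1 - z.2 • ξ, ξ) ∈ Ω} with hN
  have mN : Measurable N := measurable_measure_prodMk_left mN0
  set Q : Set ((Euc n × Euc n) × ℝ) := {p | p.1 ∈ Ω ∧ p.2 ∈ tset E p.1.1 p.1.2} with hQ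
  have mQ : MeasurableSet Q := (measurable_fst hΩ).inter ((measurable_snd measurableSet_Ioc).inter
    ((by fun_prop : Measurable (fun p : (Euc n × Euc n) × ℝ => (p.1.1 + p.2 • p.1.2, p.2))) hE))
  have e1 := Measure.prod_apply (μ := (volume : Measure (Euc n × Euc n)))
      (ν := (volume : Measure ℝ)) mQ
  have e2 := Measure.prod_apply_symm (μ := (volume : Measure (Euc n × Euc n)))
      (ν := (volume : Measure ℝ)) mQ
  have k1 : l * volume Ω ≤ ∫⁻ t : ℝ, volume ((fun g => (g, t)) ⁻¹' Q) := by
    rw [← e2, e1]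
    calc _ = ∫⁻ g, Ω.indicator (fun _ => l) g := by
          rw [lintegral_indicator hΩ, setLIntegral_const]
      _ ≤ _ := by
        apply lintegral_mono
        intro g
        by_cases hg : g ∈ Ω
        · rw [Set.indicator_of_mem hg]
          exact (hd g hg).trans (measure_mono (fun t ht => ⟨hg, ht⟩))
        · rw [Set.indicator_of_notMem hg]; exact zero_le
  have k2 : ∀ t : ℝ, volume ((fun g : Euc n × Euc n => (g, t)) ⁻¹' Q) =
      ∫⁻ P : Euc n, (E0.indicator (1 : Euc n × ℝ → ℝ≥0∞) * I.indicator N : Euc n × ℝ → ℝ≥0∞) (P, t) := by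
    intro t
    have mA : MeasurableSet {g : Euc n × Euc n | (g.1 - t • g.2, g.2) ∈ Ω ∧ (g.1, t) ∈ E0} :=
      ((by fun_prop : Measurable (fun g : Euc n × Euc n => (g.1 - t • g.2, g.2))) hΩ).inter
        ((by fun_prop : Measurable (fun g : Euc n × Euc n => (g.1, t))) mE0)
    have := vol_shear t _ mA
    have e3 : {g : Euc n × Euc n | (g.1 + t • g.2, g.2) ∈
        {g : Euc n × Euc n | (g.1 - t • g.2, g.2) ∈ Ω ∧ (g.1, t) ∈ E0}} =
        (fun g : Euc n × Euc n => (g, t)) ⁻¹' Q := by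
      ext g
      simp only [Set.mem_ofPred_eq, Set.mem_preimage, hQ, tset, hE0, hI, Set.mem_inter_iff,
        add_sub_cancel_right]
      tauto
    rw [← e3, this, Measure.volume_eq_prod, Measure.prod_apply mA]
    apply lintegral_congr
    intro P
    by_cases hP : (P, t) ∈ E0
    · simp only [Pi.mul_apply, Set.indicator_of_mem hP, Set.indicator_of_mem hP.2, Pi.one_apply, one_mul,
        hN]
      congr 1
      ext ξ
      simp only [Set.mem_preimage, Set.mem_ofPred_eq, hP, and_true]
    · simp only [Pi.mul_apply, Set.indicator_of_notMem hP, zero_mul]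
      have : Prod.mk P ⁻¹' {g : Euc n × Euc n | (g.1 - t • g.2, g.2) ∈ Ω ∧ (g.1, t) ∈ E0} = ∅ := by
        ext z
        simp only [Set.mem_preimage, Set.mem_empty_iff_false, iff_false]
        intro h; exact hP h.2
      rw [this]; simp
  have k3 : l * volume Ω ≤ ∫⁻ z, (E0.indicator (1 : Euc n × ℝ → ℝ≥0∞) * I.indicator N : Euc n × ℝ → ℝ≥0∞) z := by
    refine k1.trans (le_of_eq ?_)
    simp only [k2]
    rw [Measure.volume_eq_prod, lintegral_prod_symm]
    exact (((measurable_one.indicator mE0).mul (mN.indicator mI))).aemeasurable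
  have k4 := ENNReal.lintegral_mul_le_Lp_mul_Lq (volume : Measure (Euc n × ℝ)) Real.HolderConjugate.two_two
    (measurable_one.indicator mE0).aemeasurable (mN.indicator mI).aemeasurable
    (f := E0.indicator (1 : Euc n × ℝ → ℝ≥0∞)) (g := I.indicator N)
  have k5 : ∫⁻ z, (E0.indicator (1 : Euc n × ℝ → ℝ≥0∞) z) ^ (2:ℝ) ≤ volume E := by
    calc _ = ∫⁻ z, E0.indicator (1 : Euc n × ℝ → ℝ≥0∞) z := by
          apply lintegral_congr; intro z
          by_cases hz : z ∈ E0 <;> simp [hz]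
      _ = volume E0 := lintegral_indicator_one mE0
      _ ≤ _ := measure_mono Set.inter_subset_left
  have k6 : ∫⁻ z, (I.indicator N z) ^ (2:ℝ) = ∫⁻ s in Set.Ioc (0:ℝ) 1, volume (ZZ Ω s) := by
    rw [Measure.volume_eq_prod, lintegral_prod_symm _ ((mN.indicator mI).pow_const _).aemeasurable,
      ← lintegral_indicator measurableSet_Ioc]
    apply lintegral_congr
    intro s
    by_cases hs : s ∈ Set.Ioc (0:ℝ) 1
    · rw [Set.indicator_of_mem hs, Measure.volume_eq_prod, Measure.prod_apply (measurable_ZZ Ω hΩ s)]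
      apply lintegral_congr
      intro P
      rw [Set.indicator_of_mem (show (P, s) ∈ I from hs)]
      have : Prod.mk P ⁻¹' ZZ Ω s = {ξ | (P - s • ξ, ξ) ∈ Ω} ×ˢ {ξ | (P - s • ξ, ξ) ∈ Ω} := by
        ext z; rfl
      rw [this, Measure.volume_eq_prod, Measure.prod_prod, ENNReal.rpow_two, sq]
    · rw [Set.indicator_of_notMem hs]
      have : ∀ P : Euc n, I.indicator N (P, s) = 0 := fun P => Set.indicator_of_notMem (show (P, s) ∉ I from hs) _
      simp [this]
  calc _ ≤ ((volume E) ^ (1 / (2:ℝ)) * (∫⁻ s in Set.Ioc (0:ℝ) 1, volume (ZZ Ω s)) ^ (1 / (2:ℝ))) ^ (2:ℝ) := by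
        refine ENNReal.rpow_le_rpow (k3.trans (k4.trans ?_)) (by norm_num)
        rw [k6]
        gcongr
    _ = _ := by
      rw [ENNReal.mul_rpow_of_nonneg _ _ (by norm_num), ← ENNReal.rpow_mul, ← ENNReal.rpow_mul]
      norm_num


lemma trim {n : ℕ} (E : Set (Euc n × ℝ)) (hE : MeasurableSet E) (L : ℝ) (hL : 1 ≤ L) (e : ℝ≥0∞)
    (he : volume E ≤ e) (he' : e ≠ ⊤) :
    ∃ E' : Set (Euc n × ℝ), MeasurableSet E' ∧ E' ⊆ E ∧
      (∀ t, volume {X | (X, t) ∈ E'} ≤ ENNReal.ofReal (2 * L) * e) ∧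
      ∀ x ξ, ENNReal.ofReal (1 / L) ≤ volume (tset E x ξ) →
        ENNReal.ofReal (1 / (2 * L)) ≤ volume (tset E' x ξ) := by
  have hL0 : 0 < L := by linarith
  set F : ℝ → ℝ≥0∞ := fun t => volume {X | (X, t) ∈ E} with hF
  have mF : Measurable F := measurable_measure_prodMk_right hE
  have iF : ∫⁻ t, F t ≤ e := by
    refine le_trans (le_of_eq ?_) he
    rw [Measure.volume_eq_prod, Measure.prod_apply_symm hE]; rfl
  set K := ENNReal.ofReal (2 * L) with hK
  have mB : MeasurableSet {t | K * e < F t} := measurableSet_lt measurable_const mF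
  have vB : volume {t | K * e < F t} ≤ ENNReal.ofReal (1 / (2 * L)) := by
    by_cases h0 : e = 0
    · have : F =ᵐ[volume] 0 := (lintegral_eq_zero_iff mF).mp (le_antisymm (iF.trans h0.le) zero_le)
      have h2 : volume {t | K * e < F t} = 0 := by
        refine measure_mono_null ?_ (ae_iff.mp this)
        intro t ht h
        have ht' : K * e < F t := ht
        rw [h] at ht'
        simp at ht'
      rw [h2]; exact zero_le
    · have h1 := mul_meas_ge_le_lintegral mF (K * e) (μ := volume)
      have h2 : K * e * volume {t | K * e < F t} ≤ e :=
        (mul_le_mul_right (measure_mono (fun t (ht : K * e < F t) => (show K * e ≤ F t from le_of_lt ht) :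
          {t | K * e < F t} ⊆ {t | K * e ≤ F t})) _).trans (h1.trans iF)
      have h3 : e * (K * volume {t | K * e < F t}) ≤ e * 1 := by
        rw [mul_one]; refine le_trans (le_of_eq ?_) h2; ring
      have h4 := (ENNReal.mul_le_mul_iff_right h0 he').mp h3
      rw [one_div, ENNReal.ofReal_inv_of_pos (by positivity), ← hK]
      rw [ENNReal.le_inv_iff_mul_le, mul_comm]
      exact h4
  refine ⟨E ∩ {z | F z.2 ≤ K * e}, hE.inter (measurableSet_le (mF.comp measurable_snd) measurable_const),
    Set.inter_subset_left, ?_, ?_⟩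
  · intro t
    by_cases ht : F t ≤ K * e
    · exact (measure_mono (fun X hX => hX.1)).trans ht
    · have : {X | (X, t) ∈ E ∩ {z | F z.2 ≤ K * e}} = ∅ := by
        ext X
        simp only [Set.mem_ofPred_eq, Set.mem_empty_iff_false, iff_false]
        intro h; exact ht h.2
      rw [this]; simp
  · intro x ξ h
    have h1 : tset E x ξ ⊆ tset (E ∩ {z | F z.2 ≤ K * e}) x ξ ∪ {t | K * e < F t} := by
      intro t ht
      by_cases h : F t ≤ K * e
      · left; exact ⟨ht.1, ht.2, h⟩
      · right; exact not_le.mp h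
    have h2 := h.trans ((measure_mono h1).trans ((measure_union_le _ _).trans (add_le_add le_rfl vB)))
    have h3 : ENNReal.ofReal (1 / L) = ENNReal.ofReal (1 / (2 * L)) + ENNReal.ofReal (1 / (2 * L)) := by
      rw [← ENNReal.ofReal_add (by positivity) (by positivity)]
      congr 1; field_simp; norm_num
    rw [h3] at h2
    exact (ENNReal.add_le_add_iff_right ENNReal.ofReal_ne_top).mp h2

lemma rpow_self_le (a : ℝ≥0∞) (ha : 1 ≤ a) (θ : ℝ) (h : θ ≤ 1) : a ^ θ ≤ a := by
  calc a ^ θ ≤ a ^ (1:ℝ) := ENNReal.rpow_le_rpow_of_exponent_le ha h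
    _ = a := by simp

lemma KK_step (n : ℕ) (θ : ℝ) (h0 : 0 < θ) (h1 : θ ≤ 1 / 2) (h : KK n θ) :
    KK n ((1 + θ) / (3 + θ)) := by
  obtain ⟨A, hA, N, hK⟩ := h
  refine ⟨1024 * 16 * 8 ^ n * 64 ^ n * 8 ^ n * A * 16384 ^ N * 2 ^ (11 + 4 * n + 6 * N), ?_,
    11 + 4 * n + 6 * N, ?_⟩
  · have p1 : (1:ℝ) ≤ 8 ^ n := one_le_pow₀ (by norm_num)
    have p2 : (1:ℝ) ≤ 64 ^ n := one_le_pow₀ (by norm_num)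
    have p3 : (1:ℝ) ≤ 16384 ^ N := one_le_pow₀ (by norm_num)
    have p4 : (1:ℝ) ≤ 2 ^ (11 + 4 * n + 6 * N) := one_le_pow₀ (by norm_num)
    have p0 : (1:ℝ) ≤ 1024 * 16 := by norm_num
    exact one_le_mul_of_one_le_of_one_le (one_le_mul_of_one_le_of_one_le
      (one_le_mul_of_one_le_of_one_le (one_le_mul_of_one_le_of_one_le (one_le_mul_of_one_le_of_one_le
      (one_le_mul_of_one_le_of_one_le p0 p1) p2) p1) hA) p3) p4
  intro L0 hL0 e m he hm E0 Ω mE0 hΩ hE0 hΩm hd0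
  obtain ⟨E, hE, hsub, hsl, hdens⟩ := trim E0 mE0 L0 hL0 e hE0 he
  set L := 2 * L0 with hLdef
  have hL : 1 ≤ L := by rw [hLdef]; linarith
  have hLp : 0 < L := by linarith
  have hEe : volume E ≤ e := (measure_mono hsub).trans hE0
  have hd : ∀ g ∈ Ω, ENNReal.ofReal (1 / L) ≤ volume (tset E g.1 g.2) :=
    fun g hg => hdens _ _ (hd0 g hg)
  set ε1 := ENNReal.ofReal L * e with hε1
  set B := ENNReal.ofReal ((8 * L) ^ n) * ((m * (ENNReal.ofReal ((64 * L ^ 2) ^ n) * ε1)) ^ θ *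
        (ENNReal.ofReal (A * (16384 * L ^ 6) ^ N) * m ^ (1 - 2 * θ)) *
        (ENNReal.ofReal ((8 * L) ^ n) * ε1 ^ 2)) with hB
  have hZ : ∀ s ∈ Set.Ioc (0:ℝ) 1, volume (ZZ Ω s) ≤
      ENNReal.ofReal (1024 * L ^ 5) * (ENNReal.ofReal (16 * L) * B) := by
    intro s hs
    have := lemD E hE Ω hΩ L (1 / (8 * L)) s hL rfl hs hd B (fun y σ hy hys hσ =>
      lemC θ h0 h1 A N hK E hE Ω hΩ L _ s y σ hL rfl hs hy hys hσ ε1 m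
        (ENNReal.mul_ne_top ENNReal.ofReal_ne_top he) hm (hEe.trans_lt he.lt_top).ne hsl hΩm)
    calc volume (ZZ Ω s) = ENNReal.ofReal (1024 * L ^ 5) *
          (ENNReal.ofReal (1 / (1024 * L ^ 5)) * volume (ZZ Ω s)) := by
          rw [← mul_assoc, ← ENNReal.ofReal_mul (by positivity), mul_one_div_cancel (by positivity)]
          simp
      _ ≤ _ := by gcongr
  have hv : volume Ω ^ (2:ℝ) ≤ ENNReal.ofReal L ^ (2:ℝ) * (e * (ENNReal.ofReal (1024 * L ^ 5) * (ENNReal.ofReal (16 * L) * B))) := by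
    calc volume Ω ^ (2:ℝ) = (ENNReal.ofReal L * (ENNReal.ofReal (1 / L) * volume Ω)) ^ (2:ℝ) := by
          rw [← mul_assoc, ← ENNReal.ofReal_mul (by positivity), mul_one_div_cancel (by positivity)]
          simp
      _ = ENNReal.ofReal L ^ (2:ℝ) * (ENNReal.ofReal (1 / L) * volume Ω) ^ (2:ℝ) :=
          ENNReal.mul_rpow_of_nonneg _ _ (by norm_num)
      _ ≤ _ := by
          gcongr
          refine (lemA E hE Ω hΩ _ hd).trans ?_
          gcongr
          calc _ ≤ ∫⁻ s in Set.Ioc (0:ℝ) 1, (ENNReal.ofReal (1024 * L ^ 5) * (ENNReal.ofReal (16 * L) * B)) :=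
                setLIntegral_mono measurable_const hZ
            _ = _ := by rw [setLIntegral_const]; simp
  have hB2 : (m * (ENNReal.ofReal ((64 * L ^ 2) ^ n) * ε1)) ^ θ ≤
      m ^ θ * (ENNReal.ofReal ((64 * L ^ 2) ^ n) * ENNReal.ofReal L) * e ^ θ := by
    rw [hε1, ← mul_assoc (ENNReal.ofReal ((64 * L ^ 2) ^ n)), ENNReal.mul_rpow_of_nonneg _ _ h0.le,
      ENNReal.mul_rpow_of_nonneg _ _ h0.le, mul_assoc]
    gcongr
    apply rpow_self_le _ _ _ (by linarith)
    rw [← ENNReal.ofReal_mul (by positivity), ENNReal.one_le_ofReal]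
    refine one_le_mul_of_one_le_of_one_le (one_le_pow₀ ?_) hL
    nlinarith
  set K2 : ℝ := 1024 * 16 * 8 ^ n * 64 ^ n * 8 ^ n * A * 16384 ^ N * 2 ^ (11 + 4 * n + 6 * N) *
    L0 ^ (11 + 4 * n + 6 * N) with hK2
  have hfin : volume Ω ^ (2:ℝ) ≤ ENNReal.ofReal K2 * e ^ (3 + θ) * m ^ (1 - θ) := by
    refine hv.trans ?_
    calc _ ≤ ENNReal.ofReal L ^ (2:ℝ) * (e * (ENNReal.ofReal (1024 * L ^ 5) * (ENNReal.ofReal (16 * L) *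
          (ENNReal.ofReal ((8 * L) ^ n) * ((m ^ θ * (ENNReal.ofReal ((64 * L ^ 2) ^ n) * ENNReal.ofReal L) * e ^ θ) *
        (ENNReal.ofReal (A * (16384 * L ^ 6) ^ N) * m ^ (1 - 2 * θ)) *
        (ENNReal.ofReal ((8 * L) ^ n) * ε1 ^ 2)))))) := by
          rw [hB]; gcongr
      _ = (ENNReal.ofReal L ^ 2 * ENNReal.ofReal (1024 * L ^ 5) * ENNReal.ofReal (16 * L) *
          ENNReal.ofReal ((8 * L) ^ n) * ENNReal.ofReal ((64 * L ^ 2) ^ n) * ENNReal.ofReal L *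
          ENNReal.ofReal (A * (16384 * L ^ 6) ^ N) * ENNReal.ofReal ((8 * L) ^ n) * ENNReal.ofReal L ^ 2) *
          (e ^ (3:ℝ) * e ^ θ) * (m ^ θ * m ^ (1 - 2 * θ)) := by
          rw [hε1, ENNReal.rpow_two, show (3:ℝ) = ((3:ℕ):ℝ) by norm_num, ENNReal.rpow_natCast]
          ring
      _ = _ := by
          rw [← ENNReal.rpow_add_of_nonneg _ _ (by norm_num) h0.le,
            ← ENNReal.rpow_add_of_nonneg _ _ h0.le (by linarith)]
          congr 2
          · rw [← ENNReal.ofReal_pow hLp.le]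
            simp only [← ENNReal.ofReal_mul' (show 0 ≤ L from hLp.le),
              ← ENNReal.ofReal_mul' (show 0 ≤ L ^ 2 by positivity),
              ← ENNReal.ofReal_mul' (show 0 ≤ 1024 * L ^ 5 by positivity),
              ← ENNReal.ofReal_mul' (show 0 ≤ 16 * L by positivity),
              ← ENNReal.ofReal_mul' (show 0 ≤ (8 * L) ^ n by positivity),
              ← ENNReal.ofReal_mul' (show 0 ≤ (64 * L ^ 2) ^ n by positivity),
              ← ENNReal.ofReal_mul' (show 0 ≤ A * (16384 * L ^ 6) ^ N by positivity)]
            congr 1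
            rw [hK2, mul_assoc _ (2 ^ _) (L0 ^ _), ← mul_pow, ← hLdef]
            simp only [mul_pow, pow_add, pow_mul]
            ring
          · ring
  have hK21 : 1 ≤ ENNReal.ofReal K2 := by
    rw [ENNReal.one_le_ofReal, hK2]
    have p1 : (1:ℝ) ≤ 8 ^ n := one_le_pow₀ (by norm_num)
    have p2 : (1:ℝ) ≤ 64 ^ n := one_le_pow₀ (by norm_num)
    have p3 : (1:ℝ) ≤ 16384 ^ N := one_le_pow₀ (by norm_num)
    have p4 : (1:ℝ) ≤ 2 ^ (11 + 4 * n + 6 * N) := one_le_pow₀ (by norm_num)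
    have p5 : (1:ℝ) ≤ L0 ^ (11 + 4 * n + 6 * N) := one_le_pow₀ hL0
    have p0 : (1:ℝ) ≤ 1024 * 16 := by norm_num
    exact one_le_mul_of_one_le_of_one_le (one_le_mul_of_one_le_of_one_le (one_le_mul_of_one_le_of_one_le
      (one_le_mul_of_one_le_of_one_le (one_le_mul_of_one_le_of_one_le (one_le_mul_of_one_le_of_one_le
      (one_le_mul_of_one_le_of_one_le p0 p1) p2) p1) hA) p3) p4) p5
  have h3 : 0 < 3 + θ := by linarith
  calc volume Ω ^ (1 - (1 + θ) / (3 + θ)) = (volume Ω ^ (2:ℝ)) ^ (1 / (3 + θ)) := by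
        rw [← ENNReal.rpow_mul]; congr 1; field_simp; ring_nf
    _ ≤ (ENNReal.ofReal K2 * e ^ (3 + θ) * m ^ (1 - θ)) ^ (1 / (3 + θ)) := by gcongr
    _ = ENNReal.ofReal K2 ^ (1 / (3 + θ)) * e * m ^ (1 - 2 * ((1 + θ) / (3 + θ))) := by
        rw [ENNReal.mul_rpow_of_nonneg _ _ (by positivity), ENNReal.mul_rpow_of_nonneg _ _ (by positivity),
          ← ENNReal.rpow_mul, ← ENNReal.rpow_mul, mul_one_div_cancel h3.ne', ENNReal.rpow_one]
        congr 2; field_simp; ring_nf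
    _ ≤ _ := by
        gcongr
        apply rpow_self_le _ hK21
        rw [div_le_one h3]; linarith


lemma KK_base (n : ℕ) : KK n (1 / 2) := by
  refine ⟨2 * 4 ^ n, ?_, n + 2, ?_⟩
  · nlinarith [one_le_pow₀ (show (1:ℝ) ≤ 4 by norm_num) (n := n)]
  intro L hL e m he hm E Ω hE hΩ hEe hΩm hd
  have hL0 : 0 < L := by linarith
  set c : ℝ := 1 / (4 * L) with hc
  have hc0 : 0 < c := by rw [hc]; positivity
  set F : ℝ → ℝ≥0∞ := fun t => volume {X | (X, t) ∈ E} with hF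
  have mF : Measurable F := measurable_measure_prodMk_right hE
  have iF : ∫⁻ t, F t ≤ e := by
    refine le_trans (le_of_eq ?_) hEe
    rw [Measure.volume_eq_prod, Measure.prod_apply_symm hE]; rfl
  set Q : Set ((Euc n × Euc n) × (ℝ × ℝ)) := {p | p.1 ∈ Ω ∧ p.2.1 ∈ tset E p.1.1 p.1.2 ∧
    p.2.2 ∈ tset E p.1.1 p.1.2 ∧ c ≤ |p.2.2 - p.2.1|} with hQ
  have mT : MeasurableSet {p : (Euc n × Euc n) × ℝ | p.2 ∈ tset E p.1.1 p.1.2} :=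
    (measurable_snd measurableSet_Ioc).inter
    ((by fun_prop : Measurable (fun p : (Euc n × Euc n) × ℝ => (p.1.1 + p.2 • p.1.2, p.2))) hE)
  have mQ : MeasurableSet Q := by
    refine (measurable_fst hΩ).inter (MeasurableSet.inter ?_ (MeasurableSet.inter ?_ ?_))
    · exact (by fun_prop : Measurable (fun p : (Euc n × Euc n) × (ℝ × ℝ) => (p.1, p.2.1))) mT
    · exact (by fun_prop : Measurable (fun p : (Euc n × Euc n) × (ℝ × ℝ) => (p.1, p.2.2))) mT
    · exact measurableSet_le (f := fun _ => c) (g := fun p : (Euc n × Euc n) × (ℝ × ℝ) => |p.2.2 - p.2.1|)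
        measurable_const (by fun_prop)
  have e1 := Measure.prod_apply (μ := (volume : Measure (Euc n × Euc n)))
      (ν := (volume : Measure (ℝ × ℝ))) mQ
  have e2 := Measure.prod_apply_symm (μ := (volume : Measure (Euc n × Euc n)))
      (ν := (volume : Measure (ℝ × ℝ))) mQ
  have k1 : ENNReal.ofReal (1 / (2 * L ^ 2)) * volume Ω ≤ ∫⁻ g, volume (Prod.mk g ⁻¹' Q) := by
    calc _ = ∫⁻ g, Ω.indicator (fun _ => ENNReal.ofReal (1 / (2 * L ^ 2))) g := by
          rw [lintegral_indicator hΩ, setLIntegral_const]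
      _ ≤ _ := by
        apply lintegral_mono
        intro g
        by_cases hg : g ∈ Ω
        · rw [Set.indicator_of_mem hg]
          have mT1 := measurableSet_tset E hE g.1 g.2
          have mQg : MeasurableSet (Prod.mk g ⁻¹' Q) := measurable_prodMk_left mQ
          beta_reduce
          rw [Measure.volume_eq_prod, Measure.prod_apply mQg]
          calc ENNReal.ofReal (1 / (2 * L ^ 2)) ≤ ENNReal.ofReal (1 / (2 * L)) * volume (tset E g.1 g.2) := by
                refine le_trans ?_ (mul_le_mul_right (hd g hg) _)
                rw [← ENNReal.ofReal_mul (by positivity)]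
                apply ENNReal.ofReal_le_ofReal
                apply le_of_eq; field_simp
            _ = ∫⁻ s, (tset E g.1 g.2).indicator (fun _ => ENNReal.ofReal (1 / (2 * L))) s := by
                rw [lintegral_indicator mT1, setLIntegral_const]
            _ ≤ _ := by
                apply lintegral_mono
                intro s
                by_cases hs : s ∈ tset E g.1 g.2
                · rw [Set.indicator_of_mem hs]
                  refine le_trans ?_ ((vol_rem _ (1 / L) c s hc0 (hd g hg)).trans (measure_mono ?_))
                  · apply ENNReal.ofReal_le_ofReal
                    rw [hc]; apply le_of_eq; field_simp; norm_num
                  · intro t ht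
                    exact ⟨hg, hs, ht.1, ht.2⟩
                · rw [Set.indicator_of_notMem hs]; exact zero_le
        · rw [Set.indicator_of_notMem hg]; exact zero_le
  have k2 : ∀ p : ℝ × ℝ, volume ((fun g : Euc n × Euc n => (g, p)) ⁻¹' Q) ≤
      ENNReal.ofReal ((4 * L) ^ n) * (F p.1 * F p.2) := by
    intro p
    by_cases hp : c ≤ |p.2 - p.1|
    swap
    · have : (fun g : Euc n × Euc n => (g, p)) ⁻¹' Q = ∅ := by
        ext z
        simp only [Set.mem_preimage, Set.mem_empty_iff_false, iff_false]
        intro h; exact hp h.2.2.2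
      rw [this]; simp
    have hp0 : p.2 - p.1 ≠ 0 := by intro h; rw [h, abs_zero] at hp; linarith
    have ms : ∀ t, MeasurableSet {X | (X, t) ∈ E} := fun t =>
      (by fun_prop : Measurable (fun X : Euc n => (X, t))) hE
    set A : Set (Euc n × Euc n) := {g | g.1 ∈ {X | (X, p.1) ∈ E} ∧
      g.1 + (p.2 - p.1) • g.2 ∈ {X | (X, p.2) ∈ E}} with hA
    have mA : MeasurableSet A := (measurable_fst (ms _)).inter
      ((by fun_prop : Measurable (fun g : Euc n × Euc n => g.1 + (p.2 - p.1) • g.2)) (ms _))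
    calc _ ≤ volume {g : Euc n × Euc n | (g.1 + p.1 • g.2, g.2) ∈ A} := by
          apply measure_mono
          intro g hg
          refine ⟨hg.2.1.2, ?_⟩
          have := hg.2.2.1.2
          simp only [Set.mem_ofPred_eq]
          rw [add_assoc, ← add_smul, add_sub_cancel]
          exact this
      _ = volume A := vol_shear _ _ mA
      _ = ∫⁻ P, volume (Prod.mk P ⁻¹' A) := by
          rw [Measure.volume_eq_prod, Measure.prod_apply mA]
      _ ≤ ∫⁻ P, ({X | (X, p.1) ∈ E} : Set (Euc n)).indicator (fun _ => ENNReal.ofReal ((4 * L) ^ n) * F p.2) P := by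
          apply lintegral_mono
          intro P
          by_cases hP : P ∈ {X | (X, p.1) ∈ E}
          · rw [Set.indicator_of_mem hP]
            have h1 := vol_aff (p.2 - p.1) hp0 P _ (ms p.2)
            refine (measure_mono (fun ξ hξ => hξ.2)).trans (h1.le.trans ?_)
            gcongr
            rw [inv_le_comm₀ (by positivity) (by positivity)]
            refine le_trans (le_of_eq ?_) hp
            rw [hc]; field_simp
          · rw [Set.indicator_of_notMem hP]
            have : Prod.mk P ⁻¹' A = ∅ := by
              ext z
              simp only [Set.mem_preimage, Set.mem_empty_iff_false, iff_false]
              intro h; exact hP h.1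
            beta_reduce; rw [this]; simp
      _ = _ := by
          rw [lintegral_indicator (ms _), setLIntegral_const]; simp only [hF]; ring
  have k3 : ENNReal.ofReal (1 / (2 * L ^ 2)) * volume Ω ≤ ENNReal.ofReal ((4 * L) ^ n) * (e * e) := by
    refine k1.trans ((e1.symm.trans e2).le.trans ((lintegral_mono k2).trans ?_))
    rw [lintegral_const_mul' _ _ ENNReal.ofReal_ne_top]
    gcongr
    rw [Measure.volume_eq_prod, lintegral_prod_mul mF.aemeasurable mF.aemeasurable]
    gcongr
  have k4 : volume Ω ≤ ENNReal.ofReal (2 * 4 ^ n * L ^ (n + 2)) * e ^ (2:ℝ) := by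
    calc volume Ω = ENNReal.ofReal (2 * L ^ 2) * (ENNReal.ofReal (1 / (2 * L ^ 2)) * volume Ω) := by
          rw [← mul_assoc, ← ENNReal.ofReal_mul (by positivity), mul_one_div_cancel (by positivity)]
          simp
      _ ≤ ENNReal.ofReal (2 * L ^ 2) * (ENNReal.ofReal ((4 * L) ^ n) * (e * e)) := by gcongr
      _ = _ := by
          rw [← mul_assoc, ← ENNReal.ofReal_mul (by positivity), ENNReal.rpow_two, pow_two e]
          congr 2; rw [mul_pow, pow_add]; ring
  have h1 : 1 ≤ ENNReal.ofReal (2 * 4 ^ n * L ^ (n + 2)) := by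
    rw [ENNReal.one_le_ofReal]
    refine one_le_mul_of_one_le_of_one_le ?_ (one_le_pow₀ hL)
    nlinarith [one_le_pow₀ (show (1:ℝ) ≤ 4 by norm_num) (n := n)]
  calc volume Ω ^ (1 - 1 / 2 : ℝ) ≤ (ENNReal.ofReal (2 * 4 ^ n * L ^ (n + 2)) * e ^ (2:ℝ)) ^ (1 / 2 : ℝ) := by
        rw [show (1 - 1 / 2 : ℝ) = 1 / 2 by norm_num]; gcongr
    _ = ENNReal.ofReal (2 * 4 ^ n * L ^ (n + 2)) ^ (1 / 2 : ℝ) * e := by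
        rw [ENNReal.mul_rpow_of_nonneg _ _ (by norm_num), ← ENNReal.rpow_mul]; norm_num
    _ ≤ ENNReal.ofReal (2 * 4 ^ n * L ^ (n + 2)) * e := by
        gcongr; exact rpow_self_le _ h1 _ (by norm_num)
    _ = _ := by norm_num

lemma KK_iter (n : ℕ) (δ : ℝ) (hδ : 0 < δ) : ∃ θ : ℝ, √2 - 1 ≤ θ ∧ θ ≤ √2 - 1 + δ ∧ θ ≤ 1 / 2 ∧ KK n θ := by
  have s1 : √2 ^ 2 = 2 := Real.sq_sqrt (by norm_num)
  have s0 : 0 ≤ √2 := Real.sqrt_nonneg 2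
  have s2 : 1.4 ≤ √2 := by nlinarith
  have s3 : √2 ≤ 1.5 := by nlinarith
  have key : ∀ k : ℕ, ∃ θ : ℝ, √2 - 1 ≤ θ ∧ θ ≤ √2 - 1 + (1 / 2) ^ k ∧ θ ≤ 1 / 2 ∧ KK n θ := by
    intro k
    induction k with
    | zero => exact ⟨1 / 2, by linarith, by norm_num; linarith, le_rfl, KK_base n⟩
    | succ k ih =>
      obtain ⟨θ, a1, a2, a3, a4⟩ := ih
      have h3 : 0 < 3 + θ := by linarith
      refine ⟨(1 + θ) / (3 + θ), ?_, ?_, ?_, KK_step n θ (by linarith) a3 a4⟩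
      · rw [le_div_iff₀ h3]; nlinarith
      · rw [div_le_iff₀ h3, pow_succ]
        nlinarith [pow_pos (show (0:ℝ) < 1 / 2 by norm_num) k]
      · rw [div_le_iff₀ h3]; linarith
  obtain ⟨k, hk⟩ := exists_pow_lt_of_lt_one hδ (show (1 / 2 : ℝ) < 1 by norm_num)
  obtain ⟨θ, a1, a2, a3, a4⟩ := key k
  exact ⟨θ, a1, by linarith, a3, a4⟩


lemma measurable_tsetvol {n : ℕ} (E : Set (Euc n × ℝ)) (hE : MeasurableSet E) :
    Measurable (fun g : Euc n × Euc n => volume (tset E g.1 g.2)) := by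
  have mT : MeasurableSet {p : (Euc n × Euc n) × ℝ | p.2 ∈ tset E p.1.1 p.1.2} :=
    (measurable_snd measurableSet_Ioc).inter
    ((by fun_prop : Measurable (fun p : (Euc n × Euc n) × ℝ => (p.1.1 + p.2 • p.1.2, p.2))) hE)
  exact measurable_measure_prodMk_left mT

lemma lint_tsetvol {n : ℕ} (E : Set (Euc n × ℝ)) (hE : MeasurableSet E) (ξ : Euc n) :
    ∫⁻ x, volume (tset E x ξ) ≤ volume E := by
  have mT : MeasurableSet {p : Euc n × ℝ | p.2 ∈ tset E p.1 ξ} :=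
    (measurable_snd measurableSet_Ioc).inter
    ((by fun_prop : Measurable (fun p : Euc n × ℝ => (p.1 + p.2 • ξ, p.2))) hE)
  have e1 := Measure.prod_apply (μ := (volume : Measure (Euc n))) (ν := (volume : Measure ℝ)) mT
  have e2 := Measure.prod_apply_symm (μ := (volume : Measure (Euc n))) (ν := (volume : Measure ℝ)) mT
  have e3 : ∫⁻ x, volume (tset E x ξ) = ∫⁻ t : ℝ, volume ((fun x : Euc n => (x, t)) ⁻¹' {p : Euc n × ℝ | p.2 ∈ tset E p.1 ξ}) :=
    e1.symm.trans e2
  rw [e3, Measure.volume_eq_prod, Measure.prod_apply_symm hE]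
  apply lintegral_mono
  intro t
  have := measure_preimage_add_right (volume : Measure (Euc n)) (t • ξ) {P | (P, t) ∈ E}
  refine le_trans ?_ this.le
  exact measure_mono (fun x hx => hx.2)

lemma lemF1 (n : ℕ) (θ : ℝ) (h0 : 0 < θ) (h1 : θ ≤ 1 / 2) (h : KK n θ) (β : ℝ) (hβ : θ / (1 - θ) < β)
    (hβ1 : β ≤ 1) :
    ∃ A : ℝ, 0 < A ∧ ∃ N : ℕ, ∀ (L : ℝ) (_ : 1 ≤ L) (e : ℝ≥0∞) (_ : e ≠ ⊤)
      (E : Set (Euc n × ℝ)), MeasurableSet E → volume E ≤ e →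
      ∫⁻ ξ, volume {x | ENNReal.ofReal (1 / L) ≤ volume (tset E x ξ)} ^ β ≤
        ENNReal.ofReal (A * L ^ N) * e ^ (1 + β) := by
  obtain ⟨A, hA, N, hK⟩ := h
  have hθ1 : 0 < 1 - θ := by linarith
  set γ := θ / (1 - θ) with hγ
  have hγ0 : 0 < γ := by positivity
  have hγ1 : γ ≤ 1 := by rw [hγ, div_le_one hθ1]; linarith
  have hγe : 1 / (1 - θ) = 1 + γ := by rw [hγ]; field_simp; ring
  have hγe2 : (1 - 2 * θ) / (1 - θ) = 1 - γ := by rw [hγ]; field_simp; ring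
  set ρ : ℝ≥0∞ := (2⁻¹ : ℝ≥0∞) ^ (β - γ) with hρ
  have hρ1 : ρ < 1 := ENNReal.rpow_lt_one (by norm_num) (by linarith)
  set S : ℝ≥0∞ := ∑' i : ℕ, ρ ^ i with hS
  have hSt : S ≠ ⊤ := by
    rw [hS, ENNReal.tsum_geometric]
    exact ENNReal.inv_ne_top.mpr (tsub_pos_of_lt hρ1).ne'
  have hS1 : 1 ≤ S := by
    rw [hS]; refine le_trans ?_ (ENNReal.le_tsum 0); simp
  have hSr : 0 < S.toReal := ENNReal.toReal_pos (by intro h; rw [h] at hS1; simp at hS1) hSt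
  refine ⟨2 * A ^ 2 * S.toReal, by positivity, 2 * N + 1, ?_⟩
  intro L hL e he E hE hEe
  have hL0 : 0 < L := by linarith
  set l := ENNReal.ofReal (1 / L) with hl
  set D : Set (Euc n × Euc n) := {g | l ≤ volume (tset E g.1 g.2)} with hD
  have mD : MeasurableSet D := measurableSet_le measurable_const (measurable_tsetvol E hE)
  set μ : Euc n → ℝ≥0∞ := fun ξ => volume {x | l ≤ volume (tset E x ξ)} with hμ
  have mμ : Measurable μ := measurable_measure_prodMk_right mD
  set M0 := ENNReal.ofReal L * e with hM0
  have M0t : M0 ≠ ⊤ := ENNReal.mul_ne_top ENNReal.ofReal_ne_top he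
  have hμM : ∀ ξ, μ ξ ≤ M0 := by
    intro ξ
    have hm : Measurable (fun x => volume (tset E x ξ)) :=
      (measurable_tsetvol E hE).comp (by fun_prop : Measurable (fun x : Euc n => (x, ξ)))
    have h2 := (mul_meas_ge_le_lintegral hm l (μ := volume)).trans ((lint_tsetvol E hE ξ).trans hEe)
    calc μ ξ = ENNReal.ofReal L * (l * μ ξ) := by
          rw [← mul_assoc, hl, ← ENNReal.ofReal_mul (by positivity), mul_one_div_cancel (by positivity)]
          simp
      _ ≤ _ := by rw [hM0]; gcongr
  by_cases he0 : e = 0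
  · have : ∀ ξ, μ ξ = 0 := fun ξ => by
      have := hμM ξ
      rw [hM0, he0, mul_zero] at this
      exact le_antisymm this zero_le
    change ∫⁻ ξ, μ ξ ^ β ≤ _
    simp [this, ENNReal.zero_rpow_of_pos (show 0 < β by linarith)]
  have M00 : M0 ≠ 0 := by
    rw [hM0]; refine mul_ne_zero ?_ he0
    simp; linarith
  set ms : ℕ → ℝ≥0∞ := fun i => 2⁻¹ ^ i * M0 with hms
  have ms0 : ∀ i, ms i ≠ 0 := fun i => mul_ne_zero (by simp) M00
  have mst : ∀ i, ms i ≠ ⊤ := fun i => ENNReal.mul_ne_top (by simp) M0t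
  have mss : ∀ i, ms (i + 1) = ms i * 2⁻¹ := fun i => by simp only [hms, pow_succ]; ring
  set X : ℕ → Set (Euc n) := fun i => {ξ | ms (i + 1) < μ ξ ∧ μ ξ ≤ ms i} with hX
  have mX : ∀ i, MeasurableSet (X i) := fun i =>
    (measurableSet_lt measurable_const mμ).inter (measurableSet_le mμ measurable_const)
  have pt : ∀ ξ, μ ξ ^ β ≤ ∑' i, (X i).indicator (fun _ => ms i ^ β) ξ := by
    intro ξ
    by_cases hz : μ ξ = 0
    · rw [hz, ENNReal.zero_rpow_of_pos (by linarith)]; exact zero_le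
    have hex : ∃ i, ms (i + 1) < μ ξ := by
      obtain ⟨k, hk⟩ := ENNReal.exists_inv_two_pow_lt (ENNReal.div_ne_zero.mpr ⟨hz, M0t⟩)
      refine ⟨k, ?_⟩
      have h3 : ms k < μ ξ := (ENNReal.lt_div_iff_mul_lt (Or.inl M00) (Or.inl M0t)).mp hk
      refine lt_of_le_of_lt ?_ h3
      rw [mss]
      calc ms k * 2⁻¹ ≤ ms k * 1 := by gcongr; norm_num
        _ = _ := mul_one _
    classical
    have hmem : ξ ∈ X (Nat.find hex) := by
      refine ⟨Nat.find_spec hex, ?_⟩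
      rcases hi : Nat.find hex with _ | i
      · simp only [hms, pow_zero, one_mul]; exact hμM ξ
      · exact not_lt.mp (Nat.find_min hex (m := i) (by omega))
    refine le_trans ?_ (ENNReal.le_tsum (Nat.find hex))
    rw [Set.indicator_of_mem hmem]
    exact ENNReal.rpow_le_rpow hmem.2 (by linarith)
  set K0 : ℝ≥0∞ := ENNReal.ofReal (A * L ^ N) with hK0
  have hK01 : 1 ≤ K0 := by
    rw [hK0, ENNReal.one_le_ofReal]
    exact one_le_mul_of_one_le_of_one_le hA (one_le_pow₀ hL)
  have vX : ∀ i, ms i * volume (X i) ≤ 2 * (K0 ^ 2 * e ^ (1 + γ) * ms i ^ (1 - γ)) := by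
    intro i
    set Ω : Set (Euc n × Euc n) := D ∩ {g | g.2 ∈ X i} with hΩ
    have mΩ : MeasurableSet Ω := mD.inter (measurable_snd (mX i))
    have fib : ∀ ξ, volume {x | (x, ξ) ∈ Ω} ≤ ms i := by
      intro ξ
      by_cases hξ : ξ ∈ X i
      · exact (measure_mono (fun x hx => hx.1)).trans hξ.2
      · have : {x | (x, ξ) ∈ Ω} = ∅ := by
          ext x
          simp only [Set.mem_ofPred_eq, Set.mem_empty_iff_false, iff_false]
          intro h; exact hξ h.2
        rw [this]; simp
    have k1 := hK L hL e (ms i) he (mst i) E Ω hE mΩ hEe fib (fun g hg => hg.1)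
    have k2 : ms i * 2⁻¹ * volume (X i) ≤ volume Ω := by
      rw [← mss, Measure.volume_eq_prod, Measure.prod_apply_symm mΩ]
      calc _ = ∫⁻ ξ, (X i).indicator (fun _ => ms (i + 1)) ξ := by
            rw [lintegral_indicator (mX i), setLIntegral_const]
        _ ≤ _ := by
            apply lintegral_mono
            intro ξ
            by_cases hξ : ξ ∈ X i
            · rw [Set.indicator_of_mem hξ]
              refine hξ.1.le.trans (measure_mono ?_)
              intro x hx
              exact ⟨hx, hξ⟩
            · rw [Set.indicator_of_notMem hξ]; exact zero_le
    calc ms i * volume (X i) = 2 * (ms i * 2⁻¹ * volume (X i)) := by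
          have h2 : (2:ℝ≥0∞) * 2⁻¹ = 1 := ENNReal.mul_inv_cancel (by norm_num) (by norm_num)
          calc ms i * volume (X i) = (2 * 2⁻¹) * (ms i * volume (X i)) := by rw [h2, one_mul]
            _ = _ := by ring
      _ ≤ 2 * volume Ω := by gcongr
      _ = 2 * (volume Ω ^ (1 - θ)) ^ (1 / (1 - θ)) := by
          rw [← ENNReal.rpow_mul, mul_one_div_cancel hθ1.ne', ENNReal.rpow_one]
      _ ≤ 2 * (K0 * e * ms i ^ (1 - 2 * θ)) ^ (1 / (1 - θ)) := by gcongr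
      _ = 2 * (K0 ^ (1 + γ) * e ^ (1 + γ) * ms i ^ (1 - γ)) := by
          rw [ENNReal.mul_rpow_of_nonneg _ _ (by positivity), ENNReal.mul_rpow_of_nonneg _ _ (by positivity),
            ← ENNReal.rpow_mul, mul_one_div, hγe2, hγe]
      _ ≤ _ := by
          gcongr
          rw [← ENNReal.rpow_natCast]
          apply ENNReal.rpow_le_rpow_of_exponent_le hK01
          norm_num; linarith
  have vX2 : ∀ i, ms i ^ β * volume (X i) ≤ 2 * K0 ^ 2 * e ^ (1 + γ) * (M0 ^ (β - γ) * ρ ^ i) := by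
    intro i
    calc ms i ^ β * volume (X i) = ms i ^ (β - 1) * (ms i * volume (X i)) := by
          rw [← mul_assoc]
          congr 1
          conv_lhs => rw [show β = (β - 1) + 1 by ring, ENNReal.rpow_add _ _ (ms0 i) (mst i), ENNReal.rpow_one]
      _ ≤ ms i ^ (β - 1) * (2 * (K0 ^ 2 * e ^ (1 + γ) * ms i ^ (1 - γ))) :=
          mul_le_mul_right (vX i) _
      _ = 2 * K0 ^ 2 * e ^ (1 + γ) * (ms i ^ (β - 1) * ms i ^ (1 - γ)) := by ring
      _ = _ := by
          rw [← ENNReal.rpow_add _ _ (ms0 i) (mst i), show β - 1 + (1 - γ) = β - γ by ring]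
          simp only [hms]
          have h5 : ((2⁻¹ : ℝ≥0∞) ^ i) ^ (β - γ) = ρ ^ i := by
            rw [hρ, ← ENNReal.rpow_natCast, ← ENNReal.rpow_natCast,
              ← ENNReal.rpow_mul, ← ENNReal.rpow_mul, mul_comm (i:ℝ)]
          rw [ENNReal.mul_rpow_of_nonneg _ _ (by linarith), h5]
          ring
  calc ∫⁻ ξ, μ ξ ^ β ≤ ∫⁻ ξ, ∑' i, (X i).indicator (fun _ => ms i ^ β) ξ := lintegral_mono pt
    _ = ∑' i, ms i ^ β * volume (X i) := by
        rw [lintegral_tsum (fun i => (measurable_const.indicator (mX i)).aemeasurable)]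
        congr 1; ext i
        rw [lintegral_indicator (mX i), setLIntegral_const]
    _ ≤ ∑' i, 2 * K0 ^ 2 * e ^ (1 + γ) * (M0 ^ (β - γ) * ρ ^ i) := ENNReal.tsum_le_tsum vX2
    _ = 2 * K0 ^ 2 * S * (e ^ (1 + γ) * M0 ^ (β - γ)) := by
        rw [ENNReal.tsum_mul_left, ENNReal.tsum_mul_left]; ring
    _ ≤ 2 * K0 ^ 2 * S * (e ^ (1 + γ) * (ENNReal.ofReal L * e ^ (β - γ))) := by
        rw [hM0, ENNReal.mul_rpow_of_nonneg _ _ (by linarith)]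
        gcongr
        exact rpow_self_le _ (by rw [ENNReal.one_le_ofReal]; exact hL) _ (by linarith)
    _ = 2 * K0 ^ 2 * S * ENNReal.ofReal L * (e ^ (1 + γ) * e ^ (β - γ)) := by ring
    _ = _ := by
        rw [← ENNReal.rpow_add_of_nonneg _ _ (by linarith) (by linarith)]
        congr 1
        · rw [hK0, ← ENNReal.ofReal_pow (by positivity)]
          conv_lhs => rw [← ENNReal.ofReal_toReal hSt, show (2:ℝ≥0∞) = ENNReal.ofReal 2 by simp]
          rw [← ENNReal.ofReal_mul (by positivity), ← ENNReal.ofReal_mul (by positivity),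
            ← ENNReal.ofReal_mul (by positivity)]
          congr 1
          ring
        · congr 1; ring


lemma tsum_rpow_le {ι : Type*} (a : ι → ℝ≥0∞) (β : ℝ) (h0 : 0 < β) (h1 : β ≤ 1) :
    (∑' i, a i) ^ β ≤ ∑' i, a i ^ β := by
  rw [← ENNReal.le_rpow_inv_iff h0, ENNReal.tsum_eq_iSup_sum]
  apply iSup_le
  intro s
  rw [ENNReal.le_rpow_inv_iff h0]
  refine le_trans ?_ (ENNReal.sum_le_tsum s)
  classical
  induction s using Finset.induction_on with
  | empty => simp [h0]
  | insert i s hi ih =>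
    rw [Finset.sum_insert hi, Finset.sum_insert hi]
    exact (ENNReal.rpow_add_le_add_rpow _ _ h0.le h1).trans (add_le_add le_rfl ih)

lemma tsetvol_le_one {n : ℕ} (E : Set (Euc n × ℝ)) (x ξ : Euc n) : volume (tset E x ξ) ≤ 1 := by
  refine (measure_mono (fun t ht => ht.1 : tset E x ξ ⊆ Set.Ioc (0:ℝ) 1)).trans ?_
  simp

lemma lemF2 (n : ℕ) (β : ℝ) (hβ : 0 < β) (hβ1 : β ≤ 1) (A : ℝ) (hA : 0 < A) (N : ℕ)
    (hF : ∀ (L : ℝ) (_ : 1 ≤ L) (e : ℝ≥0∞) (_ : e ≠ ⊤)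
      (E : Set (Euc n × ℝ)), MeasurableSet E → volume E ≤ e →
      ∫⁻ ξ, volume {x | ENNReal.ofReal (1 / L) ≤ volume (tset E x ξ)} ^ β ≤
        ENNReal.ofReal (A * L ^ N) * e ^ (1 + β))
    (r : ℝ) (hr : r * β = N + 2) (e : ℝ≥0∞) (he : e ≠ ⊤)
    (E : Set (Euc n × ℝ)) (hE : MeasurableSet E) (hEe : volume E ≤ e) :
    ∫⁻ ξ, (∫⁻ x, volume (tset E x ξ) ^ r) ^ β ≤ ENNReal.ofReal (A * 2 ^ N * 2) * e ^ (1 + β) := by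
  have hr0 : 0 < r := by
    have : 0 < r * β := by rw [hr]; positivity
    exact (pos_iff_pos_of_mul_pos this).mpr hβ
  set w : ℕ → ℝ≥0∞ := fun j => ENNReal.ofReal (1 / 2 ^ j) with hw
  set D : ℕ → Set (Euc n × Euc n) := fun j => {g | w (j + 1) ≤ volume (tset E g.1 g.2)} with hD
  have mD : ∀ j, MeasurableSet (D j) := fun j => measurableSet_le measurable_const (measurable_tsetvol E hE)
  have mDx : ∀ j ξ, MeasurableSet {x | w (j + 1) ≤ volume (tset E x ξ)} := fun j ξ =>
    (by fun_prop : Measurable (fun x : Euc n => (x, ξ))) (mD j)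
  have pt : ∀ x ξ, volume (tset E x ξ) ^ r ≤
      ∑' j, ({x | w (j + 1) ≤ volume (tset E x ξ)} : Set (Euc n)).indicator (fun _ => w j ^ r) x := by
    intro x ξ
    by_cases hz : volume (tset E x ξ) = 0
    · rw [hz, ENNReal.zero_rpow_of_pos hr0]; exact zero_le
    have hwp : ∀ j, w j = 2⁻¹ ^ j := by
      intro j
      simp only [hw]
      rw [one_div, ENNReal.ofReal_inv_of_pos (by positivity), ENNReal.ofReal_pow (by norm_num), ENNReal.inv_pow]
      simp
    have hex : ∃ j, w (j + 1) ≤ volume (tset E x ξ) := by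
      obtain ⟨k, hk⟩ := ENNReal.exists_inv_two_pow_lt hz
      refine ⟨k, le_trans ?_ hk.le⟩
      rw [hwp, pow_succ]
      calc (2⁻¹ : ℝ≥0∞) ^ k * 2⁻¹ ≤ 2⁻¹ ^ k * 1 := by gcongr; norm_num
        _ = _ := mul_one _
    classical
    refine le_trans ?_ (ENNReal.le_tsum (Nat.find hex))
    rw [Set.indicator_of_mem (show x ∈ {x | w (Nat.find hex + 1) ≤ volume (tset E x ξ)} from Nat.find_spec hex)]
    refine ENNReal.rpow_le_rpow ?_ hr0.le
    rcases hi : Nat.find hex with _ | i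
    · refine (tsetvol_le_one E x ξ).trans ?_
      simp [hw]
    · exact (not_le.mp (Nat.find_min hex (m := i) (by omega))).le
  have in1 : ∀ ξ, (∫⁻ x, volume (tset E x ξ) ^ r) ^ β ≤
      ∑' j, w j ^ (N + 2) * volume {x | w (j + 1) ≤ volume (tset E x ξ)} ^ β := by
    intro ξ
    calc _ ≤ (∫⁻ x, ∑' j, ({x | w (j + 1) ≤ volume (tset E x ξ)} : Set (Euc n)).indicator (fun _ => w j ^ r) x) ^ β := by
          refine ENNReal.rpow_le_rpow (lintegral_mono (fun x => pt x ξ)) hβ.le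
      _ = (∑' j, w j ^ r * volume {x | w (j + 1) ≤ volume (tset E x ξ)}) ^ β := by
          rw [lintegral_tsum (fun j => (measurable_const.indicator (mDx j ξ)).aemeasurable)]
          congr 2; ext j
          rw [lintegral_indicator (mDx j ξ), setLIntegral_const]
      _ ≤ ∑' j, (w j ^ r * volume {x | w (j + 1) ≤ volume (tset E x ξ)}) ^ β := tsum_rpow_le _ _ hβ hβ1
      _ = _ := by
          congr 1; ext j
          rw [ENNReal.mul_rpow_of_nonneg _ _ hβ.le, ← ENNReal.rpow_mul, hr, ← ENNReal.rpow_natCast]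
          norm_num
  have mμ : ∀ j, Measurable (fun ξ => volume {x | w (j + 1) ≤ volume (tset E x ξ)}) := fun j =>
    measurable_measure_prodMk_right (mD j)
  calc _ ≤ ∫⁻ ξ, ∑' j, w j ^ (N + 2) * volume {x | w (j + 1) ≤ volume (tset E x ξ)} ^ β := lintegral_mono in1
    _ = ∑' j, w j ^ (N + 2) * ∫⁻ ξ, volume {x | w (j + 1) ≤ volume (tset E x ξ)} ^ β := by
        rw [lintegral_tsum (fun j => (((mμ j).pow_const β).const_mul _).aemeasurable)]
        congr 1; ext j
        rw [lintegral_const_mul _ ((mμ j).pow_const β)]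
    _ ≤ ∑' j, w j ^ (N + 2) * (ENNReal.ofReal (A * (2 ^ (j + 1)) ^ N) * e ^ (1 + β)) := by
        refine ENNReal.tsum_le_tsum (fun j => mul_le_mul_right (hF _ (one_le_pow₀ (by norm_num)) e he E hE hEe) _)
    _ ≤ ∑' j : ℕ, (ENNReal.ofReal (A * 2 ^ N) * e ^ (1 + β)) * 2⁻¹ ^ j := by
        refine ENNReal.tsum_le_tsum (fun j => ?_)
        have h2 : (2⁻¹ : ℝ≥0∞) ^ j = ENNReal.ofReal (1 / 2 ^ j) := by
          rw [one_div, ENNReal.ofReal_inv_of_pos (by positivity), ENNReal.ofReal_pow (by norm_num), ENNReal.inv_pow]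
          simp
        have h3 : w j ^ (N + 2) * ENNReal.ofReal (A * (2 ^ (j + 1)) ^ N) ≤ ENNReal.ofReal (A * 2 ^ N) * 2⁻¹ ^ j := by
          rw [h2]
          simp only [hw]
          rw [← ENNReal.ofReal_pow (by positivity), ← ENNReal.ofReal_mul (by positivity),
            ← ENNReal.ofReal_mul (by positivity)]
          apply ENNReal.ofReal_le_ofReal
          have h4 : (1 / 2 ^ j : ℝ) ^ (N + 2) * (A * (2 ^ (j + 1)) ^ N) = A * 2 ^ N * (1 / 2 ^ j) * (1 / 2 ^ j) := by
            rw [pow_succ (2:ℝ) j, mul_pow, pow_add]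
            field_simp
            rw [← mul_pow, one_div_mul_cancel (by positivity), one_pow]
          rw [h4]
          have h5 : (1 / 2 ^ j : ℝ) ≤ 1 := by
            rw [div_le_one (by positivity)]; exact one_le_pow₀ (by norm_num)
          exact mul_le_of_le_one_right (by positivity) h5
        calc _ = (w j ^ (N + 2) * ENNReal.ofReal (A * (2 ^ (j + 1)) ^ N)) * e ^ (1 + β) := by ring
          _ ≤ (ENNReal.ofReal (A * 2 ^ N) * 2⁻¹ ^ j) * e ^ (1 + β) := by gcongr
          _ = _ := by ring
    _ = _ := by
        rw [ENNReal.tsum_mul_left, ENNReal.tsum_geometric, ENNReal.one_sub_inv_two, inv_inv,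
          ENNReal.ofReal_mul (q := 2) (by positivity)]
        simp only [ENNReal.ofReal_ofNat]
        ring

lemma lemF2' {n : ℕ} (β : ℝ) (hβ : 0 < β) (r : ℝ) (hr : 1 ≤ r) (e : ℝ≥0∞) (C : ℝ)
    (E : Set (Euc n × ℝ)) (hE : MeasurableSet E) (hEe : volume E ≤ e) :
    ∫⁻ ξ in Metric.ball (0 : Euc n) C, (∫⁻ x, volume (tset E x ξ) ^ r) ^ β ≤
      volume (Metric.ball (0 : Euc n) C) * e ^ β := by
  rw [mul_comm, ← setLIntegral_const]
  apply lintegral_mono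
  intro ξ
  refine ENNReal.rpow_le_rpow (le_trans ?_ ((lint_tsetvol E hE ξ).trans hEe)) hβ.le
  apply lintegral_mono
  intro x
  calc volume (tset E x ξ) ^ r ≤ volume (tset E x ξ) ^ (1:ℝ) :=
        ENNReal.rpow_le_rpow_of_exponent_ge (tsetvol_le_one E x ξ) hr
    _ = _ := by simp


lemma sumfin (κ : ℝ) (hκ : 0 < κ) : ∑' j : ℤ, (2:ℝ≥0∞) ^ (-(κ * |(j:ℝ)|)) ≠ ⊤ := by
  have h1 : Summable (fun j : ℤ => (2:ℝ) ^ (-(κ * |(j:ℝ)|))) := by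
    have h2 : Summable (fun k : ℕ => (2:ℝ) ^ (-(κ * (k:ℝ)))) := by
      have h3 : ∀ k : ℕ, (2:ℝ) ^ (-(κ * (k:ℝ))) = ((2:ℝ) ^ (-κ)) ^ k := by
        intro k
        rw [← Real.rpow_natCast, ← Real.rpow_mul (by norm_num)]; congr 1; ring
      simp only [h3]
      apply summable_geometric_of_lt_one (by positivity)
      exact Real.rpow_lt_one_of_one_lt_of_neg (by norm_num) (by linarith)
    apply Summable.of_nat_of_neg
    · simpa using h2
    · simpa using h2
  have := h1.tsum_ofReal_ne_top
  convert this using 3 with j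
  rw [← ENNReal.ofReal_rpow_of_pos (by norm_num)]
  simp

lemma wsum {ι : Type*} (b ω : ι → ℝ≥0∞) (h0 : ∀ i, ω i ≠ 0) (ht : ∀ i, ω i ≠ ⊤) (r : ℝ) (hr : 0 < r) :
    (∑' i, b i) ^ r ≤ (∑' i, (ω i)⁻¹) ^ r * ∑' i, (ω i * b i) ^ r := by
  set S := ∑' i, (ω i * b i) ^ r with hS
  have h1 : ∀ i, b i ≤ (ω i)⁻¹ * S ^ r⁻¹ := by
    intro i
    have h2 : ω i * b i ≤ S ^ r⁻¹ := by
      rw [ENNReal.le_rpow_inv_iff hr]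
      exact ENNReal.le_tsum (f := fun i => (ω i * b i) ^ r) i
    calc b i = (ω i)⁻¹ * (ω i * b i) := by
          rw [← mul_assoc, ENNReal.inv_mul_cancel (h0 i) (ht i), one_mul]
      _ ≤ _ := by gcongr
  calc (∑' i, b i) ^ r ≤ (∑' i, (ω i)⁻¹ * S ^ r⁻¹) ^ r := ENNReal.rpow_le_rpow (ENNReal.tsum_le_tsum h1) hr.le
    _ = _ := by
      rw [ENNReal.tsum_mul_right, ENNReal.mul_rpow_of_nonneg _ _ hr.le, ENNReal.rpow_inv_rpow hr.ne']

lemma dyadic (y : ℝ≥0∞) : y ≤ ∑' j : ℤ, (2:ℝ≥0∞) ^ ((j:ℝ) + 1) * (if (2:ℝ≥0∞) ^ (j:ℝ) ≤ y then 1 else 0) := by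
  by_cases h0 : y = 0
  · rw [h0]; exact zero_le
  by_cases ht : y = ⊤
  · rw [ht]
    have h1 : ∑' k : ℕ, (1:ℝ≥0∞) = ⊤ := ENNReal.tsum_const_eq_top_of_ne_zero one_ne_zero
    rw [← h1]
    calc ∑' k : ℕ, (1:ℝ≥0∞) ≤ ∑' k : ℕ, (fun j : ℤ => (2:ℝ≥0∞) ^ ((j:ℝ) + 1) *
          (if (2:ℝ≥0∞) ^ (j:ℝ) ≤ ⊤ then 1 else 0)) (k:ℤ) := by
          apply ENNReal.tsum_le_tsum
          intro k
          simp only [le_top, if_true, mul_one]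
          apply ENNReal.one_le_rpow (by norm_num)
          push_cast; positivity
      _ ≤ _ := by
          rw [h1]
          exact ENNReal.tsum_comp_le_tsum_of_injective Nat.cast_injective _
  · obtain ⟨j, hj1, hj2⟩ := ENNReal.exists_mem_Ico_zpow h0 ht (y := 2) (by norm_num) (by norm_num)
    refine le_trans ?_ (ENNReal.le_tsum j)
    rw [← ENNReal.rpow_intCast] at hj1 hj2
    rw [if_pos hj1, mul_one]
    push_cast at hj2
    exact hj2.le

lemma combL (j a p c b : ℝ) (K M : ℝ≥0∞) (hK : K ≤ M)
    (hb : (c * |j| + (j + 1)) * a + -(j * p) * b ≤ a + -((a * c) * |j|)) :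
    ((2:ℝ≥0∞) ^ (c * |j|) * 2 ^ (j + 1)) ^ a * (K * ((2:ℝ≥0∞) ^ (-(j * p))) ^ b) ≤
      M * 2 ^ a * 2 ^ (-((a * c) * |j|)) := by
  have ht2 : (2:ℝ≥0∞) ≠ ⊤ := ENNReal.ofNat_ne_top
  have h20 : (2:ℝ≥0∞) ≠ 0 := two_ne_zero
  rw [← ENNReal.rpow_add _ _ h20 ht2, ← ENNReal.rpow_mul, ← ENNReal.rpow_mul, mul_left_comm,
    ← ENNReal.rpow_add _ _ h20 ht2, mul_assoc M, ← ENNReal.rpow_add _ _ h20 ht2]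
  exact mul_le_mul' hK (ENNReal.rpow_le_rpow_of_exponent_le one_le_two hb)

set_option maxHeartbeats 1000000 in
lemma lemF3 {n : ℕ} (β r C A2 η p : ℝ) (hβ : 0 < β) (hβ1 : β ≤ 1) (hr : 1 ≤ r) (hη : 0 < η) (hη1 : η ≤ 1 / 4)
    (hp : p = r * β * (1 + η) / (1 + β))
    (hS : ∀ e : ℝ≥0∞, e ≠ ⊤ → ∀ E : Set (Euc n × ℝ), MeasurableSet E → volume E ≤ e →
      ∫⁻ ξ, (∫⁻ x, volume (tset E x ξ) ^ r) ^ β ≤ ENNReal.ofReal A2 * e ^ (1 + β)) :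
    ∃ A : ℝ, 0 < A ∧ ∀ f : Euc n × ℝ → ℝ≥0∞, Measurable f → ∫⁻ z, f z ^ p ≤ 1 →
      ∫⁻ ξ in Metric.ball (0 : Euc n) C, (∫⁻ x, xrayT f ξ x ^ r) ^ β ≤ ENNReal.ofReal A := by
  have hr0 : 0 < r := by linarith
  have hq0 : 0 < r * β := by positivity
  have hp0 : 0 < p := by rw [hp]; positivity
  set ω : ℤ → ℝ≥0∞ := fun j => 2 ^ (η / 2 * |(j:ℝ)|) with hω
  have ω0 : ∀ j, ω j ≠ 0 := fun j => by simp [hω]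
  have ωt : ∀ j, ω j ≠ ⊤ := fun j => by simp only [hω]; exact ENNReal.rpow_ne_top_of_nonneg (by positivity) (by norm_num)
  set S : ℝ≥0∞ := ∑' j, (ω j)⁻¹ with hSd
  have St : S ≠ ⊤ := by
    have := sumfin (η / 2) (by positivity)
    convert this using 3 with j
    simp only [hω, ENNReal.rpow_neg]
  set S2 : ℝ≥0∞ := ∑' j : ℤ, (2:ℝ≥0∞) ^ (-((r * β * (η / 2)) * |(j:ℝ)|)) with hS2
  have S2t : S2 ≠ ⊤ := sumfin _ (by positivity)
  set M : ℝ≥0∞ := ENNReal.ofReal A2 + volume (Metric.ball (0 : Euc n) C) with hM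
  have Mt : M ≠ ⊤ := ENNReal.add_ne_top.mpr ⟨ENNReal.ofReal_ne_top, measure_ball_lt_top.ne⟩
  set T : ℝ≥0∞ := S ^ (r * β) * (M * 2 ^ (r * β) * S2) with hT
  have Tt : T ≠ ⊤ := by
    refine ENNReal.mul_ne_top (ENNReal.rpow_ne_top_of_nonneg hq0.le St)
      (ENNReal.mul_ne_top (ENNReal.mul_ne_top Mt (ENNReal.rpow_ne_top_of_nonneg hq0.le (by norm_num))) S2t)
  refine ⟨T.toReal + 1, by positivity, ?_⟩
  intro f hf hfp
  have hTA : T ≤ ENNReal.ofReal (T.toReal + 1) := by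
    conv_lhs => rw [← ENNReal.ofReal_toReal Tt]
    apply ENNReal.ofReal_le_ofReal; linarith
  refine le_trans ?_ hTA
  set E : ℤ → Set (Euc n × ℝ) := fun j => {z | (2:ℝ≥0∞) ^ (j:ℝ) ≤ f z} with hE
  have mE : ∀ j, MeasurableSet (E j) := fun j => measurableSet_le measurable_const hf
  have vE : ∀ j, volume (E j) ≤ (2:ℝ≥0∞) ^ (-((j:ℝ) * p)) := by
    intro j
    have h1 := (mul_meas_ge_le_lintegral (hf.pow_const p) ((2:ℝ≥0∞) ^ ((j:ℝ) * p)) (μ := volume)).trans hfp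
    have h2 : E j ⊆ {z | (2:ℝ≥0∞) ^ ((j:ℝ) * p) ≤ f z ^ p} := by
      intro z (hz : (2:ℝ≥0∞) ^ (j:ℝ) ≤ f z)
      show (2:ℝ≥0∞) ^ ((j:ℝ) * p) ≤ f z ^ p
      rw [ENNReal.rpow_mul]
      exact ENNReal.rpow_le_rpow hz hp0.le
    rw [ENNReal.rpow_neg, ENNReal.le_inv_iff_mul_le, mul_comm]
    exact (mul_le_mul_right (measure_mono h2) _).trans h1
  have xr : ∀ ξ x, xrayT f ξ x ≤ ∑' j : ℤ, (2:ℝ≥0∞) ^ ((j:ℝ) + 1) * volume (tset (E j) x ξ) := by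
    intro ξ x
    have mt : ∀ j, MeasurableSet {t : ℝ | (x + t • ξ, t) ∈ E j} := fun j =>
      (by fun_prop : Measurable (fun t : ℝ => (x + t • ξ, t))) (mE j)
    calc xrayT f ξ x ≤ ∫⁻ t in Set.Ioc (0:ℝ) 1, ∑' j : ℤ, (2:ℝ≥0∞) ^ ((j:ℝ) + 1) *
          ({t : ℝ | (x + t • ξ, t) ∈ E j}).indicator 1 t := by
          apply lintegral_mono
          intro t
          refine (dyadic _).trans (le_of_eq ?_)
          congr 1
          ext j
          by_cases h : (2:ℝ≥0∞) ^ (j:ℝ) ≤ f (x + t • ξ, t)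
          · rw [if_pos h, Set.indicator_of_mem (show t ∈ {t : ℝ | (x + t • ξ, t) ∈ E j} from h)]; rfl
          · rw [if_neg h, Set.indicator_of_notMem (show t ∉ {t : ℝ | (x + t • ξ, t) ∈ E j} from h)]
      _ = ∑' j : ℤ, (2:ℝ≥0∞) ^ ((j:ℝ) + 1) * volume (tset (E j) x ξ) := by
          rw [lintegral_tsum (fun j => ((measurable_one.indicator (mt j)).const_mul _).aemeasurable)]
          congr 1; ext j
          rw [lintegral_const_mul _ (measurable_one.indicator (mt j)), lintegral_indicator_one (mt j),
            Measure.restrict_apply (mt j)]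
          congr 2
          ext t
          exact and_comm
  have mG : ∀ j, Measurable (fun g : Euc n × Euc n => volume (tset (E j) g.1 g.2) ^ r) := fun j =>
    (measurable_tsetvol (E j) (mE j)).pow_const r
  have mGx : ∀ j ξ, Measurable (fun x : Euc n => volume (tset (E j) x ξ) ^ r) := fun j ξ =>
    (mG j).comp (by fun_prop : Measurable (fun x : Euc n => (x, ξ)))
  have mGi : ∀ j, Measurable (fun ξ : Euc n => (∫⁻ x, volume (tset (E j) x ξ) ^ r) ^ β) := fun j =>
    (Measurable.lintegral_prod_left' (mG j)).pow_const β
  have in1 : ∀ ξ, (∫⁻ x, xrayT f ξ x ^ r) ^ β ≤ S ^ (r * β) *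
      ∑' j : ℤ, (ω j * 2 ^ ((j:ℝ) + 1)) ^ (r * β) * (∫⁻ x, volume (tset (E j) x ξ) ^ r) ^ β := by
    intro ξ
    calc (∫⁻ x, xrayT f ξ x ^ r) ^ β ≤ (∫⁻ x, S ^ r * ∑' j : ℤ, (ω j * 2 ^ ((j:ℝ) + 1)) ^ r *
          volume (tset (E j) x ξ) ^ r) ^ β := by
          refine ENNReal.rpow_le_rpow (lintegral_mono (fun x => ?_)) hβ.le
          refine (ENNReal.rpow_le_rpow (xr ξ x) hr0.le).trans ((wsum _ ω ω0 ωt r hr0).trans (le_of_eq ?_))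
          congr 2; ext j
          rw [← ENNReal.mul_rpow_of_nonneg _ _ hr0.le, mul_assoc]
      _ = (S ^ r * ∑' j : ℤ, (ω j * 2 ^ ((j:ℝ) + 1)) ^ r * ∫⁻ x, volume (tset (E j) x ξ) ^ r) ^ β := by
          rw [lintegral_const_mul' _ _ (ENNReal.rpow_ne_top_of_nonneg hr0.le St),
            lintegral_tsum (fun j => ((mGx j ξ).const_mul _).aemeasurable)]
          congr 3; ext j
          rw [lintegral_const_mul _ (mGx j ξ)]
      _ ≤ S ^ (r * β) * ∑' j : ℤ, ((ω j * 2 ^ ((j:ℝ) + 1)) ^ r * ∫⁻ x, volume (tset (E j) x ξ) ^ r) ^ β := by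
          rw [ENNReal.mul_rpow_of_nonneg _ _ hβ.le, ← ENNReal.rpow_mul]
          gcongr
          exact tsum_rpow_le _ _ hβ hβ1
      _ = _ := by
          congr 2; ext j
          rw [ENNReal.mul_rpow_of_nonneg _ _ hβ.le, ← ENNReal.rpow_mul]
  have tj : ∀ j : ℤ, (ω j * 2 ^ ((j:ℝ) + 1)) ^ (r * β) *
      ∫⁻ ξ in Metric.ball (0 : Euc n) C, (∫⁻ x, volume (tset (E j) x ξ) ^ r) ^ β ≤
      M * 2 ^ (r * β) * 2 ^ (-((r * β * (η / 2)) * |(j:ℝ)|)) := by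
    intro j
    have hej : (2:ℝ≥0∞) ^ (-((j:ℝ) * p)) ≠ ⊤ :=
      ENNReal.rpow_ne_top_of_ne_zero two_ne_zero ENNReal.ofNat_ne_top
    rcases le_or_gt 0 j with hj | hj
    · have hj' : (0:ℝ) ≤ j := by exact_mod_cast hj
      refine le_trans (mul_le_mul_right ((setLIntegral_le_lintegral _ _).trans (hS _ hej (E j) (mE j) (vE j))) _) ?_
      apply combL _ _ _ _ _ _ _ le_self_add
      rw [abs_of_nonneg hj', hp]
      apply le_of_eq
      field_simp
      ring
    · have hj' : (j:ℝ) < 0 := by exact_mod_cast hj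
      refine le_trans (mul_le_mul_right (lemF2' β hβ r hr _ C (E j) (mE j) (vE j)) _) ?_
      apply combL _ _ _ _ _ _ _ le_add_self
      rw [abs_of_neg hj', hp]
      have h5 : (1 + η) / (1 + β) * β ≤ 5 / 8 := by
        rw [div_mul_eq_mul_div, div_le_iff₀ (by positivity)]; nlinarith
      have h6 : -((j:ℝ) * (r * β * (1 + η) / (1 + β))) * β = (-j) * (r * β) * ((1 + η) / (1 + β) * β) := by
        field_simp
      rw [h6]
      have h7 : (-(j:ℝ)) * (r * β) * ((1 + η) / (1 + β) * β) ≤ (-(j:ℝ)) * (r * β) * (5 / 8) := by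
        have : 0 < -(j:ℝ) := by linarith
        gcongr
      have h8 : 0 < -(j:ℝ) * (r * β) := mul_pos (by linarith) hq0
      nlinarith
  calc _ ≤ ∫⁻ ξ in Metric.ball (0 : Euc n) C, S ^ (r * β) *
      ∑' j : ℤ, (ω j * 2 ^ ((j:ℝ) + 1)) ^ (r * β) * (∫⁻ x, volume (tset (E j) x ξ) ^ r) ^ β := lintegral_mono in1
    _ = S ^ (r * β) * ∑' j : ℤ, (ω j * 2 ^ ((j:ℝ) + 1)) ^ (r * β) *
        ∫⁻ ξ in Metric.ball (0 : Euc n) C, (∫⁻ x, volume (tset (E j) x ξ) ^ r) ^ β := by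
        rw [lintegral_const_mul' _ _ (ENNReal.rpow_ne_top_of_nonneg hq0.le St),
          lintegral_tsum (fun j => ((mGi j).const_mul _).aemeasurable)]
        congr 2; ext j
        rw [lintegral_const_mul _ (mGi j)]
    _ ≤ S ^ (r * β) * ∑' j : ℤ, M * 2 ^ (r * β) * 2 ^ (-((r * β * (η / 2)) * |(j:ℝ)|)) := by
        exact mul_le_mul_right (ENNReal.tsum_le_tsum tj) _
    _ = T := by rw [ENNReal.tsum_mul_left]


lemma xrayT_smul {n : ℕ} (a : ℝ≥0∞) (ha : a ≠ ⊤) (f : Euc n × ℝ → ℝ≥0∞) (ξ x : Euc n) :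
    xrayT (fun z => a * f z) ξ x = a * xrayT f ξ x := by
  unfold xrayT
  rw [lintegral_const_mul' _ _ ha]

lemma kakeya_smul {n : ℕ} (q r C : ℝ) (hq : 0 < q) (hr : 0 < r) (a : ℝ≥0∞) (ha : a ≠ ⊤)
    (f : Euc n × ℝ → ℝ≥0∞) :
    kakeyaMixedNorm q r C (fun z => a * f z) = a * kakeyaMixedNorm q r C f := by
  have hqr : 0 ≤ q / r := by positivity
  have hq1 : 0 ≤ 1 / q := by positivity
  unfold kakeyaMixedNorm
  simp only [xrayT_smul a ha]
  have h1 : ∀ ξ : Euc n, (∫⁻ x, (a * xrayT f ξ x) ^ r) ^ (q / r)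
      = a ^ q * (∫⁻ x, xrayT f ξ x ^ r) ^ (q / r) := by
    intro ξ
    simp only [ENNReal.mul_rpow_of_nonneg _ _ hr.le]
    rw [lintegral_const_mul' _ _ (ENNReal.rpow_ne_top_of_nonneg hr.le ha),
      ENNReal.mul_rpow_of_nonneg _ _ hqr, ← ENNReal.rpow_mul, mul_div_cancel₀ _ hr.ne']
  simp only [h1]
  rw [lintegral_const_mul' _ _ (ENNReal.rpow_ne_top_of_nonneg hq.le ha),
    ENNReal.mul_rpow_of_nonneg _ _ hq1, ← ENNReal.rpow_mul, mul_one_div_cancel hq.ne',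
    ENNReal.rpow_one]

lemma homog {n : ℕ} (p q r C A : ℝ) (hp : 0 < p) (hq : 0 < q) (hr : 0 < r) (hA : 0 < A)
    (h : ∀ f : Euc n × ℝ → ℝ≥0∞, Measurable f → ∫⁻ z, f z ^ p ≤ 1 →
      kakeyaMixedNorm q r C f ≤ ENNReal.ofReal A)
    (f : Euc n × ℝ → ℝ≥0∞) (hf : Measurable f) :
    kakeyaMixedNorm q r C f ≤ ENNReal.ofReal A * lpNorm p f := by
  have hA0 : ENNReal.ofReal A ≠ 0 := (ENNReal.ofReal_pos.mpr hA).ne'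
  by_cases htop : lpNorm p f = ⊤
  · rw [htop, ENNReal.mul_top hA0]; exact le_top
  have key : ∀ c : ℝ≥0∞, c ≠ ⊤ → lpNorm p f < c →
      kakeyaMixedNorm q r C f ≤ ENNReal.ofReal A * c := by
    intro c hct hc
    have hc0 : c ≠ 0 := (lt_of_le_of_lt zero_le hc).ne'
    have hci : c⁻¹ ≠ ⊤ := ENNReal.inv_ne_top.mpr hc0
    have h1 := h (fun z => c⁻¹ * f z) (hf.const_mul _) (by
      simp only [ENNReal.mul_rpow_of_nonneg _ _ hp.le]
      rw [lintegral_const_mul' _ _ (ENNReal.rpow_ne_top_of_nonneg hp.le hci)]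
      have h2 : ∫⁻ z, f z ^ p ≤ c ^ p := by
        have h3 := ENNReal.rpow_le_rpow hc.le hp.le
        unfold _root_.lpNorm at h3
        rwa [← ENNReal.rpow_mul, one_div_mul_cancel hp.ne', ENNReal.rpow_one] at h3
      refine (mul_le_mul_right h2 _).trans (le_of_eq ?_)
      rw [← ENNReal.mul_rpow_of_nonneg _ _ hp.le, ENNReal.inv_mul_cancel hc0 hct, ENNReal.one_rpow])
    rw [kakeya_smul q r C hq hr _ hci] at h1
    calc kakeyaMixedNorm q r C f = c * (c⁻¹ * kakeyaMixedNorm q r C f) := by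
          rw [← mul_assoc, ENNReal.mul_inv_cancel hc0 hct, one_mul]
      _ ≤ c * ENNReal.ofReal A := mul_le_mul_right h1 _
      _ = _ := mul_comm _ _
  rw [mul_comm, ← ENNReal.div_le_iff hA0 ENNReal.ofReal_ne_top]
  refine le_of_forall_gt_imp_ge_of_dense (fun c hc => ?_)
  rw [ENNReal.div_le_iff hA0 ENNReal.ofReal_ne_top]
  by_cases hct : c = ⊤
  · rw [hct, ENNReal.top_mul hA0]; exact le_top
  · rw [mul_comm]; exact key c hct hc

lemma exponents (n : ℕ) (ε : ℝ) (hε : 0 < ε) : ∃ θ β η : ℝ, 0 < θ ∧ θ ≤ 1 / 2 ∧ KK n θ ∧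
    θ / (1 - θ) < β ∧ 1 / 2 ≤ β ∧ β ≤ 1 ∧ 0 < η ∧ η ≤ 1 / 4 ∧
    (1 + 1 / β) / (1 + η) > 1 + Real.sqrt 2 - ε ∧ (1 + β) / (1 + η) > 1 + Real.sqrt 2 / 2 - ε := by
  set s := Real.sqrt 2 with hs
  have s2 : s * s = 2 := Real.mul_self_sqrt (by norm_num)
  have s0 : 0 ≤ s := Real.sqrt_nonneg _
  have sl : 1.4 < s := by nlinarith
  have su : s < 1.42 := by nlinarith
  obtain ⟨κ, hκ, hκ1, hκ2⟩ : ∃ κ : ℝ, 0 < κ ∧ κ ≤ ε / 8 ∧ κ ≤ 1 / 10 :=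
    ⟨min (ε / 8) (1 / 10), by positivity, min_le_left _ _, min_le_right _ _⟩
  obtain ⟨η, hη, hη1, hη2⟩ : ∃ κ : ℝ, 0 < κ ∧ κ ≤ ε / 16 ∧ κ ≤ 1 / 4 :=
    ⟨min (ε / 16) (1 / 4), by positivity, min_le_left _ _, min_le_right _ _⟩
  obtain ⟨θ, h1, h2, h3, h4⟩ := KK_iter n (κ / 8) (by positivity)
  have hβ0 : 0 < s / 2 + κ := by linarith
  have hinv1 : s - 2 * κ ≤ 1 / (s / 2 + κ) := by
    rw [le_div_iff₀ hβ0]; nlinarith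
  have hinv2 : 1 / (s / 2 + κ) ≤ 2 := by
    rw [div_le_iff₀ hβ0]; linarith
  refine ⟨θ, s / 2 + κ, η, by linarith, h3, h4, ?_, by linarith, by linarith, hη, hη2, ?_, ?_⟩
  · rw [div_lt_iff₀ (by linarith)]
    have : (s / 2 + κ) * (2 - s - κ / 8) ≤ (s / 2 + κ) * (1 - θ) :=
      mul_le_mul_of_nonneg_left (by linarith) hβ0.le
    nlinarith
  · rw [gt_iff_lt, lt_div_iff₀ (by linarith)]
    nlinarith
  · rw [gt_iff_lt, lt_div_iff₀ (by linarith)]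
    nlinarith

/-- Theorem 2: for `d ≥ 4` and `ε > 0` there are exponents `1 ≤ p ≤ q ≤ r < ∞`
with `r/p > 1 + √2 - ε` and `q/p > 1 + √2/2 - ε` for which the Kakeya-order mixed
norm bound holds. -/
theorem statement1 (d : ℕ) (hd : 4 ≤ d) (ε : ℝ) (hε : 0 < ε) (C : ℝ) (hC : 0 < C) :
    ∃ p q r : ℝ, 1 ≤ p ∧ p ≤ q ∧ q ≤ r ∧
      r / p > 1 + Real.sqrt 2 - ε ∧ q / p > 1 + Real.sqrt 2 / 2 - ε ∧
      ∃ A : ℝ, 0 < A ∧ ∀ f : Euc (d - 1) × ℝ → ℝ≥0∞, Measurable f →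
        kakeyaMixedNorm q r C f ≤ ENNReal.ofReal A * lpNorm p f := by
  obtain ⟨θ, β, η, hθ0, hθ1, hK, hβ, hβ2, hβ1, hη, hη1, hx1, hx2⟩ := exponents (d - 1) ε hε
  have hβ0 : 0 < β := by linarith
  obtain ⟨A1, hA1, N, hF⟩ := lemF1 (d - 1) θ hθ0 hθ1 hK β hβ hβ1
  have hq2 : (2:ℝ) ≤ (N:ℝ) + 2 := by
    have : (0:ℝ) ≤ N := Nat.cast_nonneg N
    linarith
  obtain ⟨q, hq⟩ : ∃ q : ℝ, q = (N:ℝ) + 2 := ⟨_, rfl⟩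
  rw [← hq] at hq2
  have hq0 : 0 < q := by linarith
  have hrβ : q / β * β = (N:ℝ) + 2 := by rw [div_mul_cancel₀ _ hβ0.ne', hq]
  have hqr : q ≤ q / β := by rw [le_div_iff₀ hβ0]; nlinarith
  have hr0 : 0 < q / β := by positivity
  have hp0 : 0 < q * (1 + η) / (1 + β) := by positivity
  obtain ⟨A, hA, hAb⟩ := lemF3 (n := d - 1) β (q / β) C (A1 * 2 ^ N * 2) η (q * (1 + η) / (1 + β)) hβ0 hβ1
    (by linarith) hη hη1 (by rw [div_mul_cancel₀ _ hβ0.ne'])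
    (fun e he E hE hEe => lemF2 (d - 1) β hβ0 hβ1 A1 hA1 N hF (q / β) hrβ e he E hE hEe)
  refine ⟨q * (1 + η) / (1 + β), q, q / β, ?_, ?_, hqr, ?_, ?_, A ^ (1 / q), by positivity, ?_⟩
  · rw [le_div_iff₀ (by linarith)]; nlinarith
  · rw [div_le_iff₀ (by linarith)]; nlinarith
  · convert hx1 using 1
    field_simp
    ring
  · convert hx2 using 1
    field_simp
  · intro f hf
    refine homog _ q (q / β) C _ hp0 hq0 hr0 (by positivity) (fun g hg hgp => ?_) f hf
    unfold kakeyaMixedNorm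
    rw [← ENNReal.ofReal_rpow_of_pos hA, div_div_cancel₀ hq0.ne']
    exact ENNReal.rpow_le_rpow (hAb g hg hgp) (by positivity)

end
end

section
/- Let k ≥ 2 and d ≥ 5 + k be integers, set p = d/(k + 3/4), and let q, r ∈ [1,∞) satisfy 1 + (d−k)/r > d/p and q < (4(d−(k−1))+3)/4. Then for every R > 0 there is a constant A > 0 such that for every nonnegative measurable function f on ℝ^d supported in the ball B(0,R), (∫_{G(d,k)} (∫_{M^⊥} T^k[f](M + x)^r dx)^{q/r} dγ(M))^{1/q} ≤ A ‖f‖_{L^p(ℝ^d)}. -/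
open MeasureTheory ENNReal

noncomputable section

/-- The orthogonal group `O(d)`, with its Borel σ-algebra. -/
instance (d : ℕ) : MeasurableSpace (Matrix.orthogonalGroup (Fin d) ℝ) := borel _
instance (d : ℕ) : BorelSpace (Matrix.orthogonalGroup (Fin d) ℝ) := ⟨rfl⟩

/-- A fixed `k`-dimensional subspace `M₀ ∈ G(d,k)`: the span of the first `k`
standard basis vectors. -/
def M₀ (d k : ℕ) : Submodule ℝ (Euc d) :=
  Submodule.span ℝ {x | ∃ i : Fin d, (i : ℕ) < k ∧ x = EuclideanSpace.single i 1}

/-- The image plane `A(M₀)` of `M₀` under an orthogonal transformation `A`. -/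
def planeOf (d k : ℕ) (U : Matrix.orthogonalGroup (Fin d) ℝ) : Submodule ℝ (Euc d) :=
  (M₀ d k).map (Matrix.toEuclideanLin (U : Matrix (Fin d) (Fin d) ℝ))

/-- The `k`-plane transform `T^k[f](M + x) = ∫_M f(y + x) dℒ_M(y)`, where `ℒ_M` is
Lebesgue (Haar) measure on the subspace `M`. -/
def kplaneT (d : ℕ) (M : Submodule ℝ (Euc d)) (f : Euc d → ℝ≥0∞) (x : Euc d) : ℝ≥0∞ :=
  ∫⁻ y : ↥M, f ((y : Euc d) + x)


/-! ### General inequalities -/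

theorem kp_jensen {α : Type*} [MeasurableSpace α] (ν : Measure α) (g : α → ℝ≥0∞)
    (hg : AEMeasurable g ν) (s : ℝ) (hs0 : 0 < s) (hs1 : s ≤ 1) :
    ∫⁻ x, g x ^ s ∂ν ≤ (ν Set.univ) ^ (1 - s) * (∫⁻ x, g x ∂ν) ^ s := by
  rcases hs1.eq_or_lt with rfl | hs1
  · simp
  have hc : (1/s).HolderConjugate (1/(1-s)) := by
    rw [Real.holderConjugate_iff]
    refine ⟨by rw [lt_div_iff₀ hs0]; linarith, by simp⟩
  have h := ENNReal.lintegral_mul_le_Lp_mul_Lq ν hc (hg.pow_const s)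
    (aemeasurable_const (b := (1 : ℝ≥0∞)))
  simp only [Pi.mul_apply, mul_one, ENNReal.one_rpow, lintegral_one, one_div_one_div] at h
  rw [mul_comm]
  refine h.trans (le_of_eq ?_)
  congr 3
  funext x
  rw [← ENNReal.rpow_mul, mul_one_div_cancel hs0.ne', ENNReal.rpow_one]

theorem kp_tsum_jensen (w c : ℕ → ℝ≥0∞) (hw : ∑' j, w j ≤ 1) (s : ℝ) (hs : 1 ≤ s) :
    (∑' j, w j * c j) ^ s ≤ ∑' j, w j * c j ^ s := by
  have hs0 : 0 < s := by linarith
  have key : ∑' j, w j * c j ≤ (∑' j, w j * c j ^ s) ^ s⁻¹ := by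
    rw [ENNReal.tsum_eq_iSup_sum]
    refine iSup_le fun t => ?_
    refine (ENNReal.inner_le_weight_mul_Lp_of_nonneg t hs w c).trans ?_
    have h1 : (∑ i ∈ t, w i) ^ (1 - s⁻¹) ≤ 1 := by
      apply ENNReal.rpow_le_one ((ENNReal.sum_le_tsum t).trans hw)
      have := inv_le_one_of_one_le₀ hs
      linarith
    calc _ ≤ 1 * (∑ i ∈ t, w i * c i ^ s) ^ s⁻¹ := by gcongr
      _ ≤ _ := by
        rw [one_mul]
        gcongr
        exact ENNReal.sum_le_tsum t
  calc _ ≤ ((∑' j, w j * c j ^ s) ^ s⁻¹) ^ s := by gcongr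
    _ = _ := by rw [← ENNReal.rpow_mul, inv_mul_cancel₀ hs0.ne', ENNReal.rpow_one]

theorem kp_lintegral_norm {E : Type*} [NormedAddCommGroup E] [NormedSpace ℝ E] [MeasurableSpace E]
    [BorelSpace E] [FiniteDimensional ℝ E] [Nontrivial E] (μ : Measure E) [μ.IsAddHaarMeasure]
    (h : ℝ → ℝ≥0∞) (hh : Measurable h) :
    ∫⁻ x, h ‖x‖ ∂μ = μ.toSphere Set.univ *
      ∫⁻ t in Set.Ioi (0:ℝ), ENNReal.ofReal (t ^ (Module.finrank ℝ E - 1)) * h t := by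
  calc
    ∫⁻ x, h (‖x‖) ∂μ = ∫⁻ x : ({(0)}ᶜ : Set E), h (‖x.1‖) ∂(μ.comap (↑)) := by
      rw [lintegral_subtype_comap (measurableSet_singleton _).compl (fun x ↦ h (‖x‖)),
        restrict_compl_singleton]
    _ = ∫⁻ x, h x.2 ∂μ.toSphere.prod (.volumeIoiPow (Module.finrank ℝ E - 1)) := by
      rw [← μ.measurePreserving_homeomorphUnitSphereProd.lintegral_comp_emb
        (Homeomorph.measurableEmbedding _) (fun x => h x.2)]
      simp
    _ = μ.toSphere Set.univ * ∫⁻ x : Set.Ioi (0 : ℝ), h x ∂.volumeIoiPow (Module.finrank ℝ E - 1) := by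
      rw [lintegral_prod _ (by fun_prop)]
      simp [mul_comm]
    _ = _ := by
      rw [Measure.volumeIoiPow, lintegral_withDensity_eq_lintegral_mul _ (by fun_prop) (by fun_prop)]
      rw [← lintegral_subtype_comap measurableSet_Ioi]
      rfl

theorem kp_polar {V E : Type*} [NormedAddCommGroup E] [NormedSpace ℝ E] [MeasurableSpace E]
    [BorelSpace E] [FiniteDimensional ℝ E] [Nontrivial E] (μ : Measure E) [μ.IsAddHaarMeasure]
    [NormedAddCommGroup V] [NormedSpace ℝ V] [MeasurableSpace V]
    [BorelSpace V] [FiniteDimensional ℝ V] [Nontrivial V] (ν : Measure V) [ν.IsAddHaarMeasure]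
    (hVE : Module.finrank ℝ V ≤ Module.finrank ℝ E) :
    ∃ c : ℝ≥0∞, c ≠ ∞ ∧ ∀ h : ℝ → ℝ≥0∞, Measurable h →
      ∫⁻ y, h ‖y‖ * ENNReal.ofReal (‖y‖ ^ (Module.finrank ℝ E - Module.finrank ℝ V)) ∂ν
        = c * ∫⁻ z, h ‖z‖ ∂μ := by
  have hs : μ.toSphere Set.univ ≠ 0 := by
    rw [Ne, Measure.measure_univ_eq_zero]
    exact Measure.toSphere_ne_zero μ
  have hs' : μ.toSphere Set.univ ≠ ∞ := measure_ne_top _ _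
  refine ⟨ν.toSphere Set.univ * (μ.toSphere Set.univ)⁻¹, ?_, fun h hh => ?_⟩
  · exact ENNReal.mul_ne_top (measure_ne_top _ _) (ENNReal.inv_ne_top.2 hs)
  rw [kp_lintegral_norm μ h hh, kp_lintegral_norm ν
    (fun t => h t * ENNReal.ofReal (t ^ (Module.finrank ℝ E - Module.finrank ℝ V))) (by fun_prop)]
  have : ∀ a b c : ℝ≥0∞, b ≠ 0 → b ≠ ∞ → a * b⁻¹ * (b * c) = a * c := by
    intro a b c h1 h2
    rw [mul_assoc, ← mul_assoc b⁻¹, ENNReal.inv_mul_cancel h1 h2, one_mul]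
  rw [this _ _ _ hs hs']
  congr 1
  refine setLIntegral_congr_fun measurableSet_Ioi fun t ht => ?_
  have ht : (0:ℝ) < t := ht
  have hp : 0 < Module.finrank ℝ V := Module.finrank_pos
  rw [mul_comm (h t), ← mul_assoc, ← ENNReal.ofReal_mul (by positivity), ← pow_add]
  congr 4
  omega

theorem kp_rearr {V : Type*} [NormedAddCommGroup V] [NormedSpace ℝ V] [MeasurableSpace V]
    [BorelSpace V] [FiniteDimensional ℝ V] [Nontrivial V] (ν : Measure V) [ν.IsAddHaarMeasure]
    (d : ℕ) (hd : Module.finrank ℝ V ≤ d) :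
    ∃ C : ℝ≥0∞, C ≠ ∞ ∧ ∀ A : Set V, MeasurableSet A → ν A ≠ ∞ →
      (ν A) ^ ((d:ℝ) / (Module.finrank ℝ V : ℝ)) ≤
        C * ∫⁻ y in A, ENNReal.ofReal (‖y‖ ^ (d - Module.finrank ℝ V)) ∂ν := by
  set k := Module.finrank ℝ V with hk
  have hk0 : 0 < k := Module.finrank_pos
  have hkR : (0:ℝ) < k := by exact_mod_cast hk0
  set b := ν.real (Metric.ball (0:V) 1) with hb
  have hb0 : 0 < b := by
    rw [hb, Measure.real]
    exact ENNReal.toReal_pos (Metric.measure_ball_pos ν 0 one_pos).ne' measure_ball_lt_top.ne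
  refine ⟨ENNReal.ofReal (2 * (2 * b) ^ (((d:ℝ) - k) / k)), ENNReal.ofReal_ne_top, fun A hA hfin => ?_⟩
  set a := ν.real A with ha
  have haν : ν A = ENNReal.ofReal a := by rw [ha, Measure.real, ENNReal.ofReal_toReal hfin]
  have ha0 : 0 ≤ a := ENNReal.toReal_nonneg
  have hdR : (k:ℝ) ≤ d := by exact_mod_cast hd
  rcases ha0.eq_or_lt with h0 | hapos
  · rw [haν, ← h0]
    have : (0:ℝ) < d / k := by apply div_pos <;> linarith
    simp [this]
  set ρ : ℝ := (a / (2 * b)) ^ ((1:ℝ) / k) with hρ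
  have hρ0 : 0 < ρ := by positivity
  have hball : ν (Metric.ball 0 ρ) = ENNReal.ofReal (a / 2) := by
    rw [Measure.addHaar_ball_of_pos ν _ hρ0, ← hk]
    have : ν (Metric.ball 0 1) = ENNReal.ofReal b := by
      rw [hb, Measure.real, ENNReal.ofReal_toReal measure_ball_lt_top.ne]
    rw [this, ← ENNReal.ofReal_mul (by positivity)]
    congr 1
    rw [hρ, ← Real.rpow_natCast, ← Real.rpow_mul (by positivity)]
    rw [one_div_mul_cancel hkR.ne', Real.rpow_one]
    field_simp
  have hdiff : ENNReal.ofReal (a/2) ≤ ν (A \ Metric.ball 0 ρ) := by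
    have h1 := le_measure_sdiff (μ := ν) (s₁ := A) (s₂ := Metric.ball 0 ρ)
    rw [hball, haν, ← ENNReal.ofReal_sub _ (by positivity)] at h1
    refine le_trans (le_of_eq ?_) h1
    congr 1; ring
  have hintg : ENNReal.ofReal (ρ ^ (d - k)) * ENNReal.ofReal (a/2) ≤
      ∫⁻ y in A, ENNReal.ofReal (‖y‖ ^ (d - k)) ∂ν := by
    calc _ ≤ ENNReal.ofReal (ρ ^ (d - k)) * ν (A \ Metric.ball 0 ρ) := by gcongr
      _ = ∫⁻ y in A \ Metric.ball 0 ρ, ENNReal.ofReal (ρ ^ (d - k)) ∂ν := by simp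
      _ ≤ ∫⁻ y in A \ Metric.ball 0 ρ, ENNReal.ofReal (‖y‖ ^ (d - k)) ∂ν := by
        refine setLIntegral_mono' (hA.diff Metric.isOpen_ball.measurableSet) fun y hy => ?_
        apply ENNReal.ofReal_le_ofReal
        have : ρ ≤ ‖y‖ := by simpa using hy.2
        gcongr
      _ ≤ _ := lintegral_mono_set Set.sdiff_subset
  refine le_trans (le_of_eq ?_) (mul_le_mul_right hintg _)
  rw [haν, ENNReal.ofReal_rpow_of_pos hapos, ← ENNReal.ofReal_mul (by positivity),
    ← ENNReal.ofReal_mul (by positivity)]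
  congr 1
  have e1 : ρ ^ (d - k) = (a / (2*b)) ^ (((d:ℝ) - k) / k) := by
    rw [hρ, ← Real.rpow_natCast, ← Real.rpow_mul (by positivity), Nat.cast_sub hd]
    congr 1; ring
  rw [e1, Real.div_rpow hapos.le (by positivity)]
  have e2 : (d:ℝ) / k = (d - k)/k + 1 := by field_simp; ring
  rw [e2, Real.rpow_add hapos, Real.rpow_one]
  have : (2*b) ^ (((d:ℝ) - k) / k) ≠ 0 := by positivity
  field_simp


/-! ### The orthogonal group acting on `ℝ^d` -/

theorem kp_act_norm {d : ℕ} (U : Matrix.orthogonalGroup (Fin d) ℝ) (z : Euc d) :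
    ‖Matrix.toEuclideanLin (U : Matrix (Fin d) (Fin d) ℝ) z‖ = ‖z‖ := by
  have h : (U : Matrix (Fin d) (Fin d) ℝ).conjTranspose * (U : Matrix (Fin d) (Fin d) ℝ) = 1 :=
    Matrix.mem_unitaryGroup_iff'.1 U.2
  have h2 : ‖Matrix.toEuclideanLin (U : Matrix (Fin d) (Fin d) ℝ) z‖ ^ 2 = ‖z‖ ^ 2 := by
    rw [← real_inner_self_eq_norm_sq, ← real_inner_self_eq_norm_sq,
      ← LinearMap.adjoint_inner_left, ← Matrix.toEuclideanLin_conjTranspose_eq_adjoint]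
    congr 1
    ext i
    rw [Matrix.conjTranspose_eq_transpose_of_trivial] at h
    simp [Matrix.mulVec_mulVec, h]
  exact (sq_eq_sq₀ (norm_nonneg _) (norm_nonneg _)).1 h2

/-- The action as a linear isometry equivalence. -/
def kpAct {d : ℕ} (U : Matrix.orthogonalGroup (Fin d) ℝ) : Euc d ≃ₗᵢ[ℝ] Euc d :=
  LinearIsometry.toLinearIsometryEquiv
    ⟨Matrix.toEuclideanLin (U : Matrix (Fin d) (Fin d) ℝ), kp_act_norm U⟩ rfl

theorem kpAct_apply {d : ℕ} (U : Matrix.orthogonalGroup (Fin d) ℝ) (z : Euc d) :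
    kpAct U z = Matrix.toEuclideanLin (U : Matrix (Fin d) (Fin d) ℝ) z := rfl

theorem kpAct_mul {d : ℕ} (U V : Matrix.orthogonalGroup (Fin d) ℝ) (z : Euc d) :
    kpAct (U * V) z = kpAct U (kpAct V z) := by
  rw [kpAct_apply, kpAct_apply, kpAct_apply]
  ext i
  simp [Matrix.mulVec_mulVec]

theorem kpAct_continuous {d : ℕ} :
    Continuous (fun q : Matrix.orthogonalGroup (Fin d) ℝ × Euc d => kpAct q.1 q.2) := by
  simp only [kpAct_apply, Matrix.toLpLin_apply]
  refine (PiLp.continuous_toLp 2 _).comp ?_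
  exact Continuous.matrix_mulVec (by fun_prop) (by fun_prop)

instance kpSecond (d : ℕ) : SecondCountableTopology (Matrix.orthogonalGroup (Fin d) ℝ) := by
  have : SecondCountableTopology (Matrix (Fin d) (Fin d) ℝ) :=
    inferInstanceAs (SecondCountableTopology (Fin d → Fin d → ℝ))
  exact TopologicalSpace.Subtype.secondCountableTopology _

theorem kpAct_measurable {d : ℕ} :
    Measurable (fun q : Matrix.orthogonalGroup (Fin d) ℝ × Euc d => kpAct q.1 q.2) :=
  kpAct_continuous.measurable

attribute [irreducible] kpAct

theorem kpAct_meas_left {d : ℕ} (g : Euc d → ℝ≥0∞) (hg : Measurable g) (u : Euc d) :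
    Measurable (fun U : Matrix.orthogonalGroup (Fin d) ℝ => g (kpAct U u)) := by
  have h1 : Continuous (fun U : Matrix.orthogonalGroup (Fin d) ℝ => (U, u)) := by fun_prop
  have h2 : Continuous (fun U : Matrix.orthogonalGroup (Fin d) ℝ => kpAct U u) :=
    kpAct_continuous.comp h1
  exact hg.comp h2.measurable

theorem kpAct_trans {d : ℕ} (u v : Euc d) (h : ‖u‖ = ‖v‖) :
    ∃ U : Matrix.orthogonalGroup (Fin d) ℝ, kpAct U u = v := by
  let f := (Submodule.span ℝ {u - v})ᗮ.reflection
  have hf : f u = v := Submodule.reflection_sub h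
  have hm := f.toMatrix_mem_unitaryGroup (EuclideanSpace.basisFun (Fin d) ℝ)
    (EuclideanSpace.basisFun (Fin d) ℝ)
  refine ⟨⟨_, hm⟩, ?_⟩
  rw [kpAct_apply, ← hf, Matrix.toEuclideanLin_eq_toLin_orthonormal, Matrix.toLin_toMatrix]
  rfl

theorem kp_right_inv {d : ℕ} (μ : Measure (Matrix.orthogonalGroup (Fin d) ℝ))
    (hμ1 : μ.IsMulLeftInvariant) (hμ2 : IsProbabilityMeasure μ)
    (φ : Matrix.orthogonalGroup (Fin d) ℝ → ℝ≥0∞) (hφ : Measurable φ)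
    (V : Matrix.orthogonalGroup (Fin d) ℝ) :
    ∫⁻ U, φ (U * V) ∂μ = ∫⁻ U, φ U ∂μ := by
  have key : ∀ ψ : Matrix.orthogonalGroup (Fin d) ℝ → ℝ≥0∞, Measurable ψ →
      ∫⁻ U, ψ U ∂μ = ∫⁻ U, ψ U⁻¹ ∂μ := by
    intro ψ hψ
    have h1 : ∫⁻ g, ∫⁻ h, ψ (g⁻¹ * h) ∂μ ∂μ = ∫⁻ U, ψ U ∂μ := by
      simp [lintegral_mul_left_eq_self ψ]
    have h2 : ∫⁻ h, ∫⁻ g, ψ (g⁻¹ * h) ∂μ ∂μ = ∫⁻ U, ψ U⁻¹ ∂μ := by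
      have : ∀ h, ∫⁻ g, ψ (g⁻¹ * h) ∂μ = ∫⁻ g, ψ g⁻¹ ∂μ := by
        intro h
        rw [← lintegral_mul_left_eq_self (fun g => ψ (g⁻¹ * h)) h]
        simp [mul_assoc]
      simp [this]
    rw [← h1, ← h2]
    apply lintegral_lintegral_swap
    apply Measurable.aemeasurable
    fun_prop
  rw [key _ (by fun_prop), key φ hφ]
  rw [← lintegral_mul_left_eq_self (fun U => φ (U⁻¹ * V)) V]
  simp [mul_assoc]

theorem kp_radial {d : ℕ} (μ : Measure (Matrix.orthogonalGroup (Fin d) ℝ))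
    (hμ1 : μ.IsMulLeftInvariant) (hμ2 : IsProbabilityMeasure μ)
    (g : Euc d → ℝ≥0∞) (hg : Measurable g) (u v : Euc d) (h : ‖u‖ = ‖v‖) :
    ∫⁻ U, g (kpAct U u) ∂μ = ∫⁻ U, g (kpAct U v) ∂μ := by
  obtain ⟨V, hV⟩ := kpAct_trans u v h
  rw [← kp_right_inv μ hμ1 hμ2 _ (kpAct_meas_left g hg u) V, ← hV]
  simp_rw [kpAct_mul]

theorem kp_act_lintegral {d : ℕ} (U : Matrix.orthogonalGroup (Fin d) ℝ)
    (g : Euc d → ℝ≥0∞) (hg : Measurable g) :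
    ∫⁻ z, g (kpAct U z) = ∫⁻ z, g z :=
  (kpAct U).measurePreserving.lintegral_comp hg

/-- Averaging over the orthogonal group: the polar-coordinates inequality. -/
theorem kp_avg {d : ℕ} (hd0 : 0 < d) (V : Submodule ℝ (Euc d)) [Nontrivial V]
    (μ : Measure (Matrix.orthogonalGroup (Fin d) ℝ))
    (hμ1 : μ.IsMulLeftInvariant) (hμ2 : IsProbabilityMeasure μ) :
    ∃ c : ℝ≥0∞, c ≠ ∞ ∧ ∀ g : Euc d → ℝ≥0∞, Measurable g →
      ∫⁻ U, (∫⁻ y : V, g (kpAct U y) * ENNReal.ofReal (‖y‖ ^ (d - Module.finrank ℝ V))) ∂μ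
        = c * ∫⁻ z, g z := by
  have : NeZero d := ⟨hd0.ne'⟩
  obtain ⟨c, hc, H⟩ := kp_polar (volume : Measure (Euc d)) (volume : Measure V)
    (Submodule.finrank_le V)
  have hfr : Module.finrank ℝ (Euc d) = d := by simp
  rw [hfr] at H
  refine ⟨c, hc, fun g hg => ?_⟩
  let e : Euc d := EuclideanSpace.single ⟨0, hd0⟩ 1
  have he : ‖e‖ = 1 := by simp [e]
  let h : ℝ → ℝ≥0∞ := fun t => ∫⁻ U, g (kpAct U (t • e)) ∂μ
  have hj : Measurable (fun q : Matrix.orthogonalGroup (Fin d) ℝ × Euc d => g (kpAct q.1 q.2)) :=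
    hg.comp kpAct_measurable
  have hh : Measurable h := by
    apply Measurable.lintegral_prod_left' (f := fun q : Matrix.orthogonalGroup (Fin d) ℝ × ℝ =>
      g (kpAct q.1 (q.2 • e)))
    exact hj.comp (f := fun q : Matrix.orthogonalGroup (Fin d) ℝ × ℝ => (q.1, q.2 • e))
      (by fun_prop)
  have hrad : ∀ z : Euc d, ∫⁻ U, g (kpAct U z) ∂μ = h ‖z‖ := by
    intro z
    apply kp_radial μ hμ1 hμ2 g hg
    simp [norm_smul, he]
  calc _ = ∫⁻ y : V, ∫⁻ U, g (kpAct U y) * ENNReal.ofReal (‖y‖ ^ (d - Module.finrank ℝ V)) ∂μ := by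
        apply lintegral_lintegral_swap
        apply Measurable.aemeasurable
        refine Measurable.mul ?_ (by fun_prop)
        exact hj.comp (f := fun q : Matrix.orthogonalGroup (Fin d) ℝ × V => (q.1, (q.2 : Euc d)))
          (by fun_prop)
    _ = ∫⁻ y : V, h ‖y‖ * ENNReal.ofReal (‖y‖ ^ (d - Module.finrank ℝ V)) := by
        congr 1; funext y
        rw [lintegral_mul_const _ (kpAct_meas_left g hg y), hrad]
        rfl
    _ = c * ∫⁻ z : Euc d, h ‖z‖ := H h hh
    _ = c * ∫⁻ z : Euc d, ∫⁻ U, g (kpAct U z) ∂μ := by simp_rw [hrad]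
    _ = c * ∫⁻ U, (∫⁻ z : Euc d, g (kpAct U z)) ∂μ := by
        rw [lintegral_lintegral_swap]
        apply Measurable.aemeasurable
        exact hj.comp measurable_swap
    _ = c * ∫⁻ z, g z := by
        simp_rw [kp_act_lintegral _ g hg]
        simp

/-- Fubini for an orthogonal decomposition, up to a constant. -/
theorem kp_fubini {d : ℕ} (V : Submodule ℝ (Euc d)) :
    ∃ c : ℝ≥0∞, c ≠ ∞ ∧ ∀ g : Euc d → ℝ≥0∞, Measurable g →
      ∫⁻ x : Vᗮ, ∫⁻ y : V, g (y + x) = c * ∫⁻ z, g z := by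
  let L : (Vᗮ × V) ≃ₗ[ℝ] Euc d := LinearEquiv.trans (LinearEquiv.prodComm ℝ _ _)
    (Submodule.prodEquivOfIsCompl V Vᗮ V.isCompl_orthogonal)
  let L' : (Vᗮ × V) ≃L[ℝ] Euc d := L.toContinuousLinearEquiv
  have hL : ∀ q, L' q = (q.2 : Euc d) + q.1 := fun q => rfl
  have hH : (Measure.map L' ((volume : Measure Vᗮ).prod (volume : Measure V))).IsAddHaarMeasure :=
    L'.isAddHaarMeasure_map _
  have hm := Measure.isAddLeftInvariant_eq_smul
    (Measure.map L' ((volume : Measure Vᗮ).prod (volume : Measure V))) (volume : Measure (Euc d))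
  refine ⟨(Measure.addHaarScalarFactor (Measure.map L' ((volume : Measure Vᗮ).prod
    (volume : Measure V))) (volume : Measure (Euc d)) : NNReal), ENNReal.coe_ne_top, fun g hg => ?_⟩
  rw [← lintegral_prod (μ := (volume : Measure Vᗮ)) (ν := (volume : Measure V))
      (fun q => g ((q.2 : Euc d) + q.1)) (hg.comp (by fun_prop)).aemeasurable]
  calc _ = ∫⁻ z, g z ∂(Measure.map L' ((volume : Measure Vᗮ).prod (volume : Measure V))) := by
        rw [lintegral_map hg L'.continuous.measurable]
        simp [hL]
    _ = _ := by
        conv_lhs => rw [hm]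
        rw [lintegral_smul_measure]
        rfl


/-! ### The restricted estimate -/

/-- The `k`-plane transform in rotated coordinates. -/
def kpT {d : ℕ} (V : Submodule ℝ (Euc d)) (f : Euc d → ℝ≥0∞)
    (U : Matrix.orthogonalGroup (Fin d) ℝ) (z : Euc d) : ℝ≥0∞ :=
  ∫⁻ y : V, f (kpAct U (y + z))

theorem kpT_measurable {d : ℕ} (V : Submodule ℝ (Euc d)) (f : Euc d → ℝ≥0∞) (hf : Measurable f) :
    Measurable (fun q : Matrix.orthogonalGroup (Fin d) ℝ × Euc d => kpT V f q.1 q.2) := by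
  unfold kpT
  apply Measurable.lintegral_prod_right'
    (f := fun q : (Matrix.orthogonalGroup (Fin d) ℝ × Euc d) × V =>
      f (kpAct q.1.1 ((q.2 : Euc d) + q.1.2)))
  have h : Measurable (fun q : (Matrix.orthogonalGroup (Fin d) ℝ × Euc d) × V =>
      (q.1.1, (q.2 : Euc d) + q.1.2)) := by fun_prop
  exact hf.comp (kpAct_measurable.comp h)

theorem kpT_trans {d : ℕ} (V : Submodule ℝ (Euc d)) (f : Euc d → ℝ≥0∞)
    (U : Matrix.orthogonalGroup (Fin d) ℝ) (y : V) (z : Euc d) :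
    kpT V f U (y + z) = kpT V f U z := by
  unfold kpT
  rw [← lintegral_add_right_eq_self (fun y' : V => f (kpAct U ((y' : Euc d) + z))) y]
  simp [add_assoc]

theorem kpT_bound {d : ℕ} (V : Submodule ℝ (Euc d)) (R : ℝ) (E : Set (Euc d))
    (hE : MeasurableSet E) (hER : E ⊆ Metric.closedBall 0 R)
    (U : Matrix.orthogonalGroup (Fin d) ℝ) (z : Euc d) :
    kpT V (E.indicator 1) U z ≤ volume (Metric.closedBall (0 : V) (2 * R)) := by
  set A : Set V := {y : V | kpAct U ((y : Euc d) + z) ∈ E} with hA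
  have hAm : MeasurableSet A := by
    have : Continuous (fun y : V => kpAct U ((y : Euc d) + z)) :=
      (kpAct U).continuous.comp (by fun_prop)
    exact this.measurable hE
  have h1 : kpT V (E.indicator 1) U z = volume A := by
    rw [← lintegral_indicator_one hAm]
    rfl
  rw [h1]
  rcases A.eq_empty_or_nonempty with h0 | ⟨y0, hy0⟩
  · simp [h0]
  · rw [← Measure.addHaar_closedBall_center volume y0]
    refine measure_mono fun y hy => ?_
    have a1 := hER hy
    have a2 := hER hy0
    rw [mem_closedBall_zero_iff, LinearIsometryEquiv.norm_map] at a1 a2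
    rw [Metric.mem_closedBall, dist_eq_norm]
    have : ((y - y0 : V) : Euc d) = ((y : Euc d) + z) - (y0 + z) := by push_cast; abel
    change ‖((y - y0 : V) : Euc d)‖ ≤ 2 * R
    rw [this]
    exact (norm_sub_le _ _).trans (by linarith)

theorem kp_sphere_est {d : ℕ} (hd0 : 0 < d) (V : Submodule ℝ (Euc d)) [Nontrivial V]
    (μ : Measure (Matrix.orthogonalGroup (Fin d) ℝ))
    (hμ1 : μ.IsMulLeftInvariant) (hμ2 : IsProbabilityMeasure μ) (R : ℝ)
    (t : ℝ) (ht : 0 < t) (htd : t * Module.finrank ℝ V ≤ d) :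
    ∃ C : ℝ≥0∞, C ≠ ∞ ∧ ∀ E : Set (Euc d), MeasurableSet E → E ⊆ Metric.closedBall 0 R → ∀ w,
      ∫⁻ U, (∫⁻ y : V, E.indicator 1 (kpAct U y + w)) ^ t ∂μ ≤
        C * (volume E) ^ (t * Module.finrank ℝ V / d) := by
  set k := Module.finrank ℝ V with hk
  have hk0 : 0 < k := Module.finrank_pos
  have hkR : (0:ℝ) < k := by exact_mod_cast hk0
  have hdR : (0:ℝ) < d := by exact_mod_cast hd0
  obtain ⟨C, hC, H⟩ := kp_rearr (volume : Measure V) d (by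
    have := Submodule.finrank_le V; simpa using this)
  obtain ⟨c, hc, H'⟩ := kp_avg hd0 V μ hμ1 hμ2
  have hs0 : 0 < t * k / d := by positivity
  have hs1 : t * k / d ≤ 1 := by rw [div_le_one hdR]; exact htd
  refine ⟨(C * c) ^ (t * k / d), ?_, fun E hE hER w => ?_⟩
  · exact ENNReal.rpow_ne_top_of_nonneg hs0.le (ENNReal.mul_ne_top hC hc)
  set N : Matrix.orthogonalGroup (Fin d) ℝ → ℝ≥0∞ :=
    fun U => ∫⁻ y : V, E.indicator 1 (kpAct U y + w) with hN
  have hEm : Measurable (E.indicator (1 : Euc d → ℝ≥0∞)) := measurable_one.indicator hE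
  have hgm : Measurable (fun z => E.indicator (1 : Euc d → ℝ≥0∞) (z + w)) :=
    hEm.comp (by fun_prop)
  have hjm : Measurable (fun q : Matrix.orthogonalGroup (Fin d) ℝ × V =>
      E.indicator (1 : Euc d → ℝ≥0∞) (kpAct q.1 q.2 + w)) := by
    have h : Measurable (fun q : Matrix.orthogonalGroup (Fin d) ℝ × V =>
      (q.1, (q.2 : Euc d))) := by fun_prop
    exact hgm.comp (kpAct_measurable.comp h)
  have hNm : Measurable N := hjm.lintegral_prod_right'
  have hpt : ∀ U, N U ^ ((d:ℝ) / k) ≤ C * ∫⁻ y : V, E.indicator 1 (kpAct U y + w) *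
      ENNReal.ofReal (‖y‖ ^ (d - k)) := by
    intro U
    set A : Set V := {y : V | kpAct U (y : Euc d) + w ∈ E} with hA
    have hAm : MeasurableSet A := by
      have h1 : Continuous (fun y : V => kpAct U (y : Euc d)) :=
        (kpAct U).continuous.comp (by fun_prop)
      have : Continuous (fun y : V => kpAct U (y : Euc d) + w) := by fun_prop
      exact this.measurable hE
    have h1 : N U = volume A := by
      rw [← lintegral_indicator_one hAm]
      rfl
    have hfin : volume A ≠ ∞ := by
      refine ((measure_mono (t := Metric.closedBall (0:V) (R + ‖w‖)) ?_).trans_lt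
        measure_closedBall_lt_top).ne
      intro y hy
      have a1 := hER hy
      rw [mem_closedBall_zero_iff] at a1 ⊢
      have a2 : ‖kpAct U (y : Euc d)‖ = ‖y‖ := by
        rw [LinearIsometryEquiv.norm_map]; rfl
      rw [← a2]
      have := norm_sub_le (kpAct U (y : Euc d) + w) w
      rw [add_sub_cancel_right] at this
      linarith
    rw [h1]
    refine (H A hAm hfin).trans (le_of_eq ?_)
    congr 1
    rw [← lintegral_indicator hAm]
    congr 1
    funext y
    by_cases hy : y ∈ A
    · have hy' : kpAct U (y : Euc d) + w ∈ E := hy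
      simp [hy, hy', hk]
    · have hy' : kpAct U (y : Euc d) + w ∉ E := hy
      simp [hy, hy']
  calc ∫⁻ U, N U ^ t ∂μ = ∫⁻ U, (N U ^ ((d:ℝ) / k)) ^ (t * k / d) ∂μ := by
        congr 1; funext U
        rw [← ENNReal.rpow_mul]
        congr 1
        field_simp
    _ ≤ (μ Set.univ) ^ (1 - t * k / d) * (∫⁻ U, N U ^ ((d:ℝ) / k) ∂μ) ^ (t * k / d) :=
        kp_jensen μ _ (hNm.pow_const _).aemeasurable _ hs0 hs1
    _ = (∫⁻ U, N U ^ ((d:ℝ) / k) ∂μ) ^ (t * k / d) := by simp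
    _ ≤ (∫⁻ U, C * (∫⁻ y : V, E.indicator 1 (kpAct U y + w) *
          ENNReal.ofReal (‖y‖ ^ (d - k))) ∂μ) ^ (t * k / d) := by
        gcongr with U
        exact hpt U
    _ = (C * (c * volume E)) ^ (t * k / d) := by
        rw [lintegral_const_mul' _ _ hC, H' _ hgm,
          lintegral_add_right_eq_self (E.indicator (1 : Euc d → ℝ≥0∞)) w,
          lintegral_indicator_one hE]
    _ = _ := by rw [← mul_assoc, ENNReal.mul_rpow_of_nonneg _ _ hs0.le]

theorem kp_double {d : ℕ} (hd0 : 0 < d) (V : Submodule ℝ (Euc d)) [Nontrivial V]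
    (μ : Measure (Matrix.orthogonalGroup (Fin d) ℝ))
    (hμ1 : μ.IsMulLeftInvariant) (hμ2 : IsProbabilityMeasure μ) (R : ℝ)
    (t ρ : ℝ) (ht : 0 < t) (htd : t * Module.finrank ℝ V ≤ d) (htρ : t ≤ ρ - 1) :
    ∃ C : ℝ≥0∞, C ≠ ∞ ∧ ∀ E : Set (Euc d), MeasurableSet E → E ⊆ Metric.closedBall 0 R →
      ∫⁻ U, (∫⁻ x : Vᗮ, kpT V (E.indicator 1) U x ^ ρ) ∂μ ≤
        C * (volume E * (volume E) ^ (t * Module.finrank ℝ V / d)) := by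
  obtain ⟨C, hC, H⟩ := kp_sphere_est hd0 V μ hμ1 hμ2 R t ht htd
  obtain ⟨c, hc, H'⟩ := kp_fubini V
  set C0 := volume (Metric.closedBall (0 : V) (2 * R)) with hC0
  have hC0' : C0 ≠ ∞ := measure_closedBall_lt_top.ne
  refine ⟨c * (C0 ^ (ρ - 1 - t) * C), ?_, fun E hE hER => ?_⟩
  · exact ENNReal.mul_ne_top hc (ENNReal.mul_ne_top
      (ENNReal.rpow_ne_top_of_nonneg (by linarith) hC0') hC)
  set χ : Euc d → ℝ≥0∞ := E.indicator 1 with hχ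
  have hEm : Measurable χ := measurable_one.indicator hE
  have hTm := kpT_measurable V χ hEm
  have hTU : ∀ U, Measurable (fun z => kpT V χ U z) := fun U => hTm.comp measurable_prodMk_left
  have hchiU : ∀ U : Matrix.orthogonalGroup (Fin d) ℝ, Measurable (fun z => χ (kpAct U z)) :=
    fun U => hEm.comp (kpAct U).continuous.measurable
  -- the transform recentered
  have hrec : ∀ U z, kpT V χ U ((kpAct U).symm z) = ∫⁻ y : V, χ (kpAct U y + z) := by
    intro U z
    unfold kpT
    simp
  have hNm : Measurable (fun q : Matrix.orthogonalGroup (Fin d) ℝ × Euc d =>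
      ∫⁻ y : V, χ (kpAct q.1 y + q.2)) := by
    apply Measurable.lintegral_prod_right'
      (f := fun q : (Matrix.orthogonalGroup (Fin d) ℝ × Euc d) × V =>
        χ (kpAct q.1.1 (q.2 : Euc d) + q.1.2))
    have h : Measurable (fun q : (Matrix.orthogonalGroup (Fin d) ℝ × Euc d) × V =>
        (q.1.1, (q.2 : Euc d))) := by fun_prop
    exact hEm.comp ((kpAct_measurable.comp h).add (by fun_prop))
  have hstep : ∀ U, ∫⁻ x : Vᗮ, kpT V χ U x ^ ρ =
      c * ∫⁻ z, χ z * (∫⁻ y : V, χ (kpAct U y + z)) ^ (ρ - 1) := by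
    intro U
    calc ∫⁻ x : Vᗮ, kpT V χ U x ^ ρ
        = ∫⁻ x : Vᗮ, ∫⁻ y : V, χ (kpAct U (y + x)) * kpT V χ U (y + x) ^ (ρ - 1) := by
          congr 1; funext x
          simp_rw [kpT_trans]
          rw [lintegral_mul_const]
          · have : ρ = 1 + (ρ - 1) := by ring
            conv_lhs => rw [this, ENNReal.rpow_add_of_nonneg _ _ zero_le_one (by linarith),
              ENNReal.rpow_one]
            rfl
          · exact (hchiU U).comp (by fun_prop)
      _ = c * ∫⁻ z, χ (kpAct U z) * kpT V χ U z ^ (ρ - 1) :=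
          H' (fun z => χ (kpAct U z) * kpT V χ U z ^ (ρ - 1))
            ((hchiU U).mul ((hTU U).pow_const _))
      _ = _ := by
          congr 1
          rw [← kp_act_lintegral U (fun z => χ z * (∫⁻ y : V, χ (kpAct U y + z)) ^ (ρ - 1))
            (hEm.mul (Measurable.pow_const (hNm.comp measurable_prodMk_left) _))]
          congr 1; funext z
          rw [← hrec]; simp
  simp_rw [hstep]
  have hjm : Measurable (fun q : Matrix.orthogonalGroup (Fin d) ℝ × Euc d =>
      χ q.2 * (∫⁻ y : V, χ (kpAct q.1 y + q.2)) ^ (ρ - 1)) :=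
    (hEm.comp measurable_snd).mul (hNm.pow_const _)
  rw [lintegral_const_mul' _ _ hc, lintegral_lintegral_swap hjm.aemeasurable, mul_assoc]
  gcongr
  have hin : ∀ z, ∫⁻ U, χ z * (∫⁻ y : V, χ (kpAct U y + z)) ^ (ρ - 1) ∂μ ≤
      χ z * (C0 ^ (ρ - 1 - t) * (C * (volume E) ^ (t * Module.finrank ℝ V / d))) := by
    intro z
    rw [lintegral_const_mul' _ _ (by
      rw [hχ]; by_cases hz : z ∈ E <;> simp [hz])]
    gcongr
    refine le_trans ?_ (mul_le_mul_right (H E hE hER z) _)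
    rw [← lintegral_const_mul' _ _ (ENNReal.rpow_ne_top_of_nonneg (by linarith) hC0')]
    refine lintegral_mono fun U => ?_
    have hb : ∫⁻ y : V, χ (kpAct U y + z) ≤ C0 := by
      rw [← hrec]; exact kpT_bound V R E hE hER U _
    have : ρ - 1 = (ρ - 1 - t) + t := by ring
    conv_lhs => rw [this, ENNReal.rpow_add_of_nonneg _ _ (by linarith) ht.le]
    gcongr
  refine (lintegral_mono hin).trans (le_of_eq ?_)
  rw [lintegral_mul_const _ hEm, hχ, lintegral_indicator_one hE]
  ring

theorem kp_restricted {d : ℕ} (hd0 : 0 < d) (V : Submodule ℝ (Euc d)) [Nontrivial V]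
    (μ : Measure (Matrix.orthogonalGroup (Fin d) ℝ))
    (hμ1 : μ.IsMulLeftInvariant) (hμ2 : IsProbabilityMeasure μ) (R : ℝ)
    (t ρ q : ℝ) (ht : 0 < t) (htd : t * Module.finrank ℝ V ≤ d) (htρ : t ≤ ρ - 1) (hρq : ρ ≤ q) :
    ∃ C : ℝ≥0∞, C ≠ ∞ ∧ ∀ E : Set (Euc d), MeasurableSet E → E ⊆ Metric.closedBall 0 R →
      ∫⁻ U, (∫⁻ x : Vᗮ, kpT V (E.indicator 1) U x ^ ρ) ^ (q / ρ) ∂μ ≤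
        C * (volume E) ^ (q / ρ + t * Module.finrank ℝ V / d) := by
  obtain ⟨C, hC, H⟩ := kp_double hd0 V μ hμ1 hμ2 R t ρ ht htd htρ
  obtain ⟨c, hc, H'⟩ := kp_fubini V
  set C0 := volume (Metric.closedBall (0 : V) (2 * R)) with hC0
  have hC0' : C0 ≠ ∞ := measure_closedBall_lt_top.ne
  have hρ : 0 < ρ := by linarith
  have hqρ : 0 ≤ q / ρ - 1 := by rw [sub_nonneg, one_le_div hρ]; exact hρq
  have hK : C0 ^ (ρ - 1) * c ≠ ∞ :=
    ENNReal.mul_ne_top (ENNReal.rpow_ne_top_of_nonneg (by linarith) hC0') hc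
  refine ⟨(C0 ^ (ρ - 1) * c) ^ (q / ρ - 1) * C, ?_, fun E hE hER => ?_⟩
  · exact ENNReal.mul_ne_top (ENNReal.rpow_ne_top_of_nonneg hqρ hK) hC
  set χ : Euc d → ℝ≥0∞ := E.indicator 1 with hχ
  have hEm : Measurable χ := measurable_one.indicator hE
  have hEfin : volume E ≠ ∞ :=
    ((measure_mono hER).trans_lt measure_closedBall_lt_top).ne
  have hG : ∀ U, ∫⁻ x : Vᗮ, kpT V χ U x ^ ρ ≤ C0 ^ (ρ - 1) * c * volume E := by
    intro U
    calc _ ≤ ∫⁻ x : Vᗮ, C0 ^ (ρ - 1) * kpT V χ U x := by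
          refine lintegral_mono fun x => ?_
          have : ρ = (ρ - 1) + 1 := by ring
          conv_lhs => rw [this, ENNReal.rpow_add_of_nonneg _ _ (by linarith) zero_le_one,
            ENNReal.rpow_one]
          gcongr
          · linarith
          · exact kpT_bound V R E hE hER U _
      _ = C0 ^ (ρ - 1) * ∫⁻ x : Vᗮ, ∫⁻ y : V, χ (kpAct U (y + x)) := by
          rw [lintegral_const_mul' _ _ (ENNReal.rpow_ne_top_of_nonneg (by linarith) hC0')]
          rfl
      _ = _ := by
          rw [H' (fun z => χ (kpAct U z)) (hEm.comp (kpAct U).continuous.measurable),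
            kp_act_lintegral U χ hEm, hχ, lintegral_indicator_one hE, mul_assoc]
  calc _ ≤ ∫⁻ U, (C0 ^ (ρ - 1) * c * volume E) ^ (q / ρ - 1) *
          (∫⁻ x : Vᗮ, kpT V χ U x ^ ρ) ∂μ := by
        refine lintegral_mono fun U => ?_
        have : q / ρ = (q / ρ - 1) + 1 := by ring
        conv_lhs => rw [this, ENNReal.rpow_add_of_nonneg _ _ hqρ zero_le_one,
            ENNReal.rpow_one]
        gcongr
        exact hG U
    _ = (C0 ^ (ρ - 1) * c * volume E) ^ (q / ρ - 1) *
          ∫⁻ U, (∫⁻ x : Vᗮ, kpT V χ U x ^ ρ) ∂μ := by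
        rw [lintegral_const_mul']
        exact ENNReal.rpow_ne_top_of_nonneg hqρ (ENNReal.mul_ne_top hK hEfin)
    _ ≤ (C0 ^ (ρ - 1) * c * volume E) ^ (q / ρ - 1) *
          (C * (volume E * (volume E) ^ (t * Module.finrank ℝ V / d))) := by
        gcongr
        exact H E hE hER
    _ = _ := by
        have e : q / ρ + t * Module.finrank ℝ V / d
          = (q / ρ - 1) + (1 + t * Module.finrank ℝ V / d) := by ring
        have h0 : 0 ≤ t * Module.finrank ℝ V / d := by positivity
        rw [e, ENNReal.rpow_add_of_nonneg _ _ hqρ (by linarith),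
          ENNReal.rpow_add_of_nonneg _ _ zero_le_one h0, ENNReal.rpow_one,
          ENNReal.mul_rpow_of_nonneg _ _ hqρ]
        ring


/-! ### Summation of the restricted estimates -/

theorem kp_weights (p q b : ℝ) (hq : 1 ≤ q) (hb : q < p * b) :
    ∃ w a : ℕ → ℝ≥0∞, (∀ j, w j * a j = 2 ^ j) ∧ (∀ j, a j ≠ ∞) ∧ ∑' j, w j ≤ 1 ∧
      ∑' j, w j * (a j ^ q * (ENNReal.ofReal ((2:ℝ) ^ (-(p * j)))) ^ b) ≠ ∞ := by
  have hq0 : 0 < q := by linarith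
  set σ : ℝ := (p * b - q) / (2 * q) with hσ
  have hσ0 : 0 < σ := div_pos (by linarith) (by linarith)
  have hσq : σ * q = (p * b - q) / 2 := by rw [hσ]; field_simp
  set δ : ℝ := (2:ℝ) ^ (-σ) with hδ
  have hδ0 : 0 < δ := by positivity
  have hδ1 : δ < 1 := Real.rpow_lt_one_of_one_lt_of_neg (by norm_num) (by linarith)
  set m : ℝ := 1 - δ with hm
  have hm0 : 0 < m := by linarith
  have hδj : ∀ j : ℕ, δ ^ j = (2:ℝ) ^ (-σ * j) := by
    intro j
    rw [hδ, ← Real.rpow_natCast, ← Real.rpow_mul (by norm_num)]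
  have h2j : ∀ j : ℕ, (2:ℝ) ^ j = (2:ℝ) ^ (j:ℝ) := fun j => (Real.rpow_natCast _ _).symm
  refine ⟨fun j => ENNReal.ofReal (m * δ ^ j), fun j => ENNReal.ofReal (2 ^ j / (m * δ ^ j)),
    fun j => ?_, fun j => ENNReal.ofReal_ne_top, ?_, ?_⟩
  · rw [← ENNReal.ofReal_mul (by positivity), mul_div_cancel₀ _ (by positivity),
      ENNReal.ofReal_pow (by norm_num)]
    simp
  · have hs : Summable (fun j : ℕ => m * δ ^ j) :=
      (summable_geometric_of_lt_one hδ0.le hδ1).mul_left m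
    rw [← ENNReal.ofReal_tsum_of_nonneg (fun j => by positivity) hs, tsum_mul_left,
      tsum_geometric_of_lt_one hδ0.le hδ1, ← hm, mul_inv_cancel₀ hm0.ne']
    simp
  · set θ : ℝ := (2:ℝ) ^ (q - p * b + σ * (q - 1)) with hθ
    have hθ0 : 0 < θ := by positivity
    have hθ1 : θ < 1 := Real.rpow_lt_one_of_one_lt_of_neg (by norm_num) (by nlinarith)
    have hs : Summable (fun j : ℕ => (m * (1 / m) ^ q) * θ ^ j) :=
      (summable_geometric_of_lt_one hθ0.le hθ1).mul_left _
    convert hs.tsum_ofReal_ne_top using 4 with j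
    rw [ENNReal.ofReal_rpow_of_nonneg (by positivity) hq0.le,
      ENNReal.ofReal_rpow_of_pos (by positivity),
      ← ENNReal.ofReal_mul (by positivity), ← ENNReal.ofReal_mul (by positivity)]
    congr 1
    have e1 : (2:ℝ) ^ j / (m * δ ^ j) = (1 / m) * (2:ℝ) ^ ((j:ℝ) + σ * j) := by
      rw [hδj, h2j, Real.rpow_add (by norm_num), neg_mul, Real.rpow_neg (by norm_num)]
      field_simp
    rw [e1, Real.mul_rpow (by positivity) (by positivity), ← Real.rpow_mul (by norm_num),
      ← Real.rpow_mul (by norm_num), hδj]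
    have e2 : θ ^ j = (2:ℝ) ^ (-σ * j) * ((2:ℝ) ^ (((j:ℝ) + σ * j) * q) * (2:ℝ) ^ (-(p * j) * b)) := by
      rw [hθ, ← Real.rpow_natCast, ← Real.rpow_mul (by norm_num), ← Real.rpow_add (by norm_num),
        ← Real.rpow_add (by norm_num)]
      congr 1; ring
    rw [e2]
    ring

/-- A function with values in `[0,∞]` is dominated by a dyadic sum. -/
theorem kp_dyadic (x : ℝ≥0∞) :
    x ≤ ∑' j : ℕ, (2:ℝ≥0∞) ^ j * (if (2:ℝ≥0∞) ^ j ≤ x + 1 then 1 else 0) := by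
  have hpow : ∀ n : ℕ, (2:ℝ≥0∞) ^ n ≤ x + 1 → (2:ℝ≥0∞) ^ (n + 1) ≤
      1 + ∑ j ∈ Finset.range (n+1), (2:ℝ≥0∞) ^ j * (if (2:ℝ≥0∞) ^ j ≤ x + 1 then 1 else 0) := by
    intro n
    induction n with
    | zero => intro _; simp; norm_num
    | succ n ih =>
      intro h
      have h' : (2:ℝ≥0∞) ^ n ≤ x + 1 := le_trans (by gcongr <;> simp) h
      rw [Finset.sum_range_succ, if_pos h, mul_one, ← add_assoc, pow_succ, mul_two]
      exact add_le_add (ih h') le_rfl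
  by_cases hall : ∀ n : ℕ, (2:ℝ≥0∞) ^ n ≤ x + 1
  · have : ∑' j : ℕ, (2:ℝ≥0∞) ^ j * (if (2:ℝ≥0∞) ^ j ≤ x + 1 then 1 else 0) = ∞ := by
      rw [← top_le_iff, ← ENNReal.tsum_const_eq_top_of_ne_zero (α := ℕ) (c := 1) one_ne_zero]
      refine ENNReal.tsum_le_tsum fun j => ?_
      rw [if_pos (hall j), mul_one]
      exact one_le_pow₀ (by norm_num)
    rw [this]; exact le_top
  · push Not at hall
    classical
    have hex := hall
    set n := Nat.find hex with hn
    have h1 : x + 1 < 2 ^ n := Nat.find_spec hex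
    have hn0 : n ≠ 0 := by
      intro h0
      rw [h0, pow_zero] at h1
      exact absurd h1 (not_lt.2 le_add_self)
    obtain ⟨l, hl⟩ := Nat.exists_eq_succ_of_ne_zero hn0
    have h2 : (2:ℝ≥0∞) ^ l ≤ x + 1 := by
      have := Nat.find_min hex (m := l) (by omega)
      simpa using this
    have h3 := hpow l h2
    rw [hl] at h1
    have h4 : x + 1 ≤ (∑' j : ℕ, (2:ℝ≥0∞) ^ j * (if (2:ℝ≥0∞) ^ j ≤ x + 1 then 1 else 0)) + 1 := by
      refine h1.le.trans (h3.trans ?_)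
      rw [add_comm]
      gcongr
      exact ENNReal.sum_le_tsum _
    exact (ENNReal.add_le_add_iff_right ENNReal.one_ne_top).1 h4

theorem kp_strong {d : ℕ} (V : Submodule ℝ (Euc d))
    (μ : Measure (Matrix.orthogonalGroup (Fin d) ℝ)) [IsProbabilityMeasure μ]
    (R : ℝ) (p ρ q b : ℝ) (hp : 1 ≤ p) (hρ : 1 ≤ ρ) (hρq : ρ ≤ q) (hb : q < p * b)
    (C : ℝ≥0∞) (hC : C ≠ ∞) (H : ∀ E : Set (Euc d), MeasurableSet E → E ⊆ Metric.closedBall 0 R →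
      ∫⁻ U, (∫⁻ x : Vᗮ, kpT V (E.indicator 1) U x ^ ρ) ^ (q / ρ) ∂μ ≤ C * (volume E) ^ b) :
    ∃ A : ℝ≥0∞, A ≠ ∞ ∧ ∀ f : Euc d → ℝ≥0∞, Measurable f →
      (∀ z, z ∉ Metric.closedBall (0 : Euc d) R → f z = 0) → ∫⁻ z, f z ^ p ≤ 1 →
      ∫⁻ U, (∫⁻ x : Vᗮ, kpT V f U x ^ ρ) ^ (q / ρ) ∂μ ≤ A := by
  have hq : 1 ≤ q := hρ.trans hρq
  have hρ0 : 0 < ρ := by linarith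
  have hqρ : 1 ≤ q / ρ := by rw [one_le_div hρ0]; exact hρq
  have hb0 : 0 < b := by
    by_contra h
    push Not at h
    nlinarith
  obtain ⟨w, a, hwa, ha, hw, hsum⟩ := kp_weights p q b hq hb
  set B := Metric.closedBall (0 : Euc d) R with hB
  set K : ℝ≥0∞ := 2 ^ (p - 1) * (1 + volume B) with hK
  have hKtop : K ≠ ∞ := by
    refine ENNReal.mul_ne_top (ENNReal.rpow_ne_top_of_nonneg (by linarith) (by simp)) ?_
    exact ENNReal.add_ne_top.2 ⟨by simp, measure_closedBall_lt_top.ne⟩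
  refine ⟨(C * K ^ b) * ∑' j : ℕ, w j * (a j ^ q * (ENNReal.ofReal ((2:ℝ) ^ (-(p * j)))) ^ b),
    ENNReal.mul_ne_top (ENNReal.mul_ne_top hC (ENNReal.rpow_ne_top_of_nonneg hb0.le hKtop)) hsum,
    fun f hf hsupp hfp => ?_⟩
  set E : ℕ → Set (Euc d) := fun j => {z | (2:ℝ≥0∞) ^ j ≤ f z + 1} ∩ B with hE
  have hEm : ∀ j, MeasurableSet (E j) := fun j =>
    (measurableSet_le measurable_const (hf.add_const 1)).inter Metric.isClosed_closedBall.measurableSet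
  have hEB : ∀ j, E j ⊆ B := fun j => Set.inter_subset_right
  -- Markov
  have hvol : ∀ j : ℕ, volume (E j) ≤ K * ENNReal.ofReal ((2:ℝ) ^ (-(p * j))) := by
    intro j
    have h1 : ((2:ℝ≥0∞) ^ j) ^ p * volume (E j) ≤ K := by
      calc _ = ∫⁻ z in E j, ((2:ℝ≥0∞) ^ j) ^ p := by simp
        _ ≤ ∫⁻ z in E j, (f z + 1) ^ p := by
          refine setLIntegral_mono' (hEm j) fun z hz => ?_
          exact ENNReal.rpow_le_rpow hz.1 (by linarith)
        _ ≤ ∫⁻ z in B, (f z + 1) ^ p := lintegral_mono_set (hEB j)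
        _ ≤ ∫⁻ z in B, 2 ^ (p - 1) * (f z ^ p + 1 ^ p) :=
          lintegral_mono fun z => ENNReal.rpow_add_le_mul_rpow_add_rpow _ _ hp
        _ = 2 ^ (p - 1) * ((∫⁻ z in B, f z ^ p) + volume B) := by
          rw [lintegral_const_mul' _ _ (ENNReal.rpow_ne_top_of_nonneg (by linarith) (by simp)),
            lintegral_add_right _ measurable_const]
          simp
        _ ≤ K := by
          rw [hK]
          gcongr
          exact (setLIntegral_le_lintegral _ _).trans hfp
    have h2 : ENNReal.ofReal ((2:ℝ) ^ (-(p * j))) = (((2:ℝ≥0∞) ^ j) ^ p)⁻¹ := by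
      rw [← ENNReal.ofReal_rpow_of_pos (by norm_num), ENNReal.rpow_neg, ← ENNReal.rpow_natCast,
        ← ENNReal.rpow_mul, mul_comm p]
      simp
    rw [h2, ← div_eq_mul_inv, ENNReal.le_div_iff_mul_le, mul_comm]
    · exact h1
    · left; simp
    · left
      exact ENNReal.rpow_ne_top_of_nonneg (by linarith) (by simp)
  -- domination
  have hdom : ∀ z, f z ≤ ∑' j, w j * (a j * (E j).indicator 1 z) := by
    intro z
    by_cases hz : z ∈ B
    · refine (kp_dyadic (f z)).trans (ENNReal.tsum_le_tsum fun j => ?_)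
      rw [← mul_assoc, hwa]
      gcongr
      by_cases hj : (2:ℝ≥0∞) ^ j ≤ f z + 1
      · have : z ∈ E j := ⟨hj, hz⟩
        rw [if_pos hj]
        simp [this]
      · simp [hj]
    · rw [hsupp z hz]; exact zero_le
  have hχm : ∀ j, Measurable ((E j).indicator (1 : Euc d → ℝ≥0∞)) :=
    fun j => measurable_one.indicator (hEm j)
  have hT : ∀ U z, kpT V f U z ≤ ∑' j, w j * (a j * kpT V ((E j).indicator 1) U z) := by
    intro U z
    have hmm : ∀ j, Measurable (fun y : V => (E j).indicator (1 : Euc d → ℝ≥0∞) (kpAct U (y + z))) := by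
      intro j
      have : Continuous (fun y : V => kpAct U ((y : Euc d) + z)) :=
        (kpAct U).continuous.comp (by fun_prop)
      exact (hχm j).comp this.measurable
    calc kpT V f U z ≤ ∫⁻ y : V, ∑' j, w j * (a j * (E j).indicator 1 (kpAct U (y + z))) :=
          lintegral_mono fun y => hdom _
      _ = ∑' j, ∫⁻ y : V, w j * (a j * (E j).indicator 1 (kpAct U (y + z))) := by
          rw [lintegral_tsum]
          intro j
          exact (((hmm j).const_mul _).const_mul _).aemeasurable
      _ = _ := by
          congr 1; funext j
          rw [lintegral_const_mul _ ((hmm j).const_mul _), lintegral_const_mul _ (hmm j)]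
          rfl
  have hTm : ∀ j, Measurable (fun r : Matrix.orthogonalGroup (Fin d) ℝ × Vᗮ =>
      kpT V ((E j).indicator 1) r.1 r.2 ^ ρ) := by
    intro j
    have h : Measurable (fun r : Matrix.orthogonalGroup (Fin d) ℝ × Vᗮ => (r.1, (r.2 : Euc d))) := by
      fun_prop
    exact ((kpT_measurable V _ (hχm j)).comp h).pow_const ρ
  have hTU : ∀ j U, Measurable (fun x : Vᗮ => kpT V ((E j).indicator 1) U x ^ ρ) :=
    fun j U => (hTm j).comp measurable_prodMk_left
  set G : ℕ → Matrix.orthogonalGroup (Fin d) ℝ → ℝ≥0∞ :=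
    fun j U => ∫⁻ x : Vᗮ, kpT V ((E j).indicator 1) U x ^ ρ with hG
  have hGm : ∀ j, Measurable (G j) := fun j => (hTm j).lintegral_prod_right'
  have hin : ∀ U, ∫⁻ x : Vᗮ, kpT V f U x ^ ρ ≤ ∑' j, w j * (a j ^ ρ * G j U) := by
    intro U
    calc _ ≤ ∫⁻ x : Vᗮ, ∑' j, w j * (a j ^ ρ * kpT V ((E j).indicator 1) U x ^ ρ) := by
          refine lintegral_mono fun x => ?_
          refine (ENNReal.rpow_le_rpow (hT U x) hρ0.le).trans ?_
          refine (kp_tsum_jensen w _ hw ρ hρ).trans (le_of_eq ?_)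
          congr 1; funext j
          rw [ENNReal.mul_rpow_of_nonneg _ _ hρ0.le]
      _ = ∑' j, ∫⁻ x : Vᗮ, w j * (a j ^ ρ * kpT V ((E j).indicator 1) U x ^ ρ) := by
          rw [lintegral_tsum]
          intro j
          exact (((hTU j U).const_mul _).const_mul _).aemeasurable
      _ = _ := by
          congr 1; funext j
          rw [lintegral_const_mul _ ((hTU j U).const_mul _), lintegral_const_mul _ (hTU j U)]
  calc _ ≤ ∫⁻ U, ∑' j, w j * (a j ^ q * G j U ^ (q / ρ)) ∂μ := by
        refine lintegral_mono fun U => ?_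
        refine (ENNReal.rpow_le_rpow (hin U) (by linarith)).trans ?_
        refine (kp_tsum_jensen w _ hw (q / ρ) hqρ).trans (le_of_eq ?_)
        congr 1; funext j
        rw [ENNReal.mul_rpow_of_nonneg _ _ (by linarith), ← ENNReal.rpow_mul,
          mul_div_cancel₀ _ hρ0.ne']
    _ = ∑' j, ∫⁻ U, w j * (a j ^ q * G j U ^ (q / ρ)) ∂μ := by
        rw [lintegral_tsum]
        intro j
        exact ((((hGm j).pow_const _).const_mul _).const_mul _).aemeasurable
    _ = ∑' j, w j * (a j ^ q * ∫⁻ U, G j U ^ (q / ρ) ∂μ) := by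
        congr 1; funext j
        rw [lintegral_const_mul _ (((hGm j).pow_const _).const_mul _),
          lintegral_const_mul _ ((hGm j).pow_const _)]
    _ ≤ ∑' j : ℕ, (C * K ^ b) * (w j * (a j ^ q * (ENNReal.ofReal ((2:ℝ) ^ (-(p * j)))) ^ b)) := by
        refine ENNReal.tsum_le_tsum fun j => ?_
        calc _ ≤ w j * (a j ^ q * (C * (K * ENNReal.ofReal ((2:ℝ) ^ (-(p * j)))) ^ b)) := by
              gcongr
              refine (H (E j) (hEm j) (hEB j)).trans ?_
              gcongr
              exact hvol j
          _ = _ := by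
              rw [ENNReal.mul_rpow_of_nonneg _ _ hb0.le]
              ring
    _ = _ := ENNReal.tsum_mul_left


/-! ### Final assembly -/

theorem kp_numeric (d k ρ Q t : ℝ) (hk : 2 ≤ k) (hd : 5 + k ≤ d)
    (hρ : ρ = (d - k) / (k - 1 / 4)) (hρ1 : 1 < ρ) (hQ : Q = d - k + 7 / 4)
    (ht : t = min (ρ - 1) (d / k)) :
    Q < d / (k + 3 / 4) * (Q / ρ + t * k / d) := by
  have hk4 : 0 < k - 1 / 4 := by linarith
  have hd0 : 0 < d := by linarith
  have hD : 0 < d - k := by linarith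
  have hQ0 : 0 < Q := by linarith
  have ht0 : 0 < t := by
    rw [ht]; exact lt_min (by linarith) (div_pos hd0 (by linarith))
  have h2k : k - 1 / 4 < d - k := by
    rw [hρ, one_lt_div hk4] at hρ1; exact hρ1
  have key : Q * (d - k ^ 2 - 3 / 4 * k) < t * k * (d - k) := by
    have hpos : 0 < t * k * (d - k) := by positivity
    rcases le_or_gt (d - k ^ 2 - 3 / 4 * k) 0 with h | h
    · nlinarith
    · rcases min_choice (ρ - 1) (d / k) with h' | h'
      · have e : t * (k - 1 / 4) = d - 2 * k + 1 / 4 := by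
          rw [ht, h', hρ, sub_mul, div_mul_cancel₀ _ hk4.ne']; ring
        have h1 : (d - k + 7 / 4) * (d - k ^ 2 - 3 / 4 * k) < (d - 2 * k + 1 / 4) * (d - k) := by
          nlinarith [mul_nonneg (sub_nonneg.2 hk) hD.le, mul_nonneg (sub_nonneg.2 hk) (sub_nonneg.2 hk),
            mul_nonneg (mul_nonneg (sub_nonneg.2 hk) (sub_nonneg.2 hk)) hD.le]
        rw [hQ]
        have h2 : (d - 2 * k + 1 / 4) * (d - k) ≤ t * k * (d - k) := by
          rw [← e]
          nlinarith [mul_pos ht0 hD]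
        linarith
      · have e : t * k = d := by
          rw [ht, h']; field_simp
        rw [e, hQ]
        nlinarith [mul_nonneg (sub_nonneg.2 hk) hD.le, mul_nonneg (sub_nonneg.2 hk) (sub_nonneg.2 hk),
            mul_nonneg (mul_nonneg (sub_nonneg.2 hk) (sub_nonneg.2 hk)) hD.le]
  have e1 : d / (k + 3 / 4) * (Q / ρ + t * k / d) =
      (d * Q * (k - 1 / 4) + t * k * (d - k)) / ((k + 3 / 4) * (d - k)) := by
    rw [hρ]
    have : d - k ≠ 0 := hD.ne'
    field_simp
  rw [e1, lt_div_iff₀ (by positivity)]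
  nlinarith

theorem kp_M0_finrank (d k : ℕ) (hkd : k ≤ d) : Module.finrank ℝ (M₀ d k) = k := by
  have h : M₀ d k = Submodule.span ℝ (Set.range
      (fun i : Fin k => (EuclideanSpace.single (Fin.castLE hkd i) (1:ℝ) : Euc d))) := by
    unfold M₀
    congr 1
    ext x
    constructor
    · rintro ⟨i, hi, rfl⟩
      exact ⟨⟨i, hi⟩, rfl⟩
    · rintro ⟨i, rfl⟩
      exact ⟨Fin.castLE hkd i, i.2, rfl⟩
  rw [h, finrank_span_eq_card]
  · simp
  · have := (EuclideanSpace.basisFun (Fin d) ℝ).orthonormal.linearIndependent.comp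
      (Fin.castLE hkd) (Fin.castLE_injective hkd)
    have heq : (fun i : Fin k => (EuclideanSpace.single (Fin.castLE hkd i) (1:ℝ) : Euc d)) =
        (EuclideanSpace.basisFun (Fin d) ℝ) ∘ Fin.castLE hkd := by
      funext i
      simp
    rw [heq]
    exact this

theorem kp_map_lintegral {d : ℕ} (S T : Submodule ℝ (Euc d)) (e : Euc d ≃ₗᵢ[ℝ] Euc d)
    (h : T = S.map (e.toLinearEquiv : Euc d →ₗ[ℝ] Euc d)) (φ : Euc d → ℝ≥0∞) :
    ∫⁻ y : T, φ y = ∫⁻ y : S, φ (e y) := by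
  subst h
  let e' : S ≃ₗᵢ[ℝ] (S.map (e.toLinearEquiv : Euc d →ₗ[ℝ] Euc d)) :=
    ⟨e.toLinearEquiv.submoduleMap S, fun x => e.norm_map x⟩
  have := e'.measurePreserving.lintegral_comp_emb
    (e'.toHomeomorph.measurableEmbedding) (fun y => φ y)
  rw [← this]
  rfl

theorem kp_bridge (d k : ℕ) (U : Matrix.orthogonalGroup (Fin d) ℝ) (f : Euc d → ℝ≥0∞) (r : ℝ) :
    ∫⁻ x : ↥((planeOf d k U)ᗮ), (kplaneT d (planeOf d k U) f (x : Euc d)) ^ r =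
      ∫⁻ x : ↥((M₀ d k)ᗮ), kpT (M₀ d k) f U x ^ r := by
  have h1 : planeOf d k U = (M₀ d k).map ((kpAct U).toLinearEquiv : Euc d →ₗ[ℝ] Euc d) := by
    unfold planeOf
    congr 1
    ext1 z
    exact (kpAct_apply U z).symm
  have h2 : (planeOf d k U)ᗮ = ((M₀ d k)ᗮ).map ((kpAct U).toLinearEquiv : Euc d →ₗ[ℝ] Euc d) := by
    rw [h1]
    exact ((M₀ d k).map_orthogonal_equiv (kpAct U)).symm
  rw [kp_map_lintegral _ _ (kpAct U) h2 (fun x => kplaneT d (planeOf d k U) f x ^ r)]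
  congr 1; funext x
  congr 1
  unfold kplaneT kpT
  rw [kp_map_lintegral _ _ (kpAct U) h1 (fun y => f (y + kpAct U x))]
  congr 1; funext y
  rw [map_add]

theorem kp_reduce {d : ℕ} (V : Submodule ℝ (Euc d))
    (μ : Measure (Matrix.orthogonalGroup (Fin d) ℝ)) [IsProbabilityMeasure μ]
    (R : ℝ) (q r Q ρ : ℝ) (hq : 0 < q) (hr : 0 < r) (hqQ : q ≤ Q) (hrρ : r ≤ ρ)
    (A : ℝ≥0∞) (hA : A ≠ ∞) :
    ∃ A' : ℝ≥0∞, A' ≠ ∞ ∧ ∀ f : Euc d → ℝ≥0∞, Measurable f →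
      (∀ z, z ∉ Metric.closedBall (0 : Euc d) R → f z = 0) →
      ∫⁻ U, (∫⁻ x : Vᗮ, kpT V f U x ^ ρ) ^ (Q / ρ) ∂μ ≤ A →
      (∫⁻ U, (∫⁻ x : Vᗮ, kpT V f U x ^ r) ^ (q / r) ∂μ) ^ (1 / q) ≤ A' := by
  have hρ0 : 0 < ρ := by linarith
  have hQ0 : 0 < Q := by linarith
  have hrρ' : r / ρ ≤ 1 := (div_le_one hρ0).2 hrρ
  have hqQ' : q / Q ≤ 1 := (div_le_one hQ0).2 hqQ
  set B := Metric.closedBall (0 : Vᗮ) R with hB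
  set K : ℝ≥0∞ := ((volume B) ^ (1 - r / ρ)) ^ (q / r) with hK
  have hKtop : K ≠ ∞ := ENNReal.rpow_ne_top_of_nonneg (by positivity)
    (ENNReal.rpow_ne_top_of_nonneg (by linarith) measure_closedBall_lt_top.ne)
  refine ⟨(K * A ^ (q / Q)) ^ (1 / q), ENNReal.rpow_ne_top_of_nonneg (by positivity)
    (ENNReal.mul_ne_top hKtop (ENNReal.rpow_ne_top_of_nonneg (by positivity) hA)), ?_⟩
  intro f hf hsupp hA
  have hzero : ∀ U (x : Vᗮ), x ∉ B → kpT V f U x = 0 := by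
    intro U x hx
    unfold kpT
    rw [← lintegral_zero (μ := (volume : Measure V))]
    congr 1; funext y
    apply hsupp
    intro hmem
    apply hx
    rw [mem_closedBall_zero_iff] at hmem ⊢
    rw [LinearIsometryEquiv.norm_map] at hmem
    have horth : inner ℝ (y : Euc d) (x : Euc d) = 0 := x.2 y y.2
    have := norm_add_sq_eq_norm_sq_add_norm_sq_of_inner_eq_zero (y : Euc d) (x : Euc d) horth
    have h2 : ‖(x : Euc d)‖ ≤ ‖(y : Euc d) + x‖ :=
      abs_le_of_sq_le_sq' (by nlinarith [norm_nonneg (y : Euc d)]) (norm_nonneg _) |>.2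
    exact h2.trans hmem
  have hTm : Measurable (fun s : Matrix.orthogonalGroup (Fin d) ℝ × Vᗮ =>
      kpT V f s.1 s.2 ^ ρ) := by
    have h : Measurable (fun r : Matrix.orthogonalGroup (Fin d) ℝ × Vᗮ => (r.1, (r.2 : Euc d))) := by
      fun_prop
    exact ((kpT_measurable V _ hf).comp h).pow_const ρ
  have hin : ∀ U, (∫⁻ x : Vᗮ, kpT V f U x ^ r) ^ (q / r) ≤
      K * ((∫⁻ x : Vᗮ, kpT V f U x ^ ρ) ^ (Q / ρ)) ^ (q / Q) := by
    intro U
    have h1 : ∫⁻ x : Vᗮ, kpT V f U x ^ r ≤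
        (volume B) ^ (1 - r / ρ) * (∫⁻ x : Vᗮ, kpT V f U x ^ ρ) ^ (r / ρ) := by
      have hm : Measurable (fun x : Vᗮ => kpT V f U x ^ ρ) := hTm.comp measurable_prodMk_left
      have hj := kp_jensen ((volume : Measure Vᗮ).restrict B) (fun x => kpT V f U x ^ ρ)
        hm.aemeasurable (r / ρ) (by positivity) hrρ'
      rw [Measure.restrict_apply_univ] at hj
      calc ∫⁻ x : Vᗮ, kpT V f U x ^ r = ∫⁻ x in B, kpT V f U x ^ r := by
            rw [setLIntegral_eq_of_support_subset]
            intro x hx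
            by_contra hxB
            apply hx
            simp only [hzero U x hxB]
            exact ENNReal.zero_rpow_of_pos hr
        _ = ∫⁻ x in B, (kpT V f U x ^ ρ) ^ (r / ρ) := by
            congr 1; funext x
            rw [← ENNReal.rpow_mul, mul_div_cancel₀ _ hρ0.ne']
        _ ≤ _ := hj
        _ ≤ _ := by
            gcongr
            exact Measure.restrict_le_self
    refine (ENNReal.rpow_le_rpow h1 (by positivity)).trans (le_of_eq ?_)
    rw [ENNReal.mul_rpow_of_nonneg _ _ (by positivity), ← ENNReal.rpow_mul _ (r / ρ),
      ← ENNReal.rpow_mul _ (Q / ρ)]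
    congr 2
    field_simp
  refine ENNReal.rpow_le_rpow ?_ (by positivity)
  calc _ ≤ ∫⁻ U, K * ((∫⁻ x : Vᗮ, kpT V f U x ^ ρ) ^ (Q / ρ)) ^ (q / Q) ∂μ := lintegral_mono hin
    _ = K * ∫⁻ U, ((∫⁻ x : Vᗮ, kpT V f U x ^ ρ) ^ (Q / ρ)) ^ (q / Q) ∂μ :=
      lintegral_const_mul' _ _ hKtop
    _ ≤ K * A ^ (q / Q) := by
      gcongr
      have hm : Measurable (fun U => (∫⁻ x : Vᗮ, kpT V f U x ^ ρ) ^ (Q / ρ)) :=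
        (hTm.lintegral_prod_right').pow_const _
      refine (kp_jensen μ _ hm.aemeasurable (q / Q) (by positivity) hqQ').trans ?_
      rw [measure_univ, ENNReal.one_rpow, one_mul]
      gcongr

theorem kp_homog {d : ℕ} (V : Submodule ℝ (Euc d))
    (μ : Measure (Matrix.orthogonalGroup (Fin d) ℝ)) (q r : ℝ) (hq : 0 < q) (hr : 0 < r)
    (c : ℝ≥0∞) (hc : c ≠ ∞) (g : Euc d → ℝ≥0∞) :
    (∫⁻ U, (∫⁻ x : Vᗮ, kpT V (fun z => c * g z) U x ^ r) ^ (q / r) ∂μ) ^ (1 / q) =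
      c * (∫⁻ U, (∫⁻ x : Vᗮ, kpT V g U x ^ r) ^ (q / r) ∂μ) ^ (1 / q) := by
  have h1 : ∀ U z, kpT V (fun z => c * g z) U z = c * kpT V g U z := by
    intro U z
    unfold kpT
    rw [lintegral_const_mul' _ _ hc]
  have h2 : ∀ U, (∫⁻ x : Vᗮ, kpT V (fun z => c * g z) U x ^ r) ^ (q / r) =
      c ^ q * (∫⁻ x : Vᗮ, kpT V g U x ^ r) ^ (q / r) := by
    intro U
    simp_rw [h1, ENNReal.mul_rpow_of_nonneg _ _ hr.le]
    rw [lintegral_const_mul' _ _ (ENNReal.rpow_ne_top_of_nonneg hr.le hc),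
      ENNReal.mul_rpow_of_nonneg _ _ (by positivity), ← ENNReal.rpow_mul,
      mul_div_cancel₀ _ hr.ne']
  simp_rw [h2]
  rw [lintegral_const_mul' _ _ (ENNReal.rpow_ne_top_of_nonneg hq.le hc),
      ENNReal.mul_rpow_of_nonneg _ _ (by positivity), ← ENNReal.rpow_mul,
      mul_one_div_cancel hq.ne', ENNReal.rpow_one]

/-- Corollary (k-plane estimate): for `k ≥ 2`, `d ≥ 5 + k`, `p = d/(k + 3/4)`,
`1 + (d-k)/r > d/p`, `q < (4(d-(k-1))+3)/4`, the mixed-norm `k`-plane transform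
bound holds for functions supported on a ball.  The rotation invariant probability
measure `γ` on `G(d,k)` is realized as the pushforward, under `A ↦ A(M₀)`, of the
normalized Haar measure `μ` on `O(d)` (i.e. the unique left-invariant Borel
probability measure on `O(d)`); the `γ`-integral over `G(d,k)` is thus written as
a `μ`-integral over `O(d)`. -/
theorem statement2 (d k : ℕ) (hk : 2 ≤ k) (hd : 5 + k ≤ d) (p q r : ℝ)
    (hp : p = (d:ℝ) / ((k:ℝ) + 3 / 4))
    (hq1 : 1 ≤ q) (hq2 : q < (4 * ((d:ℝ) - ((k:ℝ) - 1)) + 3) / 4)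
    (hr1 : 1 ≤ r) (hr2 : 1 + ((d:ℝ) - (k:ℝ)) / r > (d:ℝ) / p)
    (μ : Measure (Matrix.orthogonalGroup (Fin d) ℝ))
    (hμ1 : μ.IsMulLeftInvariant) (hμ2 : IsProbabilityMeasure μ)
    (R : ℝ) (hR : 0 < R) :
    ∃ A : ℝ, 0 < A ∧ ∀ f : Euc d → ℝ≥0∞, Measurable f →
      (∀ z, z ∉ Metric.closedBall (0 : Euc d) R → f z = 0) →
      (∫⁻ U, (∫⁻ x : ↥((planeOf d k U)ᗮ),
          (kplaneT d (planeOf d k U) f (x : Euc d)) ^ r) ^ (q / r) ∂μ) ^ (1 / q)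
        ≤ ENNReal.ofReal A * (∫⁻ z, f z ^ p) ^ (1 / p) := by
  have hk' : (2:ℝ) ≤ k := by exact_mod_cast hk
  have hd' : 5 + (k:ℝ) ≤ d := by exact_mod_cast hd
  have hd0 : (0:ℝ) < d := by linarith
  have hp1 : 1 ≤ p := by
    rw [hp, one_le_div (by linarith)]; linarith
  have hp0 : 0 < p := by linarith
  have hq0 : 0 < q := by linarith
  have hr0 : 0 < r := by linarith
  obtain ⟨ρ, hρ⟩ : ∃ ρ : ℝ, ρ = ((d:ℝ) - k) / (k - 1 / 4) := ⟨_, rfl⟩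
  obtain ⟨Q, hQ⟩ : ∃ Q : ℝ, Q = (d:ℝ) - k + 7 / 4 := ⟨_, rfl⟩
  obtain ⟨t, ht⟩ : ∃ t : ℝ, t = min (ρ - 1) ((d:ℝ) / k) := ⟨_, rfl⟩
  have hrρ : r < ρ := by
    have e : (d:ℝ) / p = k + 3 / 4 := by rw [hp]; field_simp
    rw [e] at hr2
    have h : (k:ℝ) - 1 / 4 < ((d:ℝ) - k) / r := by linarith
    rw [lt_div_iff₀ hr0] at h
    rw [hρ, lt_div_iff₀ (by linarith)]
    linarith
  have hρ1 : 1 < ρ := by linarith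
  have hqQ : q < Q := by rw [hQ]; linarith
  have hρQ : ρ ≤ Q := by
    rw [hρ, hQ, div_le_iff₀ (by linarith)]
    nlinarith
  have ht0 : 0 < t := by
    rw [ht]; exact lt_min (by linarith) (by positivity)
  have hfin : Module.finrank ℝ (M₀ d k) = k := kp_M0_finrank d k (by omega)
  have : Nontrivial (M₀ d k) := by
    apply Module.nontrivial_of_finrank_pos (R := ℝ)
    omega
  have htd : t * Module.finrank ℝ (M₀ d k) ≤ d := by
    rw [hfin]
    calc t * k ≤ (d:ℝ) / k * k := by
          gcongr; rw [ht]; exact min_le_right _ _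
      _ = d := by field_simp
  obtain ⟨C, hC, H⟩ := kp_restricted (by omega) (M₀ d k) μ hμ1 hμ2 R t ρ Q ht0 htd
    (by rw [ht]; exact min_le_left _ _) hρQ
  rw [hfin] at H
  have hnum := kp_numeric d k ρ Q t hk' hd' hρ hρ1 hQ ht
  rw [← hp] at hnum
  obtain ⟨A1, hA1, H1⟩ := kp_strong (M₀ d k) μ R p ρ Q _ hp1 hρ1.le hρQ hnum C hC H
  obtain ⟨A2, hA2, H2⟩ := kp_reduce (M₀ d k) μ R q r Q ρ hq0 hr0 hqQ.le hrρ.le A1 hA1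
  refine ⟨A2.toReal + 1, by positivity, fun f hf hsupp => ?_⟩
  simp_rw [kp_bridge]
  have hA3 : A2 ≤ ENNReal.ofReal (A2.toReal + 1) := by
    rw [ENNReal.le_ofReal_iff_toReal_le hA2 (by positivity)]
    linarith
  set N := (∫⁻ z, f z ^ p) ^ (1 / p) with hN
  have hA30 : ENNReal.ofReal (A2.toReal + 1) ≠ 0 := by
    rw [Ne, ENNReal.ofReal_eq_zero, not_le]; positivity
  by_cases hNtop : N = ∞
  · rw [hNtop, ENNReal.mul_top hA30]
    exact le_top
  rw [mul_comm, ← ENNReal.div_le_iff_le_mul (Or.inl hA30) (Or.inl ENNReal.ofReal_ne_top)]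
  refine le_of_forall_gt_imp_ge_of_dense fun c hc => ?_
  by_cases hctop : c = ∞
  · rw [hctop]; exact le_top
  have hc0 : c ≠ 0 := (zero_le.trans_lt hc).ne'
  rw [ENNReal.div_le_iff_le_mul (Or.inl hA30) (Or.inl ENNReal.ofReal_ne_top)]
  have hfg : f = fun z => c * (c⁻¹ * f z) := by
    funext z
    rw [← mul_assoc, ENNReal.mul_inv_cancel hc0 hctop, one_mul]
  have hg1 : ∫⁻ z, (c⁻¹ * f z) ^ p ≤ 1 := by
    simp_rw [ENNReal.mul_rpow_of_nonneg _ _ hp0.le]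
    rw [lintegral_const_mul _ (hf.pow_const p), ENNReal.inv_rpow]
    have h : ∫⁻ z, f z ^ p ≤ c ^ p := by
      have h3 := ENNReal.rpow_le_rpow hc.le hp0.le
      rwa [hN, ← ENNReal.rpow_mul, one_div_mul_cancel hp0.ne', ENNReal.rpow_one] at h3
    calc _ ≤ (c ^ p)⁻¹ * c ^ p := by gcongr
      _ ≤ 1 := ENNReal.inv_mul_le_one _
  have hgm : Measurable (fun z => c⁻¹ * f z) := hf.const_mul _
  have hgs : ∀ z, z ∉ Metric.closedBall (0 : Euc d) R → c⁻¹ * f z = 0 := by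
    intro z hz
    rw [hsupp z hz, mul_zero]
  rw [hfg, kp_homog (M₀ d k) μ q r hq0 hr0 c hctop]
  gcongr
  exact (H2 _ hgm hgs (H1 _ hgm hgs hg1)).trans hA3

end
end
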